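/- Let G be a connected signed eulerian graph. Then the flow number Φ(G) equals 3 if and only if G is triply odd. -/

import Mathlib

open Finset

/-- A signed multigraph on vertex type `V` with edge type `E`: each edge `e`
consists of two half-edges indexed by `Bool`; `ends e i` is the end-vertex at
which the half-edge `(e, i)` is attached (loops and multiple edges are
allowed), and `sign e ∈ {1, -1}` is the sign of the edge `e`. -/
structure SignedGraph (V E : Type) where
  ends : E → Bool → V
  sign : E → ℤˣ

namespace SignedGraph

variable {V E : Type} [Fintype V] [Fintype E] [DecidableEq V] [DecidableEq E]

/-- The valency of `v` in the subgraph spanned by the edge set `S`: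
the number of half-edges of edges of `S` attached at `v` (a loop at `v`
contributes `2`). -/
def valencyOn (G : SignedGraph V E) (S : Finset E) (v : V) : ℕ :=
  (univ.filter fun p : E × Bool => p.1 ∈ S ∧ G.ends p.1 p.2 = v).card

/-- The valency of a vertex in `G`. -/
def valency (G : SignedGraph V E) (v : V) : ℕ :=
  G.valencyOn univ v

/-- The set of vertices incident with some edge of `S`. -/
def suppV (G : SignedGraph V E) (S : Finset E) : Finset V :=
  univ.filter fun v => ∃ e ∈ S, ∃ i : Bool, G.ends e i = v

/-- `u` and `v` are joined by an edge of `S`. -/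
def AdjOn (G : SignedGraph V E) (S : Finset E) (u v : V) : Prop :=
  ∃ e ∈ S, ∃ i : Bool, G.ends e i = u ∧ G.ends e (!i) = v

/-- The subgraph spanned by the edge set `S` is connected: any two vertices
incident with edges of `S` are joined by a walk using edges of `S`. -/
def ConnOn (G : SignedGraph V E) (S : Finset E) : Prop :=
  ∀ u ∈ G.suppV S, ∀ v ∈ G.suppV S, Relation.ReflTransGen (G.AdjOn S) u v

/-- `G` is connected (as a graph on the whole vertex set `V`). -/
def Connected (G : SignedGraph V E) : Prop :=
  Nonempty V ∧ ∀ u v : V, Relation.ReflTransGen (G.AdjOn univ) u v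

/-- The edge set `S` spans a circuit: a nonempty connected `2`-regular
subgraph. -/
def IsCircuit (G : SignedGraph V E) (S : Finset E) : Prop :=
  S.Nonempty ∧ G.ConnOn S ∧ ∀ v ∈ G.suppV S, G.valencyOn S v = 2

/-- The sign of a set of edges: the product of the signs of its edges. -/
def signOf (G : SignedGraph V E) (S : Finset E) : ℤˣ :=
  ∏ e ∈ S, G.sign e

/-- The negative edges among `S`. -/
def negEdges (G : SignedGraph V E) (S : Finset E) : Finset E :=
  S.filter fun e => G.sign e = -1

/-- A balanced circuit: a circuit of sign `+1`. -/
def IsBalancedCircuit (G : SignedGraph V E) (S : Finset E) : Prop :=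
  G.IsCircuit S ∧ G.signOf S = 1

/-- An unbalanced circuit: a circuit of sign `-1`. -/
def IsUnbalancedCircuit (G : SignedGraph V E) (S : Finset E) : Prop :=
  G.IsCircuit S ∧ G.signOf S = -1

/-- `G` is balanced: it contains no unbalanced circuit. -/
def Balanced (G : SignedGraph V E) : Prop :=
  ∀ S : Finset E, G.IsCircuit S → G.signOf S = 1

/-- `G` is tightly unbalanced: it is unbalanced, but for some edge `f` the
graph `G - f` is balanced. -/
def TightlyUnbalanced (G : SignedGraph V E) : Prop :=
  ¬ G.Balanced ∧ ∃ f : E, ∀ S : Finset E, G.IsCircuit S → f ∉ S → G.signOf S = 1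

/-- `G` is eulerian: connected with all valencies even. -/
def Eulerian (G : SignedGraph V E) : Prop :=
  G.Connected ∧ ∀ v : V, Even (G.valency v)

/-- The edge set `S` spans an eulerian subgraph of `G`. -/
def EulerianOn (G : SignedGraph V E) (S : Finset E) : Prop :=
  S.Nonempty ∧ G.ConnOn S ∧ ∀ v : V, Even (G.valencyOn S v)

/-- An orientation (bidirection) of `G`: `dir e i = true` means that the
half-edge `(e, i)` is directed towards its end-vertex, `dir e i = false` that
it is directed away from it.  Compatibility: a positive edge becomes an
ordinary directed edge (one half-edge in, one out) and a negative edge becomes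
a broken (extroverted or introverted) edge. -/
structure Orientation (G : SignedGraph V E) where
  dir : E → Bool → Bool
  compat : ∀ e : E, G.sign e = 1 ↔ dir e false ≠ dir e true

/-- `φ` is a flow on `G` with respect to the orientation `O`: at every vertex
`v`, the sum of values on half-edges directed into `v` equals the sum of
values on half-edges directed out of `v` (Kirchhoff's law). -/
def IsFlow {A : Type} [AddCommGroup A] (G : SignedGraph V E)
    (O : G.Orientation) (φ : E → A) : Prop :=
  ∀ v : V,
    ∑ p ∈ univ.filter (fun p : E × Bool => G.ends p.1 p.2 = v),
      (if O.dir p.1 p.2 then φ p.1 else -φ p.1) = 0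

/-- `G` admits a nowhere-zero `A`-flow. -/
def HasNZFlow (G : SignedGraph V E) (A : Type) [AddCommGroup A] : Prop :=
  ∃ (O : G.Orientation) (φ : E → A), G.IsFlow O φ ∧ ∀ e : E, φ e ≠ 0

/-- `G` is flow-admissible: it admits a nowhere-zero integer flow. -/
def FlowAdmissible (G : SignedGraph V E) : Prop :=
  ∃ (O : G.Orientation) (φ : E → ℤ), G.IsFlow O φ ∧ ∀ e : E, φ e ≠ 0

/-- `G` admits a nowhere-zero `k`-flow: an integer flow with all values in
`{±1, …, ±(k-1)}`. -/
def HasNZkFlow (G : SignedGraph V E) (k : ℕ) : Prop :=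
  ∃ (O : G.Orientation) (φ : E → ℤ), G.IsFlow O φ ∧
    ∀ e : E, φ e ≠ 0 ∧ |φ e| < (k : ℤ)

/-- `G` is triply odd: it can be decomposed into three edge-disjoint eulerian
subgraphs, each with an odd number of negative edges, sharing a common
vertex. -/
def TriplyOdd (G : SignedGraph V E) : Prop :=
  ∃ S₁ S₂ S₃ : Finset E,
    Disjoint S₁ S₂ ∧ Disjoint S₁ S₃ ∧ Disjoint S₂ S₃ ∧
    S₁ ∪ S₂ ∪ S₃ = univ ∧
    G.EulerianOn S₁ ∧ G.EulerianOn S₂ ∧ G.EulerianOn S₃ ∧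
    Odd (G.negEdges S₁).card ∧ Odd (G.negEdges S₂).card ∧
    Odd (G.negEdges S₃).card ∧
    ∃ v : V, v ∈ G.suppV S₁ ∧ v ∈ G.suppV S₂ ∧ v ∈ G.suppV S₃

/-- The edge set `P` spans a (nontrivial) path from `u` to `v`: a connected
subgraph in which `u` and `v` have valency `1` and all other vertices have
valency `2`. -/
def IsPathOn (G : SignedGraph V E) (P : Finset E) (u v : V) : Prop :=
  u ≠ v ∧ G.ConnOn P ∧ u ∈ G.suppV P ∧ v ∈ G.suppV P ∧
  G.valencyOn P u = 1 ∧ G.valencyOn P v = 1 ∧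
  ∀ w ∈ G.suppV P, w ≠ u → w ≠ v → G.valencyOn P w = 2

/-- `T` spans a signed circuit of type (2): the union of two unbalanced
circuits meeting at a single vertex. -/
def IsType2 (G : SignedGraph V E) (T : Finset E) : Prop :=
  ∃ (S₁ S₂ : Finset E) (v : V),
    G.IsUnbalancedCircuit S₁ ∧ G.IsUnbalancedCircuit S₂ ∧ Disjoint S₁ S₂ ∧
    G.suppV S₁ ∩ G.suppV S₂ = {v} ∧ S₁ ∪ S₂ = T

/-- `T` spans a signed circuit of type (3): the union of two vertex-disjoint
unbalanced circuits together with a path meeting the circuits only at its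
ends. -/
def IsType3 (G : SignedGraph V E) (T : Finset E) : Prop :=
  ∃ (S₁ S₂ P : Finset E) (u v : V),
    G.IsUnbalancedCircuit S₁ ∧ G.IsUnbalancedCircuit S₂ ∧
    Disjoint (G.suppV S₁) (G.suppV S₂) ∧
    G.IsPathOn P u v ∧ u ∈ G.suppV S₁ ∧ v ∈ G.suppV S₂ ∧
    G.suppV P ∩ G.suppV S₁ = {u} ∧ G.suppV P ∩ G.suppV S₂ = {v} ∧
    Disjoint P (S₁ ∪ S₂) ∧ S₁ ∪ S₂ ∪ P = T

/-- `T` spans a signed circuit: a balanced circuit, or a signed circuit of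
type (2) or (3). -/
def IsSignedCircuit (G : SignedGraph V E) (T : Finset E) : Prop :=
  G.IsBalancedCircuit T ∨ G.IsType2 T ∨ G.IsType3 T

/-- `T` spans a weak unbalanced bicircuit: two edge-disjoint unbalanced
circuits (not necessarily vertex-disjoint) joined by a possibly trivial path
having no edge in the two circuits. -/
def IsWeakBicircuit (G : SignedGraph V E) (T : Finset E) : Prop :=
  ∃ C₁ C₂ : Finset E,
    G.IsUnbalancedCircuit C₁ ∧ G.IsUnbalancedCircuit C₂ ∧ Disjoint C₁ C₂ ∧
    (((∃ v : V, v ∈ G.suppV C₁ ∧ v ∈ G.suppV C₂) ∧ T = C₁ ∪ C₂) ∨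
      ∃ (P : Finset E) (u v : V),
        G.IsPathOn P u v ∧ u ∈ G.suppV C₁ ∧ v ∈ G.suppV C₂ ∧
        Disjoint P (C₁ ∪ C₂) ∧ T = C₁ ∪ C₂ ∪ P)

/-- Every connected component of `G - f` contains an unbalanced circuit,
i.e. `G - f` has no balanced component. -/
def NoBalancedComponentAvoiding (G : SignedGraph V E) (f : E) : Prop :=
  ∀ u : V, ∃ S : Finset E,
    G.IsCircuit S ∧ G.signOf S = -1 ∧ f ∉ S ∧
    ∀ w ∈ G.suppV S, Relation.ReflTransGen (G.AdjOn (univ.erase f)) w u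

/-- `G` is 2-edge-connected: connected, and still connected after removing
any single edge. -/
def TwoEdgeConnected (G : SignedGraph V E) : Prop :=
  G.Connected ∧ ∀ f : E, ∀ u v : V,
    Relation.ReflTransGen (G.AdjOn (univ.erase f)) u v

/-- `G` is antibalanced: replacing its signature `σ` by `-σ` makes it
balanced. -/
def Antibalanced (G : SignedGraph V E) : Prop :=
  ∀ S : Finset E, G.IsCircuit S → (∏ e ∈ S, (-G.sign e)) = 1

end SignedGraph

open Finset

namespace SGF

variable {D V : Type} [DecidableEq D] [DecidableEq V]

/-- `σ` is a fixed-point-free involution on the finite set of darts `K`. -/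
def Inv (K : Finset D) (σ : D → D) : Prop :=
  ∀ p ∈ K, σ p ∈ K ∧ σ (σ p) = p ∧ σ p ≠ p

/-- `C` is a union of connected components of the dart graph. -/
def Closed (K : Finset D) (σ : D → D) (π : D → V) (C : Finset D) : Prop :=
  C ⊆ K ∧ (∀ p ∈ C, σ p ∈ C) ∧ ∀ p ∈ C, ∀ q ∈ K, π q = π p → q ∈ C

def Conn (K : Finset D) (σ : D → D) (π : D → V) : Prop :=
  ∀ C, Closed K σ π C → C = ∅ ∨ C = K

def net (K : Finset D) (π : D → V) (f : D → ℤ) (w : V) : ℤ :=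
  ∑ p ∈ K with π p = w, f p

def PM (K : Finset D) (a : D → ℤ) : Prop := ∀ p ∈ K, a p = 1 ∨ a p = -1

def SInv (K : Finset D) (σ : D → D) (τ : D → ℤ) : Prop := ∀ p ∈ K, τ (σ p) = τ p

def EvenDeg (K : Finset D) (π : D → V) : Prop := ∀ w, Even (#{p ∈ K | π p = w})

def swp (σ : D → D) (r s : D) : D → D := fun x => if x = r then s else if x = s then r else σ x

theorem even_card_inv {K : Finset D} {σ : D → D} (h : Inv K σ) : Even K.card := by
  have : ∑ p ∈ K, (1 : ZMod 2) = 0 :=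
    Finset.sum_involution (fun p _ => σ p) (fun _ _ => by decide)
      (fun a ha _ => (h a ha).2.2) (fun a ha => (h a ha).1) (fun a ha => (h a ha).2.1)
  rw [Finset.sum_const, nsmul_eq_mul, mul_one] at this
  exact (ZMod.natCast_eq_zero_iff_even).1 this

theorem sum_pm_mod {K : Finset D} {a : D → ℤ} (h : PM K a) :
    (2 : ℤ) ∣ ∑ p ∈ K, a p - K.card := by
  have : ∑ p ∈ K, a p - K.card = ∑ p ∈ K, (a p - 1) := by simp
  rw [this]
  apply Finset.dvd_sum
  intro p hp
  rcases h p hp with h | h <;> rw [h] <;> decide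

theorem sum_pm_even {K : Finset D} {σ : D → D} {a : D → ℤ} (hK : Inv K σ) (h : PM K a) :
    (2 : ℤ) ∣ ∑ p ∈ K, a p := by
  have h1 := sum_pm_mod h
  obtain ⟨k, hk⟩ := even_card_inv hK
  omega

theorem sum_tau {K : Finset D} {σ : D → D} {a τ : D → ℤ} (hK : Inv K σ) (ha : PM K a)
    (ht : PM K τ) (hs : SInv K σ τ) :
    (4 : ℤ) ∣ ∑ p ∈ K, τ p * a p - ∑ p ∈ K, a p := by
  rw [← Finset.sum_sub_distrib]
  have h1 : ∑ p ∈ K, (τ p * a p - a p) = ∑ p ∈ K with τ p = -1, (-2) * a p := by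
    rw [Finset.sum_filter]
    apply Finset.sum_congr rfl
    intro p hp
    rcases ht p hp with h | h <;> rw [h] <;> simp; ring
  rw [h1, ← Finset.mul_sum]
  have h2 : (2 : ℤ) ∣ ∑ p ∈ K with τ p = -1, a p := by
    apply sum_pm_even (σ := σ)
    · intro p hp
      simp only [Finset.mem_filter] at hp ⊢
      exact ⟨⟨(hK p hp.1).1, by rw [hs p hp.1, hp.2]⟩, (hK p hp.1).2⟩
    · intro p hp
      exact ha p (Finset.mem_filter.1 hp).1
  omega

theorem sum_net (K : Finset D) (π : D → V) (f : D → ℤ) :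
    ∑ w ∈ K.image π, net K π f w = ∑ p ∈ K, f p :=
  Finset.sum_fiberwise_of_maps_to (fun _ hp => Finset.mem_image_of_mem _ hp) f

theorem sum_eq_net (K : Finset D) (π : D → V) (f : D → ℤ) (w : V)
    (h : ∀ w', w' ≠ w → net K π f w' = 0) : ∑ p ∈ K, f p = net K π f w := by
  rw [← sum_net K π f]
  by_cases hw : w ∈ K.image π
  · rw [Finset.sum_eq_single w (fun b _ hb => h b hb) (fun h => absurd hw h)]
  · rw [Finset.sum_eq_zero]
    · symm
      apply Finset.sum_eq_zero
      intro p hp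
      simp only [Finset.mem_filter] at hp
      exact absurd (Finset.mem_image.2 ⟨p, hp.1, hp.2⟩) hw
    · intro b hb
      exact h b (by rintro rfl; exact hw hb)

theorem net_empty (π : D → V) (f : D → ℤ) (w : V) : net ∅ π f w = 0 := by
  simp [net]

theorem net_union {K L : Finset D} (h : Disjoint K L) (π : D → V) (f : D → ℤ) (w : V) :
    net (K ∪ L) π f w = net K π f w + net L π f w := by
  unfold net
  rw [Finset.filter_union, Finset.sum_union]
  exact Finset.disjoint_filter_filter h

theorem net_congr {K : Finset D} {π : D → V} {f g : D → ℤ} (h : ∀ p ∈ K, f p = g p) (w : V) :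
    net K π f w = net K π g w := by
  apply Finset.sum_congr rfl
  intro p hp
  exact h p (Finset.mem_filter.1 hp).1

theorem net_zero {K : Finset D} {π : D → V} {f : D → ℤ} {w : V} (h : ∀ p ∈ K, π p ≠ w) :
    net K π f w = 0 := by
  apply Finset.sum_eq_zero
  intro p hp
  exact absurd (Finset.mem_filter.1 hp).2 (h p (Finset.mem_filter.1 hp).1)

theorem net_neg {K : Finset D} {π : D → V} {f : D → ℤ} {w : V} :
    net K π (fun p => - f p) w = - net K π f w := by
  simp [net]

theorem net_pair {p q : D} (h : p ≠ q) (π : D → V) (f : D → ℤ) (w : V) (hp : π p = w)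
    (hq : π q = w) (w' : V) : net {p, q} π f w' = if w' = w then f p + f q else 0 := by
  split_ifs with h1
  · subst h1
    unfold net
    rw [Finset.filter_true_of_mem, Finset.sum_pair h]
    simp [hp, hq]
  · apply net_zero
    intro x hx
    simp only [Finset.mem_insert, Finset.mem_singleton] at hx
    rcases hx with rfl | rfl
    · rw [hp]; exact fun h => h1 h.symm
    · rw [hq]; exact fun h => h1 h.symm

theorem Closed.filter_eq {K C : Finset D} {σ : D → D} {π : D → V} (h : Closed K σ π C) (w : V) :
    ({p ∈ C | π p = w} = ({p ∈ K | π p = w} : Finset D)) ∨ (∀ p ∈ C, π p ≠ w) := by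
  by_cases hw : ∃ p ∈ C, π p = w
  · left
    obtain ⟨p, hp, rfl⟩ := hw
    ext q
    simp only [Finset.mem_filter]
    exact ⟨fun hq => ⟨h.1 hq.1, hq.2⟩, fun hq => ⟨h.2.2 p hp q hq.1 hq.2, hq.2⟩⟩
  · right
    push Not at hw
    exact hw

theorem Closed.net {K C : Finset D} {σ : D → D} {π : D → V} (h : Closed K σ π C) (f : D → ℤ)
    (w : V) : SGF.net C π f w = SGF.net K π f w ∨ (∀ p ∈ C, π p ≠ w) := by
  rcases h.filter_eq w with h | h
  · left; unfold SGF.net; rw [h]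
  · right; exact h

theorem Closed.net_zero {K C : Finset D} {σ : D → D} {π : D → V} (h : Closed K σ π C) {f : D → ℤ}
    {w : V} (h0 : SGF.net K π f w = 0) : SGF.net C π f w = 0 := by
  rcases h.net f w with h | h
  · rw [h, h0]
  · exact SGF.net_zero h

theorem Closed.evenDeg {K C : Finset D} {σ : D → D} {π : D → V} (h : Closed K σ π C)
    (h0 : EvenDeg K π) : EvenDeg C π := by
  intro w
  rcases h.filter_eq w with h | h
  · rw [h]; exact h0 w
  · rw [Finset.filter_false_of_mem h]; simp

theorem Closed.inv {K C : Finset D} {σ : D → D} {π : D → V} (h : Closed K σ π C)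
    (h0 : Inv K σ) : Inv C σ := by
  intro p hp
  exact ⟨h.2.1 p hp, (h0 p (h.1 hp)).2⟩

theorem Closed.compl {K C : Finset D} {σ : D → D} {π : D → V} (h : Closed K σ π C)
    (h0 : Inv K σ) : Closed K σ π (K \ C) := by
  refine ⟨Finset.sdiff_subset, ?_, ?_⟩
  · intro p hp
    simp only [Finset.mem_sdiff] at hp ⊢
    refine ⟨(h0 p hp.1).1, fun hc => hp.2 ?_⟩
    have := h.2.1 _ hc
    rwa [(h0 p hp.1).2.1] at this
  · intro p hp q hq hpq
    simp only [Finset.mem_sdiff] at hp ⊢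
    exact ⟨hq, fun hc => hp.2 (h.2.2 q hc p hp.1 hpq.symm)⟩

theorem Closed.trans {K C B : Finset D} {σ : D → D} {π : D → V} (h : Closed K σ π C)
    (h' : Closed C σ π B) : Closed K σ π B := by
  refine ⟨h'.1.trans h.1, h'.2.1, ?_⟩
  intro p hp q hq hpq
  exact h'.2.2 p hp q (h.2.2 p (h'.1 hp) q hq hpq) hpq

theorem sum_pair_split {K : Finset D} {p q : D} (hp : p ∈ K) (hq : q ∈ K) (h : p ≠ q)
    (f : D → ℤ) : ∑ x ∈ K, f x = ∑ x ∈ K \ {p, q}, f x + (f p + f q) := by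
  rw [← Finset.sum_pair (f := f) h]
  exact (Finset.sum_sdiff (by intro x; simp; rintro (rfl | rfl) <;> assumption)).symm

theorem net_pair_split {K : Finset D} {p q : D} (hp : p ∈ K) (hq : q ∈ K) (h : p ≠ q)
    (π : D → V) (f : D → ℤ) (w : V) (hpw : π p = w) (hqw : π q = w) (w' : V) :
    net K π f w' = net (K \ {p, q}) π f w' + if w' = w then f p + f q else 0 := by
  rw [← net_pair h π f w hpw hqw w', ← net_union Finset.sdiff_disjoint]
  rw [Finset.sdiff_union_of_subset]
  intro x; simp; rintro (rfl | rfl) <;> assumption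

theorem evenDeg_sdiff {K : Finset D} {p q : D} (hp : p ∈ K) (hq : q ∈ K) (h : p ≠ q)
    {π : D → V} (hpq : π p = π q) (hK : EvenDeg K π) : EvenDeg (K \ {p, q}) π := by
  intro w
  have h1 := hK w
  have h2 := net_pair_split hp hq h π (fun _ => 1) (π p) rfl hpq.symm w
  simp only [net, Finset.sum_const, nsmul_eq_mul, mul_one] at h2
  split_ifs at h2
  · rw [Nat.even_iff] at h1 ⊢; omega
  · rw [Nat.even_iff] at h1 ⊢; omega

/-- The data of a split at a vertex. -/
theorem split_facts {K : Finset D} {σ : D → D} (hK : Inv K σ) {p q : D} (hp : p ∈ K) (hq : q ∈ K)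
    (hpq : p ≠ q) (hs : σ p ≠ q) :
    σ p ∈ K \ {p, q} ∧ σ q ∈ K \ {p, q} ∧ σ p ≠ σ q ∧ Inv (K \ {p, q}) (swp σ (σ p) (σ q)) ∧
      ∀ x ∈ K \ {p, q}, x ≠ σ p → x ≠ σ q → σ x ∈ K \ {p, q} ∧ swp σ (σ p) (σ q) x = σ x := by
  obtain ⟨hp1, hp2, hp3⟩ := hK p hp
  obtain ⟨hq1, hq2, hq3⟩ := hK q hq
  have hsq : σ q ≠ p := by
    intro h; apply hs; rw [← h, hq2]
  have hne : σ p ≠ σ q := by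
    intro h; apply hpq; rw [← hp2, h, hq2]
  have hrK : σ p ∈ K \ {p, q} := by simp [hp1, hp3, hs]
  have hsK : σ q ∈ K \ {p, q} := by simp [hq1, hq3, hsq]
  have hoth : ∀ x ∈ K \ {p, q}, x ≠ σ p → x ≠ σ q → σ x ∈ K \ {p, q} ∧
      swp σ (σ p) (σ q) x = σ x := by
    intro x hx h1 h2
    simp only [Finset.mem_sdiff, Finset.mem_insert, Finset.mem_singleton, not_or] at hx ⊢
    obtain ⟨hx1, hx2, hx3⟩ := hK x hx.1
    refine ⟨⟨hx1, ?_, ?_⟩, ?_⟩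
    · intro h; exact h1 (by rw [← h, hx2])
    · intro h; exact h2 (by rw [← h, hx2])
    · simp [swp, h1, h2]
  refine ⟨hrK, hsK, hne, ?_, hoth⟩
  intro x hx
  by_cases h1 : x = σ p
  · subst h1
    simp only [swp, if_true]
    exact ⟨hsK, by simp [hne.symm], hne.symm⟩
  by_cases h2 : x = σ q
  · subst h2
    simp only [swp, if_true, hne.symm, if_false]
    exact ⟨hrK, by simp, hne⟩
  obtain ⟨h3, h4⟩ := hoth x hx h1 h2
  rw [h4]
  refine ⟨h3, ?_, ?_⟩
  · simp only [Finset.mem_sdiff] at hx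
    obtain ⟨hx1, hx2, hx3⟩ := hK x hx.1
    have h5 : σ x ≠ σ p := by
      intro h; rw [h, hp2] at hx2; simp [← hx2] at hx
    have h6 : σ x ≠ σ q := by
      intro h; rw [h, hq2] at hx2; simp [← hx2] at hx
    simp [swp, h5, h6, hx2]
  · exact (hK x (Finset.mem_sdiff.1 hx).1).2.2

theorem split_key {K : Finset D} {σ : D → D} {π : D → V} (hK : Inv K σ) (hc : Conn K σ π)
    {p q : D} (hp : p ∈ K) (hq : q ∈ K) (hpq : p ≠ q) (hs : σ p ≠ q) (hπ : π p = π q)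
    (C : Finset D) (hC : Closed (K \ {p, q}) (swp σ (σ p) (σ q)) π C) (hr : σ p ∉ C)
    (hw : ∀ x ∈ C, π x ≠ π p) : C = ∅ := by
  obtain ⟨h1, h2, h3, h4, h5⟩ := split_facts hK hp hq hpq hs
  have hs' : σ q ∉ C := by
    intro h
    have := hC.2.1 _ h
    simp only [swp, h3.symm, if_false, if_true] at this
    exact hr this
  have : Closed K σ π C := by
    refine ⟨hC.1.trans Finset.sdiff_subset, ?_, ?_⟩
    · intro x hx
      have := hC.2.1 x hx
      rwa [(h5 x (hC.1 hx) (fun h => hr (h ▸ hx)) (fun h => hs' (h ▸ hx))).2] at this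
    · intro x hx y hy hxy
      apply hC.2.2 x hx y _ hxy
      simp only [Finset.mem_sdiff, Finset.mem_insert, Finset.mem_singleton, hy, true_and]
      rintro (rfl | rfl)
      · exact hw x hx hxy.symm
      · exact hw x hx (by rw [← hxy, hπ])
  rcases hc C this with h | h
  · exact h
  · exfalso
    have : p ∈ C := h ▸ hp
    have := hC.1 this
    simp at this

theorem split_lemma {K : Finset D} {σ : D → D} {π : D → V} (hK : Inv K σ) (hc : Conn K σ π)
    {p q : D} (hp : p ∈ K) (hq : q ∈ K) (hpq : p ≠ q) (hs : σ p ≠ q) (hπ : π p = π q) :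
    (Conn (K \ {p, q}) (swp σ (σ p) (σ q)) π ∧ ∃ x ∈ K \ {p, q}, π x = π p) ∨
    ∃ K₁, Closed (K \ {p, q}) (swp σ (σ p) (σ q)) π K₁ ∧ σ p ∈ K₁ ∧ σ q ∈ K₁ ∧
      (∀ x ∈ K₁, π x ≠ π p) ∧ Conn K₁ (swp σ (σ p) (σ q)) π ∧
      Conn ((K \ {p, q}) \ K₁) (swp σ (σ p) (σ q)) π := by
  obtain ⟨h1, h2, h3, h4, h5⟩ := split_facts hK hp hq hpq hs
  set K' := K \ {p, q} with hK'
  set σ' := swp σ (σ p) (σ q) with hσ'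
  have main : ∀ K₁, Closed K' σ' π K₁ → σ p ∈ K₁ → (∀ x ∈ K₁, π x ≠ π p) →
      σ q ∈ K₁ ∧ Conn K₁ σ' π ∧ Conn (K' \ K₁) σ' π := by
    intro K₁ hK₁ hr hw
    refine ⟨?_, ?_, ?_⟩
    · have := hK₁.2.1 _ hr
      simpa [hσ', swp] using this
    · intro C hC
      by_cases hrC : σ p ∈ C
      · right
        have h6 : Closed K' σ' π (K₁ \ C) := hK₁.trans (hC.compl (hK₁.inv h4))
        have := split_key hK hc hp hq hpq hs hπ (K₁ \ C) h6 (by simp [hrC])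
          (fun x hx => hw x (Finset.mem_sdiff.1 hx).1)
        exact Finset.Subset.antisymm hC.1 (Finset.sdiff_eq_empty_iff_subset.1 this)
      · left
        exact split_key hK hc hp hq hpq hs hπ C (hK₁.trans hC) hrC (fun x hx => hw x (hC.1 hx))
    · intro C hC
      have hcl := hK₁.compl h4
      by_cases hwC : ∃ x ∈ C, π x = π p
      · right
        obtain ⟨x, hx, hxw⟩ := hwC
        have h6 : Closed K' σ' π ((K' \ K₁) \ C) := hcl.trans (hC.compl (hcl.inv h4))
        have := split_key hK hc hp hq hpq hs hπ _ h6 (by simp [hr]) (by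
          intro y hy hyw
          simp only [Finset.mem_sdiff] at hy
          exact hy.2 (hC.2.2 x hx y (Finset.mem_sdiff.2 hy.1) (by rw [hyw, hxw])))
        exact Finset.Subset.antisymm hC.1 (Finset.sdiff_eq_empty_iff_subset.1 this)
      · left
        push Not at hwC
        exact split_key hK hc hp hq hpq hs hπ C (hcl.trans hC)
          (fun h => by have := hC.1 h; simp [hr] at this) hwC
  by_cases hc' : Conn K' σ' π
  · by_cases hw : ∃ x ∈ K', π x = π p
    · exact Or.inl ⟨hc', hw⟩
    · right
      push Not at hw
      have hcl : Closed K' σ' π K' := ⟨Finset.Subset.refl _, fun x hx => (h4 x hx).1,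
        fun _ _ y hy _ => hy⟩
      obtain ⟨a1, a2, a3⟩ := main K' hcl h1 hw
      exact ⟨K', hcl, h1, a1, hw, a2, a3⟩
  · right
    unfold Conn at hc'
    push Not at hc'
    obtain ⟨C, hC, hne, hne'⟩ := hc'
    have key : ∀ B, Closed K' σ' π B → B ≠ ∅ → B ≠ K' → σ p ∈ B → (∀ x ∈ B, π x ≠ π p) := by
      intro B hB hn hn' hr x hx hxw
      apply hn'
      have := split_key hK hc hp hq hpq hs hπ (K' \ B) (hB.compl h4) (by simp [hr]) (by
        intro y hy hyw
        simp only [Finset.mem_sdiff] at hy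
        exact hy.2 (hB.2.2 x hx y hy.1 (by rw [hyw, hxw])))
      exact Finset.Subset.antisymm hB.1 (Finset.sdiff_eq_empty_iff_subset.1 this)
    by_cases hr : σ p ∈ C
    · have hw := key C hC hne.ne_empty hne' hr
      obtain ⟨a1, a2, a3⟩ := main C hC hr hw
      exact ⟨C, hC, hr, a1, hw, a2, a3⟩
    · have hB := hC.compl h4
      have hrB : σ p ∈ K' \ C := Finset.mem_sdiff.2 ⟨h1, hr⟩
      have hw := key _ hB (Finset.nonempty_iff_ne_empty.1 ⟨_, hrB⟩) (by
        intro h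
        obtain ⟨x, hx⟩ := hne
        have h' := hC.1 hx
        rw [← h] at h'
        exact (Finset.mem_sdiff.1 h').2 hx) hrB
      obtain ⟨a1, a2, a3⟩ := main _ hB hrB hw
      exact ⟨_, hB, hrB, a1, hw, a2, a3⟩

end SGF

open Finset

namespace SGF

variable {D V : Type} [DecidableEq D] [DecidableEq V]

set_option linter.unusedSectionVars false

/-- flip the value at `s` by `ε` -/
def flp (ε : ℤ) (s : D) (a : D → ℤ) : D → ℤ := fun x => if x = s then ε * a x else a x

theorem flp_pm {K : Finset D} {ε : ℤ} (hε : ε = 1 ∨ ε = -1) {s : D} {a : D → ℤ} (h : PM K a) :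
    PM K (flp ε s a) := by
  intro x hx
  unfold flp
  split_ifs
  · rcases hε with rfl | rfl <;> rcases h x hx with h | h <;> simp [h]
  · exact h x hx

theorem PM.mono {K L : Finset D} {a : D → ℤ} (h : PM K a) (hL : L ⊆ K) : PM L a :=
  fun x hx => h x (hL hx)

theorem pm_mul {x y : ℤ} (hx : x = 1 ∨ x = -1) (hy : y = 1 ∨ y = -1) : x * y = 1 ∨ x * y = -1 := by
  rcases hx with rfl | rfl <;> rcases hy with rfl | rfl <;> simp

theorem pm_sq {x : ℤ} (hx : x = 1 ∨ x = -1) : x * x = 1 := by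
  rcases hx with rfl | rfl <;> simp

theorem split_ext {K : Finset D} {σ : D → D} {π : D → V} (hK : Inv K σ)
    {p q : D} (hp : p ∈ K) (hq : q ∈ K) (hpq : p ≠ q) (hs : σ p ≠ q) (hπ : π p = π q)
    {L : Finset D} (hLK : L ⊆ K \ {p, q}) (hL : ∀ x ∈ L, swp σ (σ p) (σ q) x ∈ L) (hr : σ p ∈ L)
    {ε : ℤ} (hε : ε = 1 ∨ ε = -1) {τ' : D → ℤ} (ht : PM L τ')
    (hst : SInv L (swp σ (σ p) (σ q)) τ') :
    ∃ τ : D → ℤ, PM (L ∪ {p, q}) τ ∧ SInv (L ∪ {p, q}) σ τ ∧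
      ∀ (a : D → ℤ) (w : V), net (L ∪ {p, q}) π (fun x => τ x * a x) w =
        net L π (fun x => τ' x * flp ε (σ q) a x) w +
          if w = π p then τ' (σ p) * (a p + ε * a q) else 0 := by
  obtain ⟨h1, h2, h3, h4, h5⟩ := split_facts hK hp hq hpq hs
  have hsL : σ q ∈ L := by simpa [swp] using hL _ hr
  have hpL : p ∉ L := fun h => by have := hLK h; simp at this
  have hqL : q ∉ L := fun h => by have := hLK h; simp at this
  have hrs : τ' (σ q) = τ' (σ p) := by simpa [swp] using hst _ hr
  have hsp : σ q ≠ p := fun h => hpL (h ▸ hsL)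
  have hsq : σ q ≠ q := fun h => hqL (h ▸ hsL)
  have hrp : σ p ≠ p := fun h => hpL (h ▸ hr)
  refine ⟨fun x => if x = p then τ' (σ p) else if x = q then ε * τ' (σ p) else
    if x = σ q then ε * τ' (σ p) else τ' x, ?_, ?_, ?_⟩
  · intro x hx
    simp only [mem_union, mem_insert, mem_singleton] at hx
    dsimp only
    split_ifs with a1 a2 a3
    · exact ht _ hr
    · exact pm_mul hε (ht _ hr)
    · exact pm_mul hε (ht _ hr)
    · exact ht x (by tauto)
  · intro x hx
    simp only [mem_union, mem_insert, mem_singleton] at hx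
    by_cases a1 : x = p
    · subst a1; simp [hrp, hs, h3]
    by_cases a2 : x = q
    · subst a2; simp [hsp, hsq, a1]
    have hxL : x ∈ L := by tauto
    by_cases a3 : x = σ p
    · subst a3; simp [(hK p hp).2.1, hrp, hs, h3]
    by_cases a4 : x = σ q
    · subst a4; simp [(hK q hq).2.1, hsp, hsq, hpq.symm]
    obtain ⟨a5, a6⟩ := h5 x (hLK hxL) a3 a4
    have a7 := hst x hxL
    have a8 := hL x hxL
    rw [a6] at a7 a8
    have b1 : σ x ≠ p := fun h => hpL (h ▸ a8)
    have b2 : σ x ≠ q := fun h => hqL (h ▸ a8)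
    have b3 : σ x ≠ σ q := by
      intro h
      apply a2
      rw [← (hK x (mem_sdiff.1 (hLK hxL)).1).2.1, h, (hK q hq).2.1]
    simp [a1, a2, a4, b1, b2, b3, a7]
  · intro a w
    rw [net_union]
    · congr 1
      · apply net_congr
        intro x hx
        have b1 : x ≠ p := fun h => hpL (h ▸ hx)
        have b2 : x ≠ q := fun h => hqL (h ▸ hx)
        simp only [b1, b2, if_false, flp]
        split_ifs with h
        · subst h; rw [hrs]; ring
        · rfl
      · rw [net_pair hpq π _ (π p) rfl hπ.symm]
        simp only [if_true, hpq.symm, if_false]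
        split_ifs <;> ring
    · rw [Finset.disjoint_left]
      intro x hx
      simp only [mem_insert, mem_singleton]
      rintro (rfl | rfl)
      · exact hpL hx
      · exact hqL hx

/-- gluing two sign functions on disjoint parts -/
theorem glue {A B : Finset D} {σ : D → D} {π : D → V} (hAB : Disjoint A B)
    (hA : ∀ x ∈ A, σ x ∈ A) (hB : ∀ x ∈ B, σ x ∈ B) {t1 t2 : D → ℤ} (h1 : PM A t1) (h2 : PM B t2)
    (s1 : SInv A σ t1) (s2 : SInv B σ t2) {ε₁ ε₂ : ℤ} (hε₁ : ε₁ = 1 ∨ ε₁ = -1)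
    (hε₂ : ε₂ = 1 ∨ ε₂ = -1) :
    ∃ τ : D → ℤ, PM (A ∪ B) τ ∧ SInv (A ∪ B) σ τ ∧
      ∀ (a : D → ℤ) (w : V), net (A ∪ B) π (fun x => τ x * a x) w =
        ε₁ * net A π (fun x => t1 x * a x) w + ε₂ * net B π (fun x => t2 x * a x) w := by
  have hd : ∀ x ∈ B, x ∉ A := fun x hx hx' => (Finset.disjoint_left.1 hAB) hx' hx
  refine ⟨fun x => if x ∈ A then ε₁ * t1 x else ε₂ * t2 x, ?_, ?_, ?_⟩
  · intro x hx
    rcases mem_union.1 hx with hx | hx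
    · simpa [hx] using pm_mul hε₁ (h1 x hx)
    · simpa [hd x hx] using pm_mul hε₂ (h2 x hx)
  · intro x hx
    rcases mem_union.1 hx with hx | hx
    · simp [hx, hA x hx, s1 x hx]
    · simp [hd x hx, hd _ (hB x hx), s2 x hx]
  · intro a w
    rw [net_union hAB]
    congr 1
    · unfold net
      rw [Finset.mul_sum]
      apply Finset.sum_congr rfl
      intro x hx
      simp [(mem_filter.1 hx).1]; ring
    · unfold net
      rw [Finset.mul_sum]
      apply Finset.sum_congr rfl
      intro x hx
      simp [hd _ (mem_filter.1 hx).1]; ring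

theorem glue02 {A B : Finset D} {σ : D → D} {π : D → V} (hAB : Disjoint A B)
    (hA : ∀ x ∈ A, σ x ∈ A) (hB : ∀ x ∈ B, σ x ∈ B) {t1 t2 : D → ℤ} (h1 : PM A t1) (h2 : PM B t2)
    (s1 : SInv A σ t1) (s2 : SInv B σ t2) (a : D → ℤ) (w : V)
    (z1 : ∀ w', w' ≠ w → net A π (fun x => t1 x * a x) w' = 0)
    (z2 : ∀ w', w' ≠ w → net B π (fun x => t2 x * a x) w' = 0)
    (e1 : net A π (fun x => t1 x * a x) w = 0 ∨ net A π (fun x => t1 x * a x) w = 2 ∨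
      net A π (fun x => t1 x * a x) w = -2)
    (e2 : net B π (fun x => t2 x * a x) w = 0 ∨ net B π (fun x => t2 x * a x) w = 2) :
    ∃ τ : D → ℤ, PM (A ∪ B) τ ∧ SInv (A ∪ B) σ τ ∧
      (∀ w', w' ≠ w → net (A ∪ B) π (fun x => τ x * a x) w' = 0) ∧
      (net (A ∪ B) π (fun x => τ x * a x) w = 0 ∨ net (A ∪ B) π (fun x => τ x * a x) w = 2) := by
  have key : ∃ ε₁ ε₂ : ℤ, (ε₁ = 1 ∨ ε₁ = -1) ∧ (ε₂ = 1 ∨ ε₂ = -1) ∧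
      (ε₁ * net A π (fun x => t1 x * a x) w + ε₂ * net B π (fun x => t2 x * a x) w = 0 ∨
       ε₁ * net A π (fun x => t1 x * a x) w + ε₂ * net B π (fun x => t2 x * a x) w = 2) := by
    rcases e2 with e2 | e2 <;> rcases e1 with e1 | e1 | e1 <;> rw [e1, e2]
    · exact ⟨1, 1, by simp⟩
    · exact ⟨1, 1, by simp⟩
    · exact ⟨-1, 1, by simp⟩
    · exact ⟨1, 1, by simp⟩
    · exact ⟨-1, 1, by simp⟩
    · exact ⟨1, 1, by simp⟩
  obtain ⟨ε₁, ε₂, h3, h4, h5⟩ := key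
  obtain ⟨τ, t3, t4, t5⟩ := glue (π := π) hAB hA hB h1 h2 s1 s2 h3 h4
  refine ⟨τ, t3, t4, ?_, ?_⟩
  · intro w' hw'
    rw [t5, z1 w' hw', z2 w' hw']; simp
  · rw [t5]; exact h5

theorem loop_del {K : Finset D} {σ : D → D} {π : D → V} (hK : Inv K σ) (hc : Conn K σ π)
    {p q : D} (hp : p ∈ K) (hq : q ∈ K) (hpq : p ≠ q) (hs : σ p = q) (hπ : π p = π q) :
    Inv (K \ {p, q}) σ ∧ Conn (K \ {p, q}) σ π ∧
      (K \ {p, q} = ∅ ∨ ∃ x ∈ K \ {p, q}, π x = π p) := by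
  have hsq : σ q = p := by rw [← hs]; exact (hK p hp).2.1
  have hcl : ∀ x ∈ K \ {p, q}, σ x ∈ K \ {p, q} := by
    intro x hx
    simp only [mem_sdiff, mem_insert, mem_singleton, not_or] at hx ⊢
    obtain ⟨a1, a2, a3⟩ := hK x hx.1
    refine ⟨a1, ?_, ?_⟩
    · intro h; rw [h, hs] at a2; exact hx.2.2 a2.symm
    · intro h; rw [h, hsq] at a2; exact hx.2.1 a2.symm
  have key : ∀ C, Closed (K \ {p, q}) σ π C → (∀ x ∈ C, π x ≠ π p) → C = ∅ := by
    intro C hC hw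
    have hcc : Closed K σ π C := by
      refine ⟨hC.1.trans sdiff_subset, hC.2.1, ?_⟩
      intro x hx y hy hxy
      apply hC.2.2 x hx y _ hxy
      simp only [mem_sdiff, mem_insert, mem_singleton, hy, true_and]
      rintro (rfl | rfl)
      · exact hw x hx hxy.symm
      · exact hw x hx (by rw [← hxy, hπ])
    rcases hc C hcc with h | h
    · exact h
    · exfalso
      have : p ∈ C := h ▸ hp
      exact hw p this rfl
  have hinv : Inv (K \ {p, q}) σ := fun x hx => ⟨hcl x hx, (hK x (mem_sdiff.1 hx).1).2⟩
  refine ⟨hinv, ?_, ?_⟩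
  · intro C hC
    by_cases hw : ∃ x ∈ C, π x = π p
    · right
      obtain ⟨x, hx, hxw⟩ := hw
      have := key _ (hC.compl hinv) (by
        intro y hy hyw
        simp only [mem_sdiff] at hy
        exact hy.2 (hC.2.2 x hx y (mem_sdiff.2 hy.1) (by rw [hyw, hxw])))
      exact Subset.antisymm hC.1 (sdiff_eq_empty_iff_subset.1 this)
    · left
      push Not at hw
      exact key C hC hw
  · by_cases hw : ∃ x ∈ K \ {p, q}, π x = π p
    · right; exact hw
    · left
      push Not at hw
      exact key _ ⟨Subset.refl _, hcl, fun _ _ y hy _ => hy⟩ hw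

set_option maxHeartbeats 1000000 in
theorem lemQ (n : ℕ) : ∀ (K : Finset D) (σ : D → D) (π : D → V) (a : D → ℤ) (w : V), K.card ≤ n →
    Inv K σ → Conn K σ π → PM K a → EvenDeg K π → (K = ∅ ∨ ∃ p ∈ K, π p = w) →
    ∃ τ : D → ℤ, PM K τ ∧ SInv K σ τ ∧
      (∀ w', w' ≠ w → net K π (fun x => τ x * a x) w' = 0) ∧
      (net K π (fun x => τ x * a x) w = 0 ∨ net K π (fun x => τ x * a x) w = 2) := by
  induction n with
  | zero =>
    intro K σ π a w hn _ _ _ _ _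
    have : K = ∅ := by simpa using hn
    subst this
    exact ⟨fun _ => 1, by simp [PM], by simp [SInv], by simp [net_empty], by simp [net_empty]⟩
  | succ n ih =>
    intro K σ π a w hn hK hc ha he hw
    rcases hw with rfl | ⟨p, hp, hpw⟩
    · exact ⟨fun _ => 1, by simp [PM], by simp [SInv], by simp [net_empty], by simp [net_empty]⟩
    obtain ⟨q, hq, hpq, hπ⟩ : ∃ q ∈ K, p ≠ q ∧ π p = π q := by
      by_contra hcon
      push Not at hcon
      have h1 : ({x ∈ K | π x = w} : Finset D) = {p} := by
        ext x
        simp only [mem_filter, mem_singleton]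
        constructor
        · rintro ⟨h1, h2⟩
          by_contra h3
          exact hcon x h1 (fun h => h3 h.symm) (by rw [h2, hpw])
        · rintro rfl; exact ⟨hp, hpw⟩
      have := he w
      rw [h1] at this
      simp at this
    have hsub : ({p, q} : Finset D) ⊆ K := by
      intro x; simp; rintro (rfl | rfl) <;> assumption
    have hcard : (K \ {p, q}).card ≤ n := by
      rw [card_sdiff_of_subset hsub, card_pair hpq]; omega
    have he' := evenDeg_sdiff hp hq hpq hπ he
    have ha' : PM (K \ {p, q}) a := ha.mono sdiff_subset
    by_cases hs : σ p = q
    · obtain ⟨h1, h2, h3⟩ := loop_del hK hc hp hq hpq hs hπ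
      obtain ⟨τ, t1, t2, t3, t4⟩ := ih (K \ {p, q}) σ π a w hcard h1 h2 ha' he' (by rwa [hpw] at h3)
      have hsq : σ q = p := by rw [← hs]; exact (hK p hp).2.1
      have hn : ∀ w', net {p, q} π (fun x => (1 : ℤ) * a x) w' =
          if w' = w then 1 * a p + 1 * a q else 0 := by
        intro w'
        rw [net_pair hpq π _ w hpw (by rw [← hπ, hpw])]
      have := glue02 (A := {p, q}) (B := K \ {p, q}) (σ := σ) (π := π) (t1 := fun _ => 1) (t2 := τ)
        disjoint_sdiff (by simp [hs, hsq]) (fun x hx => (h1 x hx).1) (by simp [PM]) t1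
        (by simp [SInv]) t2 a w (fun w' hw' => by rw [hn]; simp [hw']) t3
        (by
          rw [hn]
          rcases ha p hp with h | h <;> rcases ha q hq with h' | h' <;> simp [h, h']) t4
      rwa [union_sdiff_of_subset hsub] at this
    · rcases split_lemma hK hc hp hq hpq hs hπ with ⟨hc', hx⟩ | ⟨K₁, c1, c2, c3, c4, c5, c6⟩
      · obtain ⟨h1, h2, h3, h4, h5⟩ := split_facts hK hp hq hpq hs
        have hε : -(a p * a q) = 1 ∨ -(a p * a q) = -1 := by
          rcases pm_mul (ha p hp) (ha q hq) with h | h <;> simp [h]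
        obtain ⟨τ, t1, t2, t3, t4⟩ := ih (K \ {p, q}) _ π _ w hcard h4 hc'
          (flp_pm hε (s := σ q) ha') he' (by rw [hpw] at hx; exact Or.inr hx)
        obtain ⟨τ', u1, u2, u3⟩ := split_ext (π := π) hK hp hq hpq hs hπ (Subset.refl _)
          (fun x hx => (h4 x hx).1) h1 hε t1 t2
        rw [sdiff_union_of_subset hsub] at u1 u2 u3
        have hz : a p + -(a p * a q) * a q = 0 := by
          have := pm_sq (ha q hq)
          linear_combination (- a p) * this
        replace u3 := u3 a
        simp only [hz, mul_zero, ite_self, add_zero] at u3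
        refine ⟨τ', u1, u2, ?_, ?_⟩
        · intro w' hw'; rw [u3]; exact t3 w' hw'
        · rw [u3]; exact t4
      · obtain ⟨h1, h2, h3, h4, h5⟩ := split_facts hK hp hq hpq hs
        -- choose ε
        have hK₁ := c1.inv h4
        have hpm : PM K₁ a := ha'.mono c1.1
        obtain ⟨ε, hε, hε4⟩ : ∃ ε : ℤ, (ε = 1 ∨ ε = -1) ∧ (4 : ℤ) ∣ ∑ x ∈ K₁, flp ε (σ q) a x := by
          have e1 := sum_pm_even hK₁ hpm
          have e2 : ∀ ε : ℤ, ∑ x ∈ K₁, flp ε (σ q) a x = ∑ x ∈ K₁, a x + (ε - 1) * a (σ q) := by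
            intro ε
            rw [← Finset.add_sum_erase _ _ c3, ← Finset.add_sum_erase _ a c3]
            have : ∑ x ∈ K₁.erase (σ q), flp ε (σ q) a x = ∑ x ∈ K₁.erase (σ q), a x := by
              apply Finset.sum_congr rfl
              intro x hx
              simp [flp, (mem_erase.1 hx).1]
            rw [this]; simp [flp]; ring
          by_cases e3 : (4 : ℤ) ∣ ∑ x ∈ K₁, a x
          · exact ⟨1, by simp, by rw [e2]; simpa using e3⟩
          · refine ⟨-1, by simp, ?_⟩
            rw [e2]
            rcases hpm _ c3 with h | h <;> rw [h] <;> omega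
        have hpm' := flp_pm hε (s := σ q) hpm
        obtain ⟨τ₁, t1, t2, t3, t4⟩ := ih K₁ _ π _ (π (σ p)) ((card_le_card c1.1).trans hcard)
          hK₁ c5 hpm' (c1.evenDeg he') (Or.inr ⟨_, c2, rfl⟩)
        have hall : ∀ w', net K₁ π (fun x => τ₁ x * flp ε (σ q) a x) w' = 0 := by
          intro w'
          by_cases hw' : w' = π (σ p)
          · subst hw'
            have f1 := sum_eq_net K₁ π _ _ t3
            have f2 := sum_tau hK₁ hpm' t1 t2
            rcases t4 with t4 | t4
            · exact t4
            · rw [t4] at f1; omega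
          · exact t3 w' hw'
        obtain ⟨τ₁', u1, u2, u3⟩ := split_ext (π := π) hK hp hq hpq hs hπ c1.1 c1.2.1 c2 hε t1 t2
        have c7 := c1.compl h4
        obtain ⟨τ₂, v1, v2, v3, v4⟩ := ih ((K \ {p, q}) \ K₁) _ π a w
          ((card_le_card sdiff_subset).trans hcard)
          (c7.inv h4) c6 (ha'.mono sdiff_subset) (c7.evenDeg he') (by
            by_contra hcon
            push Not at hcon
            exact hcon.1.ne_empty (split_key hK hc hp hq hpq hs hπ _ c7 (by simp [c2])
              (by rw [hpw]; exact hcon.2)))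
        -- σ on K2 equals swp
        have hσ2 : ∀ x ∈ (K \ {p, q}) \ K₁, swp σ (σ p) (σ q) x = σ x := by
          intro x hx
          have hx' := mem_sdiff.1 hx
          exact (h5 x hx'.1 (fun h => hx'.2 (h ▸ c2)) (fun h => hx'.2 (h ▸ c3))).2
        have hK2 : ∀ x ∈ (K \ {p, q}) \ K₁, σ x ∈ (K \ {p, q}) \ K₁ := by
          intro x hx; rw [← hσ2 x hx]; exact c7.2.1 x hx
        have hun : (K₁ ∪ {p, q}) ∪ ((K \ {p, q}) \ K₁) = K := by
          ext x
          have i1 := @c1.1 x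
          have i2 := @hsub x
          rw [mem_sdiff] at i1
          simp only [mem_union, mem_sdiff]
          clear * - i1 i2
          tauto
        have hdis : Disjoint (K₁ ∪ {p, q}) ((K \ {p, q}) \ K₁) := by
          rw [Finset.disjoint_left]
          intro x
          simp only [mem_union, mem_sdiff]
          tauto
        have hA : ∀ x ∈ K₁ ∪ {p, q}, σ x ∈ K₁ ∪ {p, q} := by
          intro x hx
          by_contra hcon
          have hxK : x ∈ K := by
            rw [← hun]; exact mem_union_left _ hx
          have : σ x ∈ (K \ {p, q}) \ K₁ := by
            have i1 := (hK x hxK).1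
            simp only [mem_union, mem_sdiff] at hcon ⊢
            clear * - i1 hcon
            tauto
          have := hK2 _ this
          rw [(hK x hxK).2.1] at this
          exact (Finset.disjoint_left.1 hdis) hx this
        have := glue02 (π := π) hdis hA hK2 u1 v1 u2 (fun x hx => by rw [← hσ2 x hx]; exact v2 x hx) a w
          (fun w' hw' => by rw [u3, hall]; simp [hpw, hw']) v3 (by
            rw [u3, hall]
            simp only [hpw, if_true, zero_add]
            rcases t1 _ c2 with h | h <;> rcases hε with h' | h' <;>
            rcases ha p hp with h'' | h'' <;> rcases ha q hq with h''' | h''' <;>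
              simp [h, h', h'', h''']) v4
        rwa [hun] at this

/-- An even connected part can be signed with all nets zero. -/
theorem lemQ0 {K : Finset D} {σ : D → D} {π : D → V} {a : D → ℤ}
    (hK : Inv K σ) (hc : Conn K σ π) (ha : PM K a) (he : EvenDeg K π)
    (h4 : (4 : ℤ) ∣ ∑ x ∈ K, a x) :
    ∃ τ : D → ℤ, PM K τ ∧ SInv K σ τ ∧ ∀ w, net K π (fun x => τ x * a x) w = 0 := by
  rcases K.eq_empty_or_nonempty with rfl | ⟨p, hp⟩
  · exact ⟨fun _ => 1, by simp [PM], by simp [SInv], by simp [net_empty]⟩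
  obtain ⟨τ, t1, t2, t3, t4⟩ := lemQ K.card K σ π a (π p) le_rfl hK hc ha he (Or.inr ⟨p, hp, rfl⟩)
  refine ⟨τ, t1, t2, fun w => ?_⟩
  by_cases hw : w = π p
  · subst hw
    have f1 := sum_eq_net K π _ _ t3
    have f2 := sum_tau hK ha t1 t2
    rcases t4 with t4 | t4
    · exact t4
    · rw [t4] at f1; omega
  · exact t3 w hw

theorem lemQ2 {K : Finset D} {σ : D → D} {π : D → V} {a : D → ℤ} {w : V}
    (hK : Inv K σ) (hc : Conn K σ π) (ha : PM K a) (he : EvenDeg K π) (hw : ∃ p ∈ K, π p = w)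
    (h4 : ¬ (4 : ℤ) ∣ ∑ x ∈ K, a x) :
    ∃ τ : D → ℤ, PM K τ ∧ SInv K σ τ ∧ (∀ w', w' ≠ w → net K π (fun x => τ x * a x) w' = 0) ∧
      net K π (fun x => τ x * a x) w = 2 := by
  obtain ⟨τ, t1, t2, t3, t4⟩ := lemQ K.card K σ π a w le_rfl hK hc ha he (Or.inr hw)
  refine ⟨τ, t1, t2, t3, ?_⟩
  have f1 := sum_eq_net K π _ _ t3
  have f2 := sum_tau hK ha t1 t2
  rcases t4 with t4 | t4
  · rw [t4] at f1; omega
  · exact t4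

end SGF

open Finset

namespace SGF

variable {D V : Type} [DecidableEq D] [DecidableEq V]

set_option linter.unusedSectionVars false

/-- Hypotheses of the main theorem, without connectivity. -/
structure Hyp0 (K : Finset D) (σ : D → D) (π : D → V) (a φ : D → ℤ) : Prop where
  inv : Inv K σ
  pm : PM K a
  phi : ∀ p ∈ K, φ p = 1 ∨ φ p = 2
  phis : ∀ p ∈ K, φ (σ p) = φ p
  flow : ∀ w, net K π (fun x => φ x * a x) w = 0
  even : EvenDeg K π

def Concl (K : Finset D) (σ : D → D) (π : D → V) (a : D → ℤ) : Prop :=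
  ∃ (v : V) (τ : D → ℤ), PM K τ ∧ SInv K σ τ ∧
    ∀ w, net K π (fun x => τ x * a x) w = if w = v then 6 else 0

def IHyp (D V : Type) [DecidableEq D] [DecidableEq V] (n : ℕ) : Prop :=
  ∀ (K : Finset D) (σ : D → D) (π : D → V) (a φ : D → ℤ), K.card < n →
    Hyp0 K σ π a φ → Conn K σ π → (¬ (4 : ℤ) ∣ ∑ x ∈ K, a x) → Concl K σ π a

theorem Hyp0.closed {K C : Finset D} {σ : D → D} {π : D → V} {a φ : D → ℤ} (h : Hyp0 K σ π a φ)
    (hC : Closed K σ π C) : Hyp0 C σ π a φ where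
  inv := hC.inv h.inv
  pm := h.pm.mono hC.1
  phi := fun p hp => h.phi p (hC.1 hp)
  phis := fun p hp => h.phis p (hC.1 hp)
  flow := fun w => hC.net_zero (h.flow w)
  even := hC.evenDeg h.even

theorem net_one_mul {K : Finset D} {π : D → V} {f : D → ℤ} : ∀ w, net K π (fun x => 1 * f x) w = net K π f w := by
  intro w; simp

/-- Two closed connected parts. -/
theorem two_parts {n : ℕ} (ih : IHyp D V n) {K K₁ : Finset D} {σ : D → D} {π : D → V} {a φ : D → ℤ}
    (h : Hyp0 K σ π a φ) (hn : K.card < n) (hc : Closed K σ π K₁) (c1 : Conn K₁ σ π)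
    (c2 : Conn (K \ K₁) σ π) (hodd : ¬ (4 : ℤ) ∣ ∑ x ∈ K, a x) : Concl K σ π a := by
  have hc' := hc.compl h.inv
  have hsum : ∑ x ∈ K, a x = ∑ x ∈ K \ K₁, a x + ∑ x ∈ K₁, a x := (sum_sdiff hc.1).symm
  have e1 := sum_pm_even (hc.inv h.inv) (h.pm.mono hc.1)
  have e2 := sum_pm_even (hc'.inv h.inv) (h.pm.mono hc'.1)
  have hun : K₁ ∪ (K \ K₁) = K := union_sdiff_of_subset hc.1
  by_cases hd : (4 : ℤ) ∣ ∑ x ∈ K₁, a x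
  · obtain ⟨t, t1, t2, t3⟩ := lemQ0 (hc.inv h.inv) c1 (h.pm.mono hc.1) (hc.evenDeg h.even) hd
    obtain ⟨v, u, u1, u2, u3⟩ := ih _ σ π a φ ((card_le_card sdiff_subset).trans_lt hn) (h.closed hc') c2
      (by rw [hsum] at hodd; omega)
    obtain ⟨τ, s1, s2, s3⟩ := glue (π := π) disjoint_sdiff hc.2.1 hc'.2.1 t1 u1 t2 u2
      (ε₁ := 1) (ε₂ := 1) (by simp) (by simp)
    rw [hun] at s1 s2 s3
    exact ⟨v, τ, s1, s2, fun w => by rw [s3, t3, u3]; simp⟩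
  · obtain ⟨t, t1, t2, t3⟩ := lemQ0 (hc'.inv h.inv) c2 (h.pm.mono hc'.1) (hc'.evenDeg h.even)
      (by rw [hsum] at hodd; omega)
    obtain ⟨v, u, u1, u2, u3⟩ := ih _ σ π a φ ((card_le_card hc.1).trans_lt hn) (h.closed hc) c1 hd
    obtain ⟨τ, s1, s2, s3⟩ := glue (π := π) disjoint_sdiff hc.2.1 hc'.2.1 u1 t1 u2 t2
      (ε₁ := 1) (ε₂ := 1) (by simp) (by simp)
    rw [hun] at s1 s2 s3
    exact ⟨v, τ, s1, s2, fun w => by rw [s3, t3, u3]; simp⟩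

theorem flp_one (s : D) (a : D → ℤ) : flp 1 s a = a := by
  funext x; simp [flp]

theorem R3 {n : ℕ} {K : Finset D} {σ : D → D} {π : D → V} {a φ : D → ℤ}
    (h : Hyp0 K σ π a φ) (hn : K.card = n) (ih : IHyp D V n) (hc : Conn K σ π)
    (hodd : ¬ (4 : ℤ) ∣ ∑ x ∈ K, a x) {p q : D} (hp : p ∈ K) (hq : q ∈ K) (hpq : p ≠ q)
    (hπ : π p = π q) (hφ : φ p = φ q) (ha : a p = - a q) : Concl K σ π a := by
  have hsub : ({p, q} : Finset D) ⊆ K := by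
    intro x; simp; rintro (rfl | rfl) <;> assumption
  have hcard : (K \ {p, q}).card < n := by
    have := card_le_card hsub
    rw [card_sdiff_of_subset hsub]
    rw [card_pair hpq] at *; omega
  have he' := evenDeg_sdiff hp hq hpq hπ h.even
  have hpm := h.pm.mono (sdiff_subset : K \ {p, q} ⊆ K)
  have hodd' : ¬ (4 : ℤ) ∣ ∑ x ∈ K \ {p, q}, a x := by
    rw [sum_pair_split hp hq hpq, ha] at hodd
    simpa using hodd
  have hfl : ∀ w, net (K \ {p, q}) π (fun x => φ x * a x) w = 0 := by
    intro w
    have := h.flow w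
    rw [net_pair_split hp hq hpq π _ (π p) rfl hπ.symm, hφ, ha] at this
    simpa using this
  by_cases hs : σ p = q
  · have hsq : σ q = p := by rw [← hs]; exact (h.inv p hp).2.1
    obtain ⟨h1, h2, h3⟩ := loop_del h.inv hc hp hq hpq hs hπ
    obtain ⟨v, t, t1, t2, t3⟩ := ih (K \ {p, q}) σ π a φ hcard
      ⟨h1, hpm, fun x hx => h.phi x (mem_sdiff.1 hx).1, fun x hx => h.phis x (mem_sdiff.1 hx).1,
        hfl, he'⟩ h2 hodd'
    obtain ⟨τ, s1, s2, s3⟩ := glue (A := {p, q}) (π := π) (σ := σ) disjoint_sdiff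
      (by simp [hs, hsq]) (fun x hx => (h1 x hx).1) (t1 := fun _ => 1) (by simp [PM]) t1
      (by simp [SInv]) t2 (ε₁ := 1) (ε₂ := 1) (by simp) (by simp)
    rw [union_sdiff_of_subset hsub] at s1 s2 s3
    refine ⟨v, τ, s1, s2, fun w => ?_⟩
    rw [s3, t3, net_pair hpq π _ (π p) rfl hπ.symm, ha]; simp
  · obtain ⟨h1, h2, h3, h4, h5⟩ := split_facts h.inv hp hq hpq hs
    have hyp : Hyp0 (K \ {p, q}) (swp σ (σ p) (σ q)) π a φ := by
      refine ⟨h4, hpm, fun x hx => h.phi x (mem_sdiff.1 hx).1, ?_, hfl, he'⟩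
      intro x hx
      by_cases x1 : x = σ p
      · subst x1; simp [swp, h.phis p hp, h.phis q hq, hφ]
      by_cases x2 : x = σ q
      · subst x2; simp [swp, h3.symm, h.phis p hp, h.phis q hq, hφ]
      rw [(h5 x hx x1 x2).2]
      exact h.phis x (mem_sdiff.1 hx).1
    have hcon : Concl (K \ {p, q}) (swp σ (σ p) (σ q)) π a := by
      rcases split_lemma h.inv hc hp hq hpq hs hπ with ⟨hc', -⟩ | ⟨K₁, c1, c2, c3, c4, c5, c6⟩
      · exact ih _ _ π a φ hcard hyp hc' hodd'
      · exact two_parts ih hyp hcard c1 c5 c6 hodd'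
    obtain ⟨v, t, t1, t2, t3⟩ := hcon
    obtain ⟨τ, u1, u2, u3⟩ := split_ext (π := π) h.inv hp hq hpq hs hπ (Subset.refl _)
      (fun x hx => (h4 x hx).1) h1 (ε := 1) (by simp) t1 t2
    rw [sdiff_union_of_subset hsub] at u1 u2 u3
    refine ⟨v, τ, u1, u2, fun w => ?_⟩
    rw [u3, flp_one, t3, ha]; simp

end SGF

open Finset

namespace SGF

variable {D V : Type} [DecidableEq D] [DecidableEq V]

set_option linter.unusedSectionVars false

/-- Normalized situation. -/
structure Nrm (K : Finset D) (σ : D → D) (π : D → V) (h : D → ℤ) : Prop where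
  inv : Inv K σ
  pm : PM K h
  hs : SInv K σ h
  even : EvenDeg K π
  flow : ∀ w, 3 * net K π h w = (#{p ∈ K | π p = w} : ℤ)

def VC (K : Finset D) (π : D → V) (C : Finset D) : Prop :=
  C ⊆ K ∧ ∀ x ∈ C, ∀ y ∈ K, π y = π x → y ∈ C

theorem VC.filter_eq {K C : Finset D} {π : D → V} (h : VC K π C) (w : V) :
    ({p ∈ C | π p = w} = ({p ∈ K | π p = w} : Finset D)) ∨ (∀ p ∈ C, π p ≠ w) := by
  by_cases hw : ∃ p ∈ C, π p = w
  · left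
    obtain ⟨p, hp, rfl⟩ := hw
    ext q
    simp only [Finset.mem_filter]
    exact ⟨fun hq => ⟨h.1 hq.1, hq.2⟩, fun hq => ⟨h.2 p hp q hq.1 hq.2, hq.2⟩⟩
  · right
    push Not at hw
    exact hw

theorem VC.compl {K C : Finset D} {π : D → V} (h : VC K π C) : VC K π (K \ C) := by
  refine ⟨sdiff_subset, ?_⟩
  intro x hx y hy hxy
  simp only [mem_sdiff] at hx ⊢
  exact ⟨hy, fun hc => hx.2 (h.2 y hc x hx.1 hxy.symm)⟩

theorem VC.even {K C : Finset D} {π : D → V} (h : VC K π C) (he : EvenDeg K π) :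
    EvenDeg C π := by
  intro w
  rcases h.filter_eq w with h1 | h1
  · rw [h1]; exact he w
  · rw [Finset.filter_false_of_mem h1]; simp

theorem VC.flow {K C : Finset D} {σ : D → D} {π : D → V} {h : D → ℤ} (hC : VC K π C)
    (hN : Nrm K σ π h) (w : V) : 3 * net C π h w = (#{p ∈ C | π p = w} : ℤ) := by
  rcases hC.filter_eq w with h1 | h1
  · unfold net; rw [h1]; exact hN.flow w
  · rw [net_zero h1, Finset.filter_false_of_mem h1]; simp

theorem card_sum_net (C : Finset D) (π : D → V) :
    (C.card : ℤ) = ∑ w ∈ C.image π, (#{p ∈ C | π p = w} : ℤ) := by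
  have := sum_net C π (fun _ => 1)
  simp [net] at this
  exact this.symm

theorem VC.card_even {K C : Finset D} {π : D → V} (h : VC K π C) (he : EvenDeg K π) :
    Even C.card := by
  have h1 := card_sum_net C π
  have : (2 : ℤ) ∣ C.card := by
    rw [h1]
    apply Finset.dvd_sum
    intro w _
    have := (h.even he w).two_dvd
    exact_mod_cast this
  exact (even_iff_two_dvd.2 (by exact_mod_cast this))

theorem VC.sum {K C : Finset D} {σ : D → D} {π : D → V} {h : D → ℤ} (hC : VC K π C)
    (hN : Nrm K σ π h) : 3 * ∑ x ∈ C, h x = C.card := by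
  rw [card_sum_net C π, ← sum_net C π h, mul_sum]
  exact sum_congr rfl fun w _ => hC.flow hN w

theorem VC.sum_even {K C : Finset D} {σ : D → D} {π : D → V} {h : D → ℤ} (hC : VC K π C)
    (hN : Nrm K σ π h) : (2 : ℤ) ∣ ∑ x ∈ C, h x := by
  have h1 := hC.sum hN
  obtain ⟨k, hk⟩ := hC.card_even hN.even
  omega

theorem sum_sinv {K : Finset D} {σ : D → D} {h : D → ℤ} (hK : Inv K σ) (hp : PM K h)
    (hs : SInv K σ h) : (4 : ℤ) ∣ ∑ x ∈ K, h x - K.card := by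
  have := sum_tau (a := fun _ => 1) hK (by simp [PM]) hp hs
  simpa using this

theorem Nrm.hyp {K : Finset D} {σ : D → D} {π : D → V} {h : D → ℤ} (hN : Nrm K σ π h) :
    Hyp0 K σ π h (fun x => if h x = 1 then 1 else 2) where
  inv := hN.inv
  pm := hN.pm
  phi := by intro p _; split_ifs <;> simp
  phis := by intro p hp; simp only [hN.hs p hp]
  flow := by
    intro w
    have h1 := hN.flow w
    have h2 : 2 * net K π (fun x => (if h x = 1 then 1 else 2) * h x) w =
        3 * net K π h w - (#{p ∈ K | π p = w} : ℤ) := by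
      unfold net
      rw [card_eq_sum_ones]
      push_cast
      rw [mul_sum, mul_sum, ← sum_sub_distrib]
      apply sum_congr rfl
      intro x hx
      rcases hN.pm x (mem_filter.1 hx).1 with h | h <;> simp [h]
    omega
  even := hN.even

/-- switching -/
theorem net_switch {K : Finset D} {π : D → V} {a b t : D → ℤ} {c : V → ℤ}
    (h : ∀ p ∈ K, a p = c (π p) * b p) (w : V) :
    net K π (fun x => t x * a x) w = c w * net K π (fun x => t x * b x) w := by
  unfold net
  rw [mul_sum]
  apply sum_congr rfl
  intro x hx
  rw [mem_filter] at hx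
  show t x * a x = _
  rw [h x hx.1, hx.2]; ring

theorem Concl.switch {K : Finset D} {σ : D → D} {π : D → V} {a b : D → ℤ} {c : V → ℤ}
    (hc : ∀ w, c w = 1 ∨ c w = -1) (h : ∀ p ∈ K, a p = c (π p) * b p) (hb : Concl K σ π b) :
    Concl K σ π a := by
  obtain ⟨v, t, t1, t2, t3⟩ := hb
  refine ⟨v, fun x => c v * t x, fun x hx => pm_mul (hc v) (t1 x hx),
    fun x hx => by simp [t2 x hx], fun w => ?_⟩
  have : net K π (fun x => c v * t x * a x) w = c v * net K π (fun x => t x * a x) w := by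
    unfold net; rw [mul_sum]; exact sum_congr rfl fun x _ => by ring
  rw [this, net_switch h, t3]
  split_ifs with hw
  · subst hw
    rcases hc w with h | h <;> simp [h]
  · simp

theorem normalize {K : Finset D} {σ : D → D} {π : D → V} {a φ : D → ℤ} (h : Hyp0 K σ π a φ)
    (hodd : ¬ (4 : ℤ) ∣ ∑ x ∈ K, a x)
    (hno : ∀ p ∈ K, ∀ q ∈ K, π p = π q → φ p = φ q → a p = a q) :
    ∃ (b : D → ℤ) (c : V → ℤ), (∀ w, c w = 1 ∨ c w = -1) ∧ (∀ p ∈ K, a p = c (π p) * b p) ∧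
      Nrm K σ π b ∧ ¬ (4 : ℤ) ∣ ∑ x ∈ K, b x := by
  classical
  set b : D → ℤ := fun x => 3 - 2 * φ x with hb
  have hbpm : PM K b := by
    intro x hx; rcases h.phi x hx with h | h <;> simp [hb, h]
  have key : ∀ p ∈ K, ∀ q ∈ K, π p = π q → a p * b p = a q * b q := by
    intro p hp q hq hpq
    by_cases hφ : φ p = φ q
    · rw [hno p hp q hq hpq hφ]; simp [hb, hφ]
    · by_cases hab : a p = a q
      · exfalso
        have hall : ∀ x ∈ K, π x = π p → a x = a p := by
          intro x hx hxp
          by_cases h1 : φ x = φ p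
          · exact hno x hx p hp hxp h1
          · rw [hab]
            apply hno x hx q hq (hxp.trans hpq)
            rcases h.phi x hx with h2 | h2 <;> rcases h.phi p hp with h3 | h3 <;>
              rcases h.phi q hq with h4 | h4 <;> simp_all
        have h0 := h.flow (π p)
        have h1 : net K π (fun x => φ x * a x) (π p) = a p * ∑ x ∈ K with π x = π p, φ x := by
          unfold net
          rw [mul_sum]
          apply sum_congr rfl
          intro x hx
          rw [mem_filter] at hx
          show φ x * a x = _
          rw [hall x hx.1 hx.2]; ring
        have h2 : 0 < ∑ x ∈ K with π x = π p, φ x := by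
          apply sum_pos
          · intro x hx
            rcases h.phi x (mem_filter.1 hx).1 with h | h <;> rw [h] <;> norm_num
          · exact ⟨p, by simp [hp]⟩
        rw [h1] at h0
        rcases h.pm p hp with h3 | h3 <;> rw [h3] at h0 <;> omega
      · have : a p = - a q := by
          rcases h.pm p hp with h1 | h1 <;> rcases h.pm q hq with h2 | h2 <;> simp_all
        rcases h.phi p hp with h3 | h3 <;> rcases h.phi q hq with h4 | h4 <;>
          simp_all
  set c : V → ℤ := fun w => if hw : ∃ p ∈ K, π p = w then a hw.choose * b hw.choose else 1 with hc
  have hcp : ∀ p ∈ K, c (π p) = a p * b p := by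
    intro p hp
    have hw : ∃ q ∈ K, π q = π p := ⟨p, hp, rfl⟩
    simp only [hc, dif_pos hw]
    exact key _ hw.choose_spec.1 p hp hw.choose_spec.2
  have hcpm : ∀ w, c w = 1 ∨ c w = -1 := by
    intro w
    by_cases hw : ∃ p ∈ K, π p = w
    · obtain ⟨p, hp, rfl⟩ := hw
      rw [hcp p hp]; exact pm_mul (h.pm p hp) (hbpm p hp)
    · simp [hc, dif_neg hw]
  have hac : ∀ p ∈ K, a p = c (π p) * b p := by
    intro p hp; rw [hcp p hp, mul_assoc, pm_sq (hbpm p hp), mul_one]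
  have hnet : ∀ w, net K π a w = c w * net K π b w := by
    intro w
    have := net_switch (t := fun _ => 1) hac w
    simpa using this
  have hbev : ∀ w, (2 : ℤ) ∣ net K π b w := by
    intro w
    have h1 := sum_pm_mod (K := {p ∈ K | π p = w}) (hbpm.mono (filter_subset _ _))
    obtain ⟨k, hk⟩ := h.even w
    unfold net
    omega
  refine ⟨b, c, hcpm, hac, ⟨h.inv, hbpm, ?_, h.even, ?_⟩, ?_⟩
  · intro p hp; simp [hb, h.phis p hp]
  · intro w
    have h1 := net_switch (t := φ) hac w
    rw [h.flow w] at h1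
    have h2 : net K π (fun x => φ x * b x) w = 0 := by
      rcases hcpm w with h | h <;> rw [h] at h1 <;> omega
    have h3 : 2 * net K π (fun x => φ x * b x) w =
        3 * net K π b w - (#{p ∈ K | π p = w} : ℤ) := by
      unfold net
      rw [card_eq_sum_ones]
      push_cast
      rw [mul_sum, mul_sum, ← sum_sub_distrib]
      apply sum_congr rfl
      intro x hx
      rcases h.phi x (mem_filter.1 hx).1 with h | h <;> simp [hb, h]
    omega
  · intro h4
    apply hodd
    have : ∑ x ∈ K, a x = ∑ x ∈ K, b x + ∑ w ∈ K.image π, (c w - 1) * net K π b w := by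
      rw [← sum_net K π a, ← sum_net K π b, ← sum_add_distrib]
      apply sum_congr rfl
      intro w _
      rw [hnet]; ring
    rw [this]
    refine dvd_add h4 (dvd_sum fun w _ => ?_)
    rcases hcpm w with h | h <;> rw [h]
    · simp
    · have := hbev w
      omega

/-- R1: re-pairing a two-edge cut -/
def rep (σ : D → D) (p q : D) : D → D := fun x =>
  if x = p then q else if x = q then p else if x = σ p then σ q else if x = σ q then σ p else σ x

theorem R1conn {K C : Finset D} {σ σ' : D → D} {π : D → V} (hc : Conn K σ π) (hC : VC K π C)
    {p q : D} (hp : p ∈ C) (hq : q ∈ C) (h1 : σ' p = q) (h2 : σ' q = p)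
    (h3 : ∀ x ∈ C, x ≠ p → x ≠ q → σ' x = σ x) (hi : Inv C σ') : Conn C σ' π := by
  have key : ∀ B, Closed C σ' π B → p ∉ B → B = ∅ := by
    intro B hB hpB
    have hqB : q ∉ B := fun h => hpB (by have := hB.2.1 _ h; rwa [h2] at this)
    have hcl : Closed K σ π B := by
      refine ⟨hB.1.trans hC.1, ?_, ?_⟩
      · intro x hx
        have := hB.2.1 x hx
        rwa [h3 x (hB.1 hx) (fun h => hpB (h ▸ hx)) (fun h => hqB (h ▸ hx))] at this
      · intro x hx y hy hxy
        exact hB.2.2 x hx y (hC.2 x (hB.1 hx) y hy hxy) hxy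
    rcases hc B hcl with h | h
    · exact h
    · exact absurd (h ▸ hC.1 hp) hpB
  intro B hB
  by_cases hpB : p ∈ B
  · right
    have := key _ (hB.compl hi) (by simp [hpB])
    exact Subset.antisymm hB.1 (sdiff_eq_empty_iff_subset.1 this)
  · left; exact key B hB hpB

theorem R1aux {n : ℕ} {K C : Finset D} {σ : D → D} {π : D → V} {h : D → ℤ}
    (hN : Nrm K σ π h) (hn : K.card = n) (ih : IHyp D V n) (hc : Conn K σ π) (hC : VC K π C)
    (hodd : ¬ (4 : ℤ) ∣ ∑ x ∈ C, h x) (heven : (4 : ℤ) ∣ ∑ x ∈ K \ C, h x)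
    {p q : D} (hp : p ∈ C) (hq : q ∈ C) (hpq : p ≠ q) (hr : σ p ∉ C) (hs : σ q ∉ C)
    (hpqh : h p = h q)
    (ho : ∀ x ∈ C, x ≠ p → x ≠ q → σ x ∈ C) : Concl K σ π h := by
  set r := σ p with hrd
  set s := σ q with hsd
  have hrK : r ∈ K := (hN.inv p (hC.1 hp)).1
  have hsK : s ∈ K := (hN.inv q (hC.1 hq)).1
  have hσr : σ r = p := (hN.inv p (hC.1 hp)).2.1
  have hσs : σ s = q := (hN.inv q (hC.1 hq)).2.1
  have hrs : r ≠ s := fun h => hpq (by rw [← hσr, h, hσs])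
  have hrp : r ≠ p := fun h => hr (h ▸ hp)
  have hrq : r ≠ q := fun h => hr (h ▸ hq)
  have hsp : s ≠ p := fun h => hs (h ▸ hp)
  have hsq : s ≠ q := fun h => hs (h ▸ hq)
  set σ' := rep σ p q with hσ'
  have e1 : σ' p = q := by simp [hσ', rep]
  have e2 : σ' q = p := by simp [hσ', rep, hpq.symm]
  have e3 : σ' r = s := by simp [hσ', rep, hrp, hrq, ← hrd, ← hsd]
  have e4 : σ' s = r := by simp [hσ', rep, hsp, hsq, ← hrd, ← hsd, hrs.symm]
  have e5 : ∀ x, x ≠ p → x ≠ q → x ≠ r → x ≠ s → σ' x = σ x := by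
    intro x h1 h2 h3 h4; simp [hσ', rep, h1, h2, ← hrd, ← hsd, h3, h4]
  have oC : ∀ x ∈ C, x ≠ p → x ≠ q → σ' x = σ x := by
    intro x hx h1 h2
    exact e5 x h1 h2 (fun h => hr (h ▸ hx)) (fun h => hs (h ▸ hx))
  have oC' : ∀ x ∈ K \ C, x ≠ r → x ≠ s → σ' x = σ x := by
    intro x hx h1 h2
    have := (mem_sdiff.1 hx).2
    exact e5 x (fun h => this (h ▸ hp)) (fun h => this (h ▸ hq)) h1 h2
  have cC : ∀ x ∈ C, σ' x ∈ C := by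
    intro x hx
    by_cases h1 : x = p
    · rw [h1, e1]; exact hq
    by_cases h2 : x = q
    · rw [h2, e2]; exact hp
    rw [oC x hx h1 h2]; exact ho x hx h1 h2
  have ho' : ∀ x ∈ K \ C, x ≠ r → x ≠ s → σ x ∈ K \ C := by
    intro x hx h1 h2
    have hx' := mem_sdiff.1 hx
    have hσx := hN.inv x hx'.1
    refine mem_sdiff.2 ⟨hσx.1, fun hcx => ?_⟩
    by_cases h3 : σ x = p
    · apply h1; rw [← hσx.2.1, h3]
    by_cases h4 : σ x = q
    · apply h2; rw [← hσx.2.1, h4]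
    have := ho _ hcx h3 h4
    rw [hσx.2.1] at this
    exact hx'.2 this
  have hrC : r ∈ K \ C := mem_sdiff.2 ⟨hrK, hr⟩
  have hsC : s ∈ K \ C := mem_sdiff.2 ⟨hsK, hs⟩
  have cC' : ∀ x ∈ K \ C, σ' x ∈ K \ C := by
    intro x hx
    by_cases h1 : x = r
    · rw [h1, e3]; exact hsC
    by_cases h2 : x = s
    · rw [h2, e4]; exact hrC
    rw [oC' x hx h1 h2]; exact ho' x hx h1 h2
  have iC : Inv C σ' := by
    intro x hx
    by_cases h1 : x = p
    · rw [h1, e1, e2]; exact ⟨hq, rfl, hpq.symm⟩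
    by_cases h2 : x = q
    · rw [h2, e2, e1]; exact ⟨hp, rfl, hpq⟩
    have hx1 := hN.inv x (hC.1 hx)
    rw [oC x hx h1 h2]
    refine ⟨ho x hx h1 h2, ?_, hx1.2.2⟩
    rw [oC (σ x) (ho x hx h1 h2), hx1.2.1]
    · intro h; apply hr; rw [hrd, ← h, hx1.2.1]; exact hx
    · intro h; apply hs; rw [hsd, ← h, hx1.2.1]; exact hx
  have iC' : Inv (K \ C) σ' := by
    intro x hx
    by_cases h1 : x = r
    · rw [h1, e3, e4]; exact ⟨hsC, rfl, hrs.symm⟩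
    by_cases h2 : x = s
    · rw [h2, e4, e3]; exact ⟨hrC, rfl, hrs⟩
    have hx1 := hN.inv x (mem_sdiff.1 hx).1
    rw [oC' x hx h1 h2]
    refine ⟨ho' x hx h1 h2, ?_, hx1.2.2⟩
    rw [oC' (σ x) (ho' x hx h1 h2), hx1.2.1]
    · intro h
      have : x = p := by rw [← hx1.2.1, h, hσr]
      exact (mem_sdiff.1 hx).2 (this ▸ hp)
    · intro h
      have : x = q := by rw [← hx1.2.1, h, hσs]
      exact (mem_sdiff.1 hx).2 (this ▸ hq)
  have con := R1conn hc hC hp hq e1 e2 oC iC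
  have con' := R1conn hc hC.compl hrC hsC e3 e4 oC' iC'
  have hNC : Nrm C σ' π h := by
    refine ⟨iC, hN.pm.mono hC.1, ?_, hC.even hN.even, hC.flow hN⟩
    intro x hx
    by_cases h1 : x = p
    · rw [h1, e1, hpqh]
    by_cases h2 : x = q
    · rw [h2, e2, hpqh]
    rw [oC x hx h1 h2]; exact hN.hs x (hC.1 hx)
  have hlt : C.card < n := by
    rw [← hn]
    exact card_lt_card ⟨hC.1, fun h => hr (h hrK)⟩
  obtain ⟨v, t, t1, t2, t3⟩ := ih C σ' π h _ hlt hNC.hyp con hodd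
  obtain ⟨u, u1, u2, u3⟩ := lemQ0 iC' con' (hN.pm.mono sdiff_subset) (hC.compl.even hN.even) heven
  have hε := pm_mul (t1 p hp) (u1 r hrC)
  set ε := t p * u r
  have hur := pm_sq (u1 r hrC)
  have htpq : t q = t p := by have := t2 p hp; rwa [e1] at this
  have husr : u s = u r := by have := u2 r hrC; rwa [e3] at this
  have hεr : ε * u r = t p := by
    show t p * u r * u r = t p
    linear_combination (t p) * hur
  refine ⟨v, fun x => if x ∈ C then t x else ε * u x, ?_, ?_, ?_⟩
  · intro x hx
    dsimp only
    split_ifs with hxC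
    · exact t1 x hxC
    · exact pm_mul hε (u1 x (mem_sdiff.2 ⟨hx, hxC⟩))
  · intro x hx
    dsimp only
    by_cases h1 : x = p
    · rw [h1, ← hrd, if_neg hr, if_pos hp, hεr]
    by_cases h2 : x = q
    · rw [h2, ← hsd, if_neg hs, if_pos hq, husr, hεr, htpq]
    by_cases h3 : x = r
    · rw [h3, hσr, if_neg hr, if_pos hp, hεr]
    by_cases h4 : x = s
    · rw [h4, hσs, if_neg hs, if_pos hq, husr, hεr, htpq]
    by_cases hxC : x ∈ C
    · rw [if_pos hxC, if_pos (ho x hxC h1 h2)]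
      have := t2 x hxC
      rwa [oC x hxC h1 h2] at this
    · have hx' : x ∈ K \ C := mem_sdiff.2 ⟨hx, hxC⟩
      rw [if_neg hxC, if_neg (mem_sdiff.1 (ho' x hx' h3 h4)).2]
      have := u2 x hx'
      rw [oC' x hx' h3 h4] at this
      rw [this]
  · intro w
    have hun : C ∪ (K \ C) = K := union_sdiff_of_subset hC.1
    have a1 : net K π (fun x => (if x ∈ C then t x else ε * u x) * h x) w =
      net C π (fun x => t x * h x) w + ε * net (K \ C) π (fun x => u x * h x) w := by
      conv_lhs => rw [← hun]
      rw [net_union disjoint_sdiff]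
      congr 1
      · apply net_congr; intro x hx; simp [hx]
      · unfold net
        rw [mul_sum]
        apply sum_congr rfl
        intro x hx
        have := (mem_sdiff.1 (mem_filter.1 hx).1).2
        simp [this]; ring
    rw [a1, t3, u3]; simp

theorem R1 {n : ℕ} {K C : Finset D} {σ : D → D} {π : D → V} {h : D → ℤ}
    (hN : Nrm K σ π h) (hn : K.card = n) (ih : IHyp D V n) (hc : Conn K σ π)
    (hodd : ¬ (4 : ℤ) ∣ ∑ x ∈ K, h x) (hC : VC K π C)
    (h2 : #{x ∈ C | σ x ∉ C} = 2) : Concl K σ π h := by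
  obtain ⟨p, q, hpq, hset⟩ := card_eq_two.1 h2
  have hmem : ∀ x, (x ∈ C ∧ σ x ∉ C) ↔ (x = p ∨ x = q) := by
    intro x
    have := Finset.ext_iff.1 hset x
    simpa using this
  obtain ⟨hp, hr⟩ := (hmem p).2 (Or.inl rfl)
  obtain ⟨hq, hs⟩ := (hmem q).2 (Or.inr rfl)
  have ho : ∀ x ∈ C, x ≠ p → x ≠ q → σ x ∈ C := by
    intro x hx h1 h2
    by_contra h3
    rcases (hmem x).1 ⟨hx, h3⟩ with h | h
    · exact h1 h
    · exact h2 h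
  have hsum := hC.sum hN
  have hsum' := hC.compl.sum hN
  have hev := hC.sum_even hN
  have hev' := hC.compl.sum_even hN
  have htot : ∑ x ∈ K, h x = ∑ x ∈ K \ C, h x + ∑ x ∈ C, h x := (sum_sdiff hC.1).symm
  have hpqh : h p = h q := by
    have hi : Inv (C \ {p, q}) σ := by
      intro x hx
      simp only [mem_sdiff, mem_insert, mem_singleton, not_or] at hx ⊢
      have hx1 := hN.inv x (hC.1 hx.1)
      refine ⟨⟨ho x hx.1 hx.2.1 hx.2.2, ?_, ?_⟩, hx1.2⟩
      · intro h; apply hr; rw [← h, hx1.2.1]; exact hx.1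
      · intro h; apply hs; rw [← h, hx1.2.1]; exact hx.1
    have f1 := sum_sinv hi (hN.pm.mono (sdiff_subset.trans hC.1))
      (fun x hx => hN.hs x (hC.1 (mem_sdiff.1 hx).1))
    have f2 := sum_pair_split hp hq hpq h
    have hsub : ({p, q} : Finset D) ⊆ C := by
      intro x; simp; rintro (rfl | rfl) <;> assumption
    have f3 := card_sdiff_of_subset hsub
    have f4 := card_le_card hsub
    rw [card_pair hpq] at f3 f4
    rcases hN.pm p (hC.1 hp) with h5 | h5 <;> rcases hN.pm q (hC.1 hq) with h6 | h6 <;>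
      rw [h5, h6] at f2 ⊢ <;> omega
  by_cases hd : (4 : ℤ) ∣ ∑ x ∈ C, h x
  · have hp1 := hN.inv p (hC.1 hp)
    have hq1 := hN.inv q (hC.1 hq)
    have hkc : K \ (K \ C) = C := by rw [sdiff_sdiff_right_self]; exact inf_eq_right.2 hC.1
    refine R1aux hN hn ih hc hC.compl (by omega) (by rwa [hkc]) (p := σ p) (q := σ q)
      (mem_sdiff.2 ⟨hp1.1, hr⟩) (mem_sdiff.2 ⟨hq1.1, hs⟩) ?_ ?_ ?_ ?_ ?_
    · intro h; apply hpq; rw [← hp1.2.1, h, hq1.2.1]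
    · rw [hp1.2.1]; simp [hp]
    · rw [hq1.2.1]; simp [hq]
    · rw [hN.hs p (hC.1 hp), hN.hs q (hC.1 hq), hpqh]
    · intro x hx h1 h2
      have hx' := mem_sdiff.1 hx
      have hσx := hN.inv x hx'.1
      refine mem_sdiff.2 ⟨hσx.1, fun hcx => ?_⟩
      have := ho _ hcx (fun h => h1 (by rw [← h, hσx.2.1])) (fun h => h2 (by rw [← h, hσx.2.1]))
      rw [hσx.2.1] at this
      exact hx'.2 this
  · exact R1aux hN hn ih hc hC hd (by omega) hp hq hpq hr hs hpqh ho

theorem bd_even {K C : Finset D} {σ : D → D} {π : D → V} (hi : Inv K σ) (he : EvenDeg K π)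
    (hC : VC K π C) : Even (#{x ∈ C | σ x ∉ C}) := by
  have h1 : Even (#{x ∈ C | σ x ∈ C}) := by
    apply even_card_inv (σ := σ)
    intro x hx
    rw [mem_filter] at hx ⊢
    have := hi x (hC.1 hx.1)
    exact ⟨⟨hx.2, by rw [this.2.1]; exact hx.1⟩, this.2⟩
  have h2 := hC.card_even he
  have h3 := card_filter_add_card_filter_not (s := C) (fun x => σ x ∈ C)
  rw [Nat.even_iff] at *
  omega

theorem bd_pos {K C : Finset D} {σ : D → D} {π : D → V} (hc : Conn K σ π)
    (hC : VC K π C) (h0 : C ≠ ∅) (h1 : C ≠ K) : #{x ∈ C | σ x ∉ C} ≠ 0 := by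
  intro h
  rw [card_eq_zero, filter_eq_empty_iff] at h
  rcases hc C ⟨hC.1, fun p hp => by simpa using h hp, hC.2⟩ with h2 | h2
  · exact h0 h2
  · exact h1 h2

/-- All proper cuts have size at least 4. -/
def Cut4 (K : Finset D) (σ : D → D) (π : D → V) : Prop :=
  ∀ C, VC K π C → C ≠ ∅ → C ≠ K → 4 ≤ #{x ∈ C | σ x ∉ C}

theorem cut4_or {n : ℕ} {K : Finset D} {σ : D → D} {π : D → V} {h : D → ℤ}
    (hN : Nrm K σ π h) (hn : K.card = n) (ih : IHyp D V n) (hc : Conn K σ π)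
    (hodd : ¬ (4 : ℤ) ∣ ∑ x ∈ K, h x) : Concl K σ π h ∨ Cut4 K σ π := by
  by_cases hcut : Cut4 K σ π
  · exact Or.inr hcut
  · left
    unfold Cut4 at hcut
    push Not at hcut
    obtain ⟨C, hC, h0, h1, h2⟩ := hcut
    have h3 := bd_even hN.inv hN.even hC
    have h4 := bd_pos hc hC h0.ne_empty h1
    refine R1 hN hn ih hc hodd hC ?_
    rw [Nat.even_iff] at h3
    omega

end SGF

open Finset

namespace SGF

variable {D V : Type} [DecidableEq D] [DecidableEq V]

set_option linter.unusedSectionVars false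

theorem card_fiber (C : Finset D) (π : D → V) {W : Finset V} (h : ∀ x ∈ C, π x ∈ W) :
    C.card = ∑ w ∈ W, #{x ∈ C | π x = w} :=
  Finset.card_eq_sum_card_fiberwise h

/-- The common data for R2. -/
structure Bip (K : Finset D) (σ : D → D) (π : D → V) (S T : Finset D) : Prop where
  vs : VC K π S
  vt : VC K π T
  dis : Disjoint S T
  ss : ∀ x ∈ S, σ x ∉ S
  tt : ∀ x ∈ T, σ x ∉ T
  bd : #{x ∈ S ∪ T | σ x ∉ S ∪ T} = 4

theorem VC.union {K S T : Finset D} {π : D → V} (hS : VC K π S) (hT : VC K π T) : VC K π (S ∪ T) := by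
  refine ⟨union_subset hS.1 hT.1, ?_⟩
  intro x hx y hy hxy
  rcases mem_union.1 hx with hx | hx
  · exact mem_union_left _ (hS.2 x hx y hy hxy)
  · exact mem_union_right _ (hT.2 x hx y hy hxy)

theorem Bip.pne {K : Finset D} {σ : D → D} {π : D → V} {S T : Finset D} (h : Bip K σ π S T)
    {x y : D} (hx : x ∈ S) (hy : y ∈ T) : π x ≠ π y := by
  intro hxy
  exact disjoint_left.1 h.dis (h.vs.2 x hx y (h.vt.1 hy) hxy.symm) hy

set_option maxHeartbeats 1000000 in
theorem hall_ext {K : Finset D} {σ : D → D} {π : D → V} {S T O : Finset D} (hi : Inv K σ)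
    (hcut : Cut4 K σ π) (he : EvenDeg K π) (h6 : ∀ x ∈ K, 6 ≤ #{y ∈ K | π y = π x})
    (h : Bip K σ π S T) (hO : O ⊆ {x ∈ S ∪ T | σ x ∉ S ∪ T}) (hO2 : O.card = 2) :
    ∃ F : D → V, (∀ x ∈ S ∪ T, σ x ∈ S ∪ T → F (σ x) = F x ∧ (F x = π x ∨ F x = π (σ x))) ∧
      ∀ w ∈ (S ∪ T).image π, 2 * (#{x ∈ S ∪ T | π x = w ∧ σ x ∈ S ∪ T ∧ F x = w} +
        #{x ∈ O | π x = w}) = #{x ∈ K | π x = w} := by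
  classical
  set X := S ∪ T with hX
  have hXv : VC K π X := h.vs.union h.vt
  have hOX : O ⊆ X := hO.trans (filter_subset _ _)
  set I := {x ∈ S | σ x ∈ T} with hI
  set cap : V → ℕ := fun w => #{x ∈ K | π x = w} / 2 - #{x ∈ O | π x = w} with hcap
  have hO2' : ∀ w, #{x ∈ O | π x = w} ≤ 2 := fun w => (card_le_card (filter_subset _ _)).trans hO2.le
  have hcapeq : ∀ w ∈ K.image π, 2 * (cap w + #{x ∈ O | π x = w}) = #{x ∈ K | π x = w} := by
    intro w hw
    obtain ⟨x, hx, rfl⟩ := mem_image.1 hw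
    have a1 := h6 x hx
    have a2 := hO2' (π x)
    obtain ⟨k, hk⟩ := he (π x)
    simp only [hcap]
    omega
  -- sum of caps over W
  have hsumcap : ∀ W ⊆ K.image π, 2 * (∑ w ∈ W, cap w + #{x ∈ O | π x ∈ W}) = #{x ∈ K | π x ∈ W} := by
    intro W hW
    have b1 : #{x ∈ K | π x ∈ W} = ∑ w ∈ W, #{x ∈ K | π x = w} := by
      rw [card_fiber {x ∈ K | π x ∈ W} π (W := W) (fun x hx => (mem_filter.1 hx).2)]
      apply sum_congr rfl
      intro w hw
      congr 1
      ext x; simp only [mem_filter]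
      constructor
      · rintro ⟨⟨a, b⟩, c⟩; exact ⟨a, c⟩
      · rintro ⟨a, c⟩; exact ⟨⟨a, c ▸ hw⟩, c⟩
    have b2 : #{x ∈ O | π x ∈ W} = ∑ w ∈ W, #{x ∈ O | π x = w} := by
      rw [card_fiber {x ∈ O | π x ∈ W} π (W := W) (fun x hx => (mem_filter.1 hx).2)]
      apply sum_congr rfl
      intro w hw
      congr 1
      ext x; simp only [mem_filter]
      constructor
      · rintro ⟨⟨a, b⟩, c⟩; exact ⟨a, c⟩
      · rintro ⟨a, c⟩; exact ⟨⟨a, c ▸ hw⟩, c⟩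
    rw [b1, b2, ← sum_add_distrib, mul_sum]
    exact sum_congr rfl fun w hw => hcapeq w (hW hw)
  -- internal darts
  have hint : ∀ A ⊆ I, ∀ C, (∀ x ∈ A, x ∈ C ∧ σ x ∈ C) → 2 * #A ≤ #{x ∈ C | σ x ∈ C} := by
    intro A hA C hAC
    have hAK : ∀ x ∈ A, x ∈ K := fun x hx => h.vs.1 (mem_filter.1 (hA hx)).1
    have c1 : #(A.image σ) = #A := by
      apply card_image_of_injOn
      intro x hx y hy hxy
      rw [← (hi x (hAK x hx)).2.1, hxy, (hi y (hAK y hy)).2.1]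
    have c2 : Disjoint A (A.image σ) := by
      rw [disjoint_left]
      intro x hx hx'
      obtain ⟨y, hy, rfl⟩ := mem_image.1 hx'
      exact disjoint_left.1 h.dis (mem_filter.1 (hA hx)).1 (mem_filter.1 (hA hy)).2
    have c3 : A ∪ A.image σ ⊆ {x ∈ C | σ x ∈ C} := by
      intro x hx
      rcases mem_union.1 hx with hx | hx
      · exact mem_filter.2 (hAC x hx)
      · obtain ⟨y, hy, rfl⟩ := mem_image.1 hx
        rw [mem_filter, (hi y (hAK y hy)).2.1]
        exact (hAC y hy).symm
    have := card_le_card c3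
    rw [card_union_of_disjoint c2, c1] at this
    omega
  have hXne : X ≠ K := by
    intro hXK
    have := h.bd
    rw [← hX, hXK, card_eq_zero.2] at this
    · omega
    · rw [filter_eq_empty_iff]
      intro x hx; simpa using (hi x hx).1
  let t : {x // x ∈ I} → Finset (V × ℕ) := fun i =>
    ({π i.1, π (σ i.1)} : Finset V).biUnion fun w => (range (cap w)).image (fun n => (w, n))
  have hmemt : ∀ i w n, (w, n) ∈ t i ↔ (w = π i.1 ∨ w = π (σ i.1)) ∧ n < cap w := by
    intro i w n
    simp only [t, mem_biUnion, mem_insert, mem_singleton, mem_image, mem_range,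
      Prod.mk.injEq]
    constructor
    · rintro ⟨w', h1, n', h2, rfl, rfl⟩; exact ⟨h1, h2⟩
    · rintro ⟨h1, h2⟩; exact ⟨w, h1, n, h2, rfl, rfl⟩
  have hall : ∀ A : Finset {x // x ∈ I}, #A ≤ #(A.biUnion t) := by
    intro A
    rcases A.eq_empty_or_nonempty with rfl | ⟨i0, hi0⟩
    · simp
    set A' := A.map (Function.Embedding.subtype _) with hA'
    have hA'I : A' ⊆ I := by
      intro x hx
      simp only [hA', mem_map, Function.Embedding.subtype_apply] at hx
      obtain ⟨a, _, rfl⟩ := hx; exact a.2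
    set W := A'.image π ∪ A'.image (fun x => π (σ x)) with hW
    have hWX : W ⊆ X.image π := by
      intro w hw
      rcases mem_union.1 hw with hw | hw
      · obtain ⟨x, hx, rfl⟩ := mem_image.1 hw
        exact mem_image_of_mem _ (mem_union_left _ (mem_filter.1 (hA'I hx)).1)
      · obtain ⟨x, hx, rfl⟩ := mem_image.1 hw
        exact mem_image_of_mem _ (mem_union_right _ (mem_filter.1 (hA'I hx)).2)
    have hWK : W ⊆ K.image π := hWX.trans (image_subset_image hXv.1)
    have d1 : ∑ w ∈ W, cap w ≤ #(A.biUnion t) := by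
      have : #(W.sigma (fun w => range (cap w))) = ∑ w ∈ W, cap w := by simp
      rw [← this]
      apply card_le_card_of_injOn (fun s => (s.1, s.2))
      · rintro ⟨w, n⟩ hs
        simp only [coe_sigma, Set.mem_sigma_iff, mem_coe, mem_range] at hs
        rw [mem_coe, mem_biUnion]
        rcases mem_union.1 hs.1 with hw | hw
        · obtain ⟨x, hx, hxw⟩ := mem_image.1 hw
          simp only [hA', mem_map, Function.Embedding.subtype_apply] at hx
          obtain ⟨a, ha, rfl⟩ := hx
          exact ⟨a, ha, (hmemt a w n).2 ⟨Or.inl hxw.symm, hs.2⟩⟩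
        · obtain ⟨x, hx, hxw⟩ := mem_image.1 hw
          simp only [hA', mem_map, Function.Embedding.subtype_apply] at hx
          obtain ⟨a, ha, rfl⟩ := hx
          exact ⟨a, ha, (hmemt a w n).2 ⟨Or.inr hxw.symm, hs.2⟩⟩
      · rintro ⟨w, n⟩ _ ⟨w', n'⟩ _ hh
        simp only [Prod.mk.injEq] at hh
        obtain ⟨rfl, rfl⟩ := hh; rfl
    set C := {x ∈ K | π x ∈ W} with hC
    have hCX : C ⊆ X := by
      intro x hx
      obtain ⟨hxK, hxW⟩ := mem_filter.1 hx
      obtain ⟨y, hy, hyx⟩ := mem_image.1 (hWX hxW)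
      exact hXv.2 y hy x hxK hyx.symm
    have hCv : VC K π C := by
      refine ⟨filter_subset _ _, ?_⟩
      intro x hx y hy hxy
      rw [hC, mem_filter] at hx ⊢
      exact ⟨hy, hxy ▸ hx.2⟩
    have d2 := hint A' hA'I C (by
      intro x hx
      have hxI := mem_filter.1 (hA'I hx)
      exact ⟨mem_filter.2 ⟨h.vs.1 hxI.1, mem_union_left _ (mem_image_of_mem _ hx)⟩,
        mem_filter.2 ⟨h.vt.1 hxI.2, mem_union_right _ (mem_image_of_mem (fun x => π (σ x)) hx)⟩⟩)
    have hi0' : i0.1 ∈ A' := by simp [hA', hi0]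
    have d3 := hcut C hCv (by
        apply Nonempty.ne_empty
        exact ⟨i0.1, mem_filter.2 ⟨h.vs.1 (mem_filter.1 i0.2).1,
          mem_union_left _ (mem_image_of_mem _ hi0')⟩⟩)
      (fun hCK => hXne (Subset.antisymm hXv.1 (hCK ▸ hCX)))
    have d4 := card_filter_add_card_filter_not (s := C) (fun x => σ x ∈ C)
    have d5 : 2 * (∑ w ∈ W, cap w + #{x ∈ O | π x ∈ W}) = #C := hsumcap W hWK
    have d6 : #{x ∈ O | π x ∈ W} ≤ 2 := (card_le_card (filter_subset _ _)).trans hO2.le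
    have d7 : #A' = #A := card_map _
    omega
  obtain ⟨f, hfi, hft⟩ := (all_card_le_biUnion_card_iff_exists_injective t).1 hall
  -- fibres
  have hcardI : 2 * #I + 4 = #X := by
    have g1 := card_filter_add_card_filter_not (s := X) (fun x => σ x ∈ X)
    have g2 := h.bd
    rw [← hX] at g2
    have g3 := hint I (Subset.refl _) X (by
      intro x hx
      have := mem_filter.1 hx
      exact ⟨mem_union_left _ this.1, mem_union_right _ this.2⟩)
    have g4 : #{x ∈ X | σ x ∈ X} ≤ #(I ∪ I.image σ) := by
      apply card_le_card
      intro x hx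
      obtain ⟨hx1, hx2⟩ := mem_filter.1 hx
      rcases mem_union.1 hx1 with hx1 | hx1
      · apply mem_union_left
        rcases mem_union.1 hx2 with hx2 | hx2
        · exact absurd hx2 (h.ss x hx1)
        · exact mem_filter.2 ⟨hx1, hx2⟩
      · apply mem_union_right
        rcases mem_union.1 hx2 with hx2 | hx2
        · have := (hi x (h.vt.1 hx1)).2.1
          exact mem_image.2 ⟨σ x, mem_filter.2 ⟨hx2, by rw [this]; exact hx1⟩, this⟩
        · exact absurd hx2 (h.tt x hx1)
    have g5 := card_union_le I (I.image σ)
    have g6 : #(I.image σ) ≤ #I := card_image_le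
    omega
  have hfw : ∀ i : {x // x ∈ I}, (f i).1 ∈ X.image π := by
    intro i
    have := (hmemt i (f i).1 (f i).2).1 (hft i)
    have hI' := mem_filter.1 i.2
    rcases this.1 with h1 | h1
    · rw [h1]; exact mem_image_of_mem _ (mem_union_left _ hI'.1)
    · rw [h1]; exact mem_image_of_mem _ (mem_union_right _ hI'.2)
  have hfib : ∀ w ∈ X.image π, #{i : {x // x ∈ I} | (f i).1 = w} = cap w := by
    have k1 : ∀ w ∈ X.image π, #{i : {x // x ∈ I} | (f i).1 = w} ≤ cap w := by
      intro w _
      conv_rhs => rw [← card_range (cap w)]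
      apply card_le_card_of_injOn (fun i => (f i).2)
      · intro i hii
        simp only [coe_filter, mem_univ, true_and, Set.mem_ofPred_eq] at hii
        have := (hmemt i (f i).1 (f i).2).1 (hft i)
        rw [hii] at this
        simpa using this.2
      · intro i hii j hj hij
        simp only [coe_filter, mem_univ, true_and, Set.mem_ofPred_eq] at hii hj
        exact hfi (Prod.ext (hii.trans hj.symm) hij)
    have k2 : ∑ w ∈ X.image π, #{i : {x // x ∈ I} | (f i).1 = w} = ∑ w ∈ X.image π, cap w := by
      rw [← card_fiber (univ : Finset {x // x ∈ I}) (fun i => (f i).1) (fun i _ => hfw i)]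
      have k3 := hsumcap (X.image π) (image_subset_image hXv.1)
      have k4 : ({x ∈ K | π x ∈ X.image π} : Finset D) = X := by
        ext x
        simp only [mem_filter, mem_image]
        constructor
        · rintro ⟨h1, y, hy, hyx⟩; exact hXv.2 y hy x h1 hyx.symm
        · intro hx; exact ⟨hXv.1 hx, x, hx, rfl⟩
      have k5 : ({x ∈ O | π x ∈ X.image π} : Finset D) = O := by
        apply filter_true_of_mem
        intro x hx; exact mem_image_of_mem _ (hOX hx)
      rw [k4, k5] at k3
      rw [card_univ, Fintype.card_coe]
      omega
    exact (sum_eq_sum_iff_of_le k1).1 k2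
  let rep : D → D := fun x => if x ∈ S then x else σ x
  have hrep : ∀ x ∈ X, σ x ∈ X → rep x ∈ I ∧ rep (σ x) = rep x ∧ (rep x = x ∨ rep x = σ x) := by
    intro x hx hσx
    simp only [rep]
    rcases mem_union.1 hx with hx | hx
    · have hnS : σ x ∉ S := h.ss x hx
      rw [if_pos hx, if_neg hnS, (hi x (h.vs.1 hx)).2.1]
      refine ⟨mem_filter.2 ⟨hx, ?_⟩, rfl, Or.inl rfl⟩
      rcases mem_union.1 hσx with h1 | h1
      · exact absurd h1 hnS
      · exact h1
    · have hnS : x ∉ S := fun h1 => disjoint_left.1 h.dis h1 hx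
      have hσS : σ x ∈ S := by
        rcases mem_union.1 hσx with h1 | h1
        · exact h1
        · exact absurd h1 (h.tt x hx)
      rw [if_neg hnS, if_pos hσS]
      exact ⟨mem_filter.2 ⟨hσS, by rw [(hi x (h.vt.1 hx)).2.1]; exact hx⟩, rfl, Or.inr rfl⟩
  let F : D → V := fun x => if hx : rep x ∈ I then (f ⟨rep x, hx⟩).1 else π x
  have hF : ∀ x (hx : rep x ∈ I), F x = (f ⟨rep x, hx⟩).1 := fun x hx => dif_pos hx
  refine ⟨F, ?_, ?_⟩
  · intro x hx hσx
    obtain ⟨r1, r2, r3⟩ := hrep x hx hσx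
    refine ⟨?_, ?_⟩
    · rw [hF x r1, hF (σ x) (r2 ▸ r1)]
      congr 2
      exact Subtype.ext r2
    · rw [hF x r1]
      have := ((hmemt ⟨rep x, r1⟩ _ _).1 (hft ⟨rep x, r1⟩)).1
      rcases r3 with r3 | r3
      · simp only [r3] at this ⊢; exact this
      · simp only [r3, (hi x (hXv.1 hx)).2.1] at this ⊢; exact this.symm
  · intro w hw
    rw [← hcapeq w (image_subset_image hXv.1 hw), ← hfib w hw]
    congr 2
    have hside : ∀ x ∈ X, ∀ y ∈ X, π x = π y → (x ∈ S ↔ y ∈ S) := by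
      intro x hx y hy hxy
      exact ⟨fun h1 => h.vs.2 x h1 y (hXv.1 hy) hxy.symm, fun h1 => h.vs.2 y h1 x (hXv.1 hx) hxy⟩
    refine card_bij (fun x hx => ⟨rep x, (hrep x (mem_filter.1 hx).1 (mem_filter.1 hx).2.2.1).1⟩) ?_ ?_ ?_
    · intro x hx
      obtain ⟨h1, h2, h3, h4⟩ := mem_filter.1 hx
      simp only [mem_filter, mem_univ, true_and]
      rw [← hF x (hrep x h1 h3).1]; exact h4
    · intro x hx y hy hxy
      obtain ⟨h1, h2, h3, h4⟩ := mem_filter.1 hx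
      obtain ⟨g1, g2, g3, g4⟩ := mem_filter.1 hy
      have hxy' : rep x = rep y := congrArg Subtype.val hxy
      have hs := hside x h1 y g1 (h2.trans g2.symm)
      simp only [rep] at hxy'
      by_cases hxS : x ∈ S
      · rwa [if_pos hxS, if_pos (hs.1 hxS)] at hxy'
      · rw [if_neg hxS, if_neg (fun h => hxS (hs.2 h))] at hxy'
        rw [← (hi x (hXv.1 h1)).2.1, hxy', (hi y (hXv.1 g1)).2.1]
    · rintro ⟨i, hiI⟩ hif
      simp only [mem_filter, mem_univ, true_and] at hif
      have hI' := mem_filter.1 hiI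
      have := ((hmemt ⟨i, hiI⟩ _ _).1 (hft ⟨i, hiI⟩)).1
      rw [hif] at this
      have hiK := hi i (h.vs.1 hI'.1)
      have hri : rep i = i := if_pos hI'.1
      have hrσ : rep (σ i) = i := by
        simp only [rep]; rw [if_neg (h.ss i hI'.1), hiK.2.1]
      rcases this with h1 | h1
      · refine ⟨i, mem_filter.2 ⟨mem_union_left _ hI'.1, h1.symm, mem_union_right _ hI'.2, ?_⟩, ?_⟩
        · rw [hF i (hri.symm ▸ hiI)]
          simp only [hri]; exact hif
        · exact Subtype.ext hri
      · refine ⟨σ i, mem_filter.2 ⟨mem_union_right _ hI'.2, h1.symm, ?_, ?_⟩, ?_⟩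
        · rw [hiK.2.1]; exact mem_union_left _ hI'.1
        · rw [hF (σ i) (hrσ.symm ▸ hiI)]
          simp only [hrσ]; exact hif
        · exact Subtype.ext hrσ

end SGF

open Finset

namespace SGF

variable {D V : Type} [DecidableEq D] [DecidableEq V]

set_option linter.unusedSectionVars false

theorem Nrm.deg6 {K : Finset D} {σ : D → D} {π : D → V} {h : D → ℤ} (hN : Nrm K σ π h) :
    ∀ x ∈ K, 6 ≤ #{y ∈ K | π y = π x} := by
  intro x hx
  have h1 := hN.flow (π x)
  obtain ⟨k, hk⟩ := hN.even (π x)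
  have h2 : 0 < #{y ∈ K | π y = π x} := card_pos.2 ⟨x, by simp [hx]⟩
  omega

/-- internal cancellation for σ-invariant functions -/
theorem Bip.cancel {K : Finset D} {σ : D → D} {π : D → V} {S T : Finset D} (hi : Inv K σ)
    (h : Bip K σ π S T) {g : D → ℤ} (hg : ∀ x ∈ K, g (σ x) = g x) :
    ∑ x ∈ S, g x - ∑ x ∈ T, g x =
      ∑ x ∈ S ∪ T with σ x ∉ S ∪ T, (if x ∈ T then - g x else g x) := by
  have e1 : ∑ x ∈ S ∪ T, (if x ∈ T then - g x else g x) = ∑ x ∈ S, g x - ∑ x ∈ T, g x := by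
    rw [sum_union h.dis, sub_eq_add_neg, ← sum_neg_distrib]
    congr 1
    · apply sum_congr rfl
      intro x hx
      rw [if_neg (disjoint_left.1 h.dis hx)]
    · apply sum_congr rfl
      intro x hx
      rw [if_pos hx]
  have e2 := sum_filter_add_sum_filter_not (S ∪ T) (fun x => σ x ∈ S ∪ T)
    (fun x => if x ∈ T then - g x else g x)
  have e3 : ∑ x ∈ S ∪ T with σ x ∈ S ∪ T, (if x ∈ T then - g x else g x) = 0 := by
    have hv := h.vs.union h.vt
    have key : ∀ x ∈ ({x ∈ S ∪ T | σ x ∈ S ∪ T} : Finset D),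
        (if x ∈ T then - g x else g x) + (if σ x ∈ T then - g (σ x) else g (σ x)) = 0 := by
      intro x hx
      rw [mem_filter] at hx
      have hxK := hv.1 hx.1
      rw [hg x hxK]
      rcases mem_union.1 hx.1 with h1 | h1
      · have h2 : σ x ∈ T := (mem_union.1 hx.2).resolve_left (h.ss x h1)
        rw [if_neg (disjoint_left.1 h.dis h1), if_pos h2]; ring
      · rw [if_pos h1, if_neg (h.tt x h1)]; ring
    have : 2 * ∑ x ∈ S ∪ T with σ x ∈ S ∪ T, (if x ∈ T then - g x else g x) = 0 := by
      rw [two_mul]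
      conv_lhs =>
        rhs
        rw [← sum_nbij' (s := {x ∈ S ∪ T | σ x ∈ S ∪ T}) (t := {x ∈ S ∪ T | σ x ∈ S ∪ T}) σ σ
          (f := fun x => (if σ x ∈ T then - g (σ x) else g (σ x)))
          (g := fun x => if x ∈ T then - g x else g x)
          (fun x hx => by
            rw [mem_filter] at hx ⊢
            rw [(hi x (hv.1 hx.1)).2.1]; exact hx.symm)
          (fun x hx => by
            rw [mem_filter] at hx ⊢
            rw [(hi x (hv.1 hx.1)).2.1]; exact hx.symm)
          (fun x hx => (hi x (hv.1 (mem_filter.1 hx).1)).2.1)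
          (fun x hx => (hi x (hv.1 (mem_filter.1 hx).1)).2.1)
          (fun x hx => rfl)]
      rw [← sum_add_distrib]
      exact sum_eq_zero key
    omega
  rw [← e1, ← e2, e3, zero_add]

theorem VC.sum0 {K C : Finset D} {π : D → V} {f : D → ℤ} (hC : VC K π C)
    (hf : ∀ w, net K π f w = 0) : ∑ x ∈ C, f x = 0 := by
  rw [← sum_net C π f]
  apply sum_eq_zero
  intro w _
  rcases hC.filter_eq w with h1 | h1
  · unfold net; rw [h1]; exact hf w
  · exact net_zero h1

set_option maxHeartbeats 1000000 in
theorem R2 {n : ℕ} {K : Finset D} {σ : D → D} {π : D → V} {h : D → ℤ}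
    (hN : Nrm K σ π h) (hn : K.card = n) (ih : IHyp D V n) (hc : Conn K σ π)
    (hodd : ¬ (4 : ℤ) ∣ ∑ x ∈ K, h x) (hcut : Cut4 K σ π) {S T : Finset D}
    (hb : Bip K σ π S T) : Concl K σ π h := by
  set X := S ∪ T with hX
  have hv : VC K π X := hb.vs.union hb.vt
  set Bd := {x ∈ X | σ x ∉ X} with hBd
  have hbd : #Bd = 4 := hb.bd
  have hBdX : Bd ⊆ X := filter_subset _ _
  obtain ⟨x0, hx0⟩ : Bd.Nonempty := card_pos.1 (by omega)
  have hx0X := hBdX hx0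
  set z := π x0 with hz
  set U := K \ X with hU
  have hUv : VC K π U := hv.compl
  set K' := U ∪ Bd with hK'
  have hK'K : K' ⊆ K := union_subset sdiff_subset (hBdX.trans hv.1)
  have hUX : ∀ x ∈ U, x ∉ X := fun x hx => (mem_sdiff.1 hx).2
  have hUz : ∀ x ∈ U, π x ≠ z := fun x hx hxz =>
    hUX x hx (hv.2 x0 hx0X x (mem_sdiff.1 hx).1 hxz)
  set π' : D → V := fun x => if x ∈ X then z else π x with hπ'
  set a' : D → ℤ := fun x => if x ∈ T then - h x else h x with ha'
  set φ : D → ℤ := fun x => if h x = 1 then 1 else 2 with hφ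
  have hhyp := hN.hyp
  have hσK' : ∀ x ∈ K', σ x ∈ K' := by
    intro x hx
    have hxK := hN.inv x (hK'K hx)
    by_cases h1 : σ x ∈ X
    · apply mem_union_right
      refine mem_filter.2 ⟨h1, ?_⟩
      rw [hxK.2.1]
      rcases mem_union.1 hx with h2 | h2
      · exact hUX x h2
      · exact absurd h1 (mem_filter.1 h2).2
    · exact mem_union_left _ (mem_sdiff.2 ⟨hxK.1, h1⟩)
  have hinv' : Inv K' σ := fun x hx => ⟨hσK' x hx, (hN.inv x (hK'K hx)).2⟩
  have fibz : ({x ∈ K' | π' x = z} : Finset D) = Bd := by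
    ext x
    simp only [mem_filter, hK', mem_union]
    constructor
    · rintro ⟨h1 | h1, h2⟩
      · simp only [hπ', if_neg (hUX x h1)] at h2
        exact absurd h2 (hUz x h1)
      · exact h1
    · intro h1
      exact ⟨Or.inr h1, by simp [hπ', hBdX h1]⟩
  have fibw : ∀ w, w ≠ z → ({x ∈ K' | π' x = w} : Finset D) = {x ∈ U | π x = w} := by
    intro w hw
    ext x
    simp only [mem_filter, hK', mem_union]
    constructor
    · rintro ⟨h1 | h1, h2⟩
      · simp only [hπ', if_neg (hUX x h1)] at h2
        exact ⟨h1, h2⟩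
      · simp only [hπ', if_pos (hBdX h1)] at h2
        exact absurd h2.symm hw
    · rintro ⟨h1, h2⟩
      exact ⟨Or.inl h1, by simp only [hπ', if_neg (hUX x h1)]; exact h2⟩
  have ha'U : ∀ x ∈ U, a' x = h x := by
    intro x hx
    have : x ∉ T := fun h1 => hUX x hx (mem_union_right _ h1)
    simp [ha', this]
  have hpm' : PM K' a' := by
    intro x hx
    have := hN.pm x (hK'K hx)
    simp only [ha']
    split_ifs
    · omega
    · exact this
  have hflow' : ∀ w, net K' π' (fun x => φ x * a' x) w = 0 := by
    intro w
    by_cases hw : w = z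
    · subst hw
      unfold net
      rw [fibz]
      have := hb.cancel hN.inv (g := fun x => φ x * h x) (by
        intro x hx
        simp only [hφ, hN.hs x hx])
      rw [hb.vs.sum0 hhyp.flow, hb.vt.sum0 hhyp.flow, sub_zero] at this
      rw [this]
      apply sum_congr rfl
      intro x _
      simp only [ha']
      split_ifs <;> ring
    · unfold net
      rw [fibw w hw]
      have : ∑ x ∈ U with π x = w, φ x * a' x = net U π (fun x => φ x * h x) w := by
        unfold net
        apply sum_congr rfl
        intro x hx
        rw [ha'U x (mem_filter.1 hx).1]
      rw [this]
      rcases hUv.filter_eq w with h1 | h1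
      · unfold net; rw [h1]; exact hhyp.flow w
      · exact net_zero h1
  have heven' : EvenDeg K' π' := by
    intro w
    by_cases hw : w = z
    · subst hw; rw [fibz, hbd]; decide
    · rw [fibw w hw]; exact hUv.even hN.even w
  have hyp' : Hyp0 K' σ π' a' φ :=
    ⟨hinv', hpm', fun x hx => hhyp.phi x (hK'K hx), fun x hx => hhyp.phis x (hK'K hx), hflow', heven'⟩
  have hconn' : Conn K' σ π' := by
    intro C hC
    by_cases hCB : ∃ y ∈ C, y ∈ Bd
    · right
      obtain ⟨y, hyC, hyB⟩ := hCB
      have hBC : Bd ⊆ C := by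
        intro x hx
        refine hC.2.2 y hyC x (mem_union_right _ hx) ?_
        simp only [hπ', if_pos (hBdX hx), if_pos (hBdX hyB)]
      have hcl : Closed K σ π (C ∪ X) := by
        refine ⟨union_subset (hC.1.trans hK'K) hv.1, ?_, ?_⟩
        · intro x hx
          rcases mem_union.1 hx with hx | hx
          · exact mem_union_left _ (hC.2.1 x hx)
          · by_cases h1 : σ x ∈ X
            · exact mem_union_right _ h1
            · exact mem_union_left _ (hC.2.1 x (hBC (mem_filter.2 ⟨hx, h1⟩)))
        · intro x hx w hw hxw
          by_cases hxX : x ∈ X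
          · exact mem_union_right _ (hv.2 x hxX w hw hxw)
          · have hxC : x ∈ C := (mem_union.1 hx).resolve_right hxX
            have hxU : x ∈ U := mem_sdiff.2 ⟨hK'K (hC.1 hxC), hxX⟩
            have hwU := hUv.2 x hxU w hw hxw
            apply mem_union_left
            refine hC.2.2 x hxC w (mem_union_left _ hwU) ?_
            simp only [hπ', if_neg hxX, if_neg (hUX w hwU)]; exact hxw
      rcases hc _ hcl with h1 | h1
      · exfalso
        have : x0 ∈ C ∪ X := mem_union_right _ hx0X
        rw [h1] at this; simp at this
      · apply Subset.antisymm hC.1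
        intro x hx
        rcases mem_union.1 hx with h2 | h2
        · have : x ∈ C ∪ X := h1 ▸ (hK'K hx)
          exact (mem_union.1 this).resolve_right (hUX x h2)
        · exact hBC h2
    · left
      push Not at hCB
      have hCU : ∀ x ∈ C, x ∈ U := fun x hx => (mem_union.1 (hC.1 hx)).resolve_right (hCB x hx)
      have hcl : Closed K σ π C := by
        refine ⟨hC.1.trans hK'K, hC.2.1, ?_⟩
        intro x hx w hw hxw
        have hwU := hUv.2 x (hCU x hx) w hw hxw
        refine hC.2.2 x hx w (mem_union_left _ hwU) ?_
        simp only [hπ', if_neg (hUX x (hCU x hx)), if_neg (hUX w hwU)]; exact hxw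
      rcases hc _ hcl with h1 | h1
      · exact h1
      · exfalso
        exact hUX x0 (hCU x0 (h1 ▸ hv.1 hx0X)) hx0X
  have hdisUB : Disjoint U Bd := by
    rw [disjoint_left]; intro x h1 h2; exact hUX x h1 (hBdX h2)
  have hodd' : ¬ (4 : ℤ) ∣ ∑ x ∈ K', a' x := by
    have e1 : ∑ x ∈ K', a' x = ∑ x ∈ U, h x + (∑ x ∈ S, h x - ∑ x ∈ T, h x) := by
      rw [hK', sum_union hdisUB, hb.cancel hN.inv (g := h) hN.hs]
      congr 1
      exact sum_congr rfl ha'U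
    have e2 : ∑ x ∈ K, h x = ∑ x ∈ U, h x + ∑ x ∈ X, h x := (sum_sdiff hv.1).symm
    have e3 : ∑ x ∈ X, h x = ∑ x ∈ S, h x + ∑ x ∈ T, h x := sum_union hb.dis
    have e4 := hb.vt.sum_even hN
    omega
  have hcard : #K' < n := by
    have e1 : #K' = #U + 4 := by rw [hK', card_union_of_disjoint hdisUB, hbd]
    have e2 : #U + #X = n := by rw [← hn]; exact card_sdiff_add_card_eq_card hv.1
    have e3 : 6 ≤ #X := by
      refine (hN.deg6 x0 (hv.1 hx0X)).trans (card_le_card ?_)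
      intro y hy
      rw [mem_filter] at hy
      exact hv.2 x0 hx0X y hy.1 hy.2
    omega
  obtain ⟨v, τ, t1, t2, t3⟩ := ih K' σ π' a' φ hcard hyp' hconn' hodd'
  set b : D → ℤ := fun x => τ x * a' x with hbdef
  have hbpm : ∀ x ∈ K', b x = 1 ∨ b x = -1 := fun x hx => pm_mul (t1 x hx) (hpm' x hx)
  set O := {x ∈ Bd | b x = 1} with hO
  have hbsum : ∀ w, (∑ x ∈ Bd with π x = w, b x) = 2 * (#{x ∈ O | π x = w} : ℤ) - #{x ∈ Bd | π x = w} := by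
    intro w
    have : ({x ∈ O | π x = w} : Finset D) = {x ∈ ({x ∈ Bd | π x = w} : Finset D) | b x = 1} := by
      ext x; simp only [hO, mem_filter]; tauto
    rw [this, card_filter]
    rw [card_eq_sum_ones]
    push_cast
    rw [mul_sum, ← sum_sub_distrib]
    apply sum_congr rfl
    intro x hx
    rcases hbpm x (mem_union_right _ (mem_filter.1 hx).1) with h1 | h1 <;> simp [h1]
  have hbtot : (∑ x ∈ Bd, b x) = 2 * (#O : ℤ) - #Bd := by
    rw [hO, card_filter]
    rw [card_eq_sum_ones Bd]
    push_cast
    rw [mul_sum, ← sum_sub_distrib]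
    apply sum_congr rfl
    intro x hx
    rcases hbpm x (mem_union_right _ hx) with h1 | h1 <;> simp [h1]
  have hOle : #O ≤ #Bd := card_le_card (filter_subset _ _)
  have hzv : z ≠ v := by
    intro hzv
    have := t3 z
    rw [if_pos hzv] at this
    unfold net at this
    rw [fibz] at this
    change ∑ x ∈ Bd, b x = 6 at this
    omega
  have hO2 : #O = 2 := by
    have := t3 z
    rw [if_neg hzv] at this
    unfold net at this
    rw [fibz] at this
    change ∑ x ∈ Bd, b x = 0 at this
    omega
  obtain ⟨F, F1, F2⟩ := hall_ext hN.inv hcut hN.even hN.deg6 hb (O := O) (filter_subset _ _) hO2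
  rw [← hX] at F1 F2
  -- Y on internal darts
  have hτh : ∀ x ∈ U, τ x * h x = b x := fun x hx => by simp only [hbdef, ha'U x hx]
  set Y : D → ℤ := fun x => if F x = π (if x ∈ S then x else σ x) then 1 else -1 with hY
  have hYpm : ∀ x, Y x = 1 ∨ Y x = -1 := by
    intro x; simp only [hY]; split_ifs <;> simp
  have hintK : ∀ x ∈ K, x ∉ K' → x ∈ X ∧ σ x ∈ X := by
    intro x hx hxK
    simp only [hK', mem_union, not_or, hU, mem_sdiff, hBd, mem_filter] at hxK
    tauto
  have hKint : ∀ x ∈ X, σ x ∈ X → x ∉ K' := by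
    intro x hx hx'
    simp only [hK', mem_union, not_or, hU, mem_sdiff, hBd, mem_filter]
    tauto
  have hYσ : ∀ x ∈ X, σ x ∈ X → Y (σ x) = Y x := by
    intro x hx hσx
    simp only [hY, (F1 x hx hσx).1]
    have : (if σ x ∈ S then σ x else σ (σ x)) = if x ∈ S then x else σ x := by
      rcases mem_union.1 hx with h1 | h1
      · rw [if_pos h1, if_neg (hb.ss x h1), (hN.inv x (hv.1 hx)).2.1]
      · rw [if_neg (fun h2 => disjoint_left.1 hb.dis h2 h1),
          if_pos ((mem_union.1 hσx).resolve_right (hb.tt x h1))]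
    rw [this]
  -- Y in terms of F x = π x
  have hYS : ∀ x ∈ S, σ x ∈ X → Y x = 2 * (if F x = π x then 1 else 0) - 1 := by
    intro x hx _
    simp only [hY, if_pos hx]; split_ifs <;> ring
  have hYT : ∀ x ∈ T, σ x ∈ X → Y x = - (2 * (if F x = π x then 1 else 0) - 1) := by
    intro x hx hσx
    have hσS : σ x ∈ S := (mem_union.1 hσx).resolve_right (hb.tt x hx)
    have hne := hb.pne hσS hx
    have hxX : x ∈ X := mem_union_right _ hx
    simp only [hY, if_neg (fun h2 => disjoint_left.1 hb.dis h2 hx)]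
    rcases (F1 x hxX hσx).2 with h1 | h1
    · rw [h1, if_neg hne.symm]; simp
    · rw [h1, if_neg hne]; simp
  refine ⟨v, fun x => if x ∈ K' then τ x else Y x * h x, ?_, ?_, ?_⟩
  · intro x hx
    dsimp only
    split_ifs with h1
    · exact t1 x h1
    · exact pm_mul (hYpm x) (hN.pm x hx)
  · intro x hx
    dsimp only
    by_cases h1 : x ∈ K'
    · rw [if_pos h1, if_pos (hσK' x h1)]; exact t2 x h1
    · obtain ⟨h2, h3⟩ := hintK x hx h1
      rw [if_neg h1, if_neg (hKint _ h3 (by rw [(hN.inv x hx).2.1]; exact h2)), hYσ x h2 h3,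
        hN.hs x hx]
  · intro w
    by_cases hwU : ∃ x ∈ U, π x = w
    · obtain ⟨x, hxU, hxw⟩ := hwU
      have hwz : w ≠ z := fun h1 => hUz x hxU (hxw.trans h1)
      rw [← t3 w]
      unfold net
      rw [fibw w hwz]
      rcases hUv.filter_eq w with h1 | h1
      · rw [← h1]
        apply sum_congr rfl
        intro y hy
        have hyU := (mem_filter.1 hy).1
        show (if y ∈ K' then τ y else Y y * h y) * h y = b y
        rw [if_pos (mem_union_left _ hyU)]
        exact hτh y hyU
      · exact absurd hxw (h1 x hxU)
    · push Not at hwU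
      have hwv : w ≠ v := by
        intro hwv
        by_cases hwz : w = z
        · exact hzv (hwz ▸ hwv)
        · have := t3 w
          rw [if_pos hwv] at this
          unfold net at this
          rw [fibw w hwz, filter_false_of_mem hwU] at this
          simp at this
      rw [if_neg hwv]
      have hfib : ({x ∈ K | π x = w} : Finset D) = {x ∈ X | π x = w} := by
        ext x
        simp only [mem_filter]
        refine ⟨fun h1 => ⟨?_, h1.2⟩, fun h1 => ⟨hv.1 h1.1, h1.2⟩⟩
        by_contra h2
        exact hwU x (mem_sdiff.2 ⟨h1.1, h2⟩) h1.2
      by_cases hwX : ∃ x ∈ X, π x = w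
      · have hwim : w ∈ X.image π := by
          obtain ⟨x, hx, hxw⟩ := hwX; exact mem_image.2 ⟨x, hx, hxw⟩
        have hF2 := F2 w hwim
        -- sign of the side
        obtain ⟨c, hcs⟩ : ∃ c : ℤ, (∀ x ∈ X, π x = w → σ x ∈ X →
            Y x = c * (2 * (if F x = π x then 1 else 0) - 1)) ∧
            ∀ x ∈ X, π x = w → h x = c * a' x := by
          obtain ⟨x, hx, hxw⟩ := hwX
          rcases mem_union.1 hx with h1 | h1
          · refine ⟨1, ?_, ?_⟩
            · intro y hy hyw hσy
              have hyS := hb.vs.2 x h1 y (hv.1 hy) (hyw.trans hxw.symm)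
              rw [hYS y hyS hσy]; ring
            · intro y hy hyw
              have hyS := hb.vs.2 x h1 y (hv.1 hy) (hyw.trans hxw.symm)
              simp only [ha', if_neg (disjoint_left.1 hb.dis hyS)]; ring
          · refine ⟨-1, ?_, ?_⟩
            · intro y hy hyw hσy
              have hyT := hb.vt.2 x h1 y (hv.1 hy) (hyw.trans hxw.symm)
              rw [hYT y hyT hσy]; ring
            · intro y hy hyw
              have hyT := hb.vt.2 x h1 y (hv.1 hy) (hyw.trans hxw.symm)
              simp only [ha', if_pos hyT]; ring
        unfold net
        rw [hfib, ← sum_filter_add_sum_filter_not _ (fun x => σ x ∈ X)]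
        have s1 : ∑ x ∈ ({x ∈ ({x ∈ X | π x = w} : Finset D) | σ x ∈ X} : Finset D),
            (if x ∈ K' then τ x else Y x * h x) * h x =
            c * (2 * (#{x ∈ X | π x = w ∧ σ x ∈ X ∧ F x = w} : ℤ) -
              #{x ∈ ({x ∈ X | π x = w} : Finset D) | σ x ∈ X}) := by
          have : ({x ∈ X | π x = w ∧ σ x ∈ X ∧ F x = w} : Finset D) =
              {x ∈ ({x ∈ ({x ∈ X | π x = w} : Finset D) | σ x ∈ X} : Finset D) | F x = π x} := by
            ext x
            simp only [mem_filter]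
            constructor
            · rintro ⟨h1, h2, h3, h4⟩; exact ⟨⟨⟨h1, h2⟩, h3⟩, h4.trans h2.symm⟩
            · rintro ⟨⟨⟨h1, h2⟩, h3⟩, h4⟩; exact ⟨h1, h2, h3, h4.trans h2⟩
          rw [this, card_filter, card_eq_sum_ones]
          push_cast
          rw [mul_sum, ← sum_sub_distrib, mul_sum]
          apply sum_congr rfl
          intro x hx
          simp only [mem_filter] at hx
          have hxK := hKint x hx.1.1 hx.2
          have hh := pm_sq (hN.pm x (hv.1 hx.1.1))
          rw [if_neg hxK, mul_assoc, hh, hcs.1 x hx.1.1 hx.1.2 hx.2]; ring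
        have s2 : ∑ x ∈ ({x ∈ ({x ∈ X | π x = w} : Finset D) | ¬ σ x ∈ X} : Finset D),
            (if x ∈ K' then τ x else Y x * h x) * h x =
            c * (2 * (#{x ∈ O | π x = w} : ℤ) -
              #{x ∈ ({x ∈ X | π x = w} : Finset D) | ¬ σ x ∈ X}) := by
          have : ({x ∈ ({x ∈ X | π x = w} : Finset D) | ¬ σ x ∈ X} : Finset D) =
              {x ∈ Bd | π x = w} := by
            ext x; simp only [hBd, mem_filter]; tauto
          rw [this, ← hbsum w, mul_sum]
          apply sum_congr rfl
          intro x hx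
          rw [mem_filter] at hx
          have hxX := hBdX hx.1
          rw [if_pos (mem_union_right _ hx.1), hcs.2 x hxX hx.2]
          simp only [hbdef]; ring
        have s3 := card_filter_add_card_filter_not (s := {x ∈ X | π x = w}) (fun x => σ x ∈ X)
        rw [hfib] at hF2
        rw [s1, s2, ← mul_add]
        have : (2 * (#{x ∈ X | π x = w ∧ σ x ∈ X ∧ F x = w} : ℤ) -
              #{x ∈ ({x ∈ X | π x = w} : Finset D) | σ x ∈ X}) + (2 * (#{x ∈ O | π x = w} : ℤ) -
              #{x ∈ ({x ∈ X | π x = w} : Finset D) | ¬ σ x ∈ X}) = 0 := by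
          omega
        rw [this, mul_zero]
      · push Not at hwX
        unfold net
        rw [hfib, filter_false_of_mem hwX, sum_empty]

end SGF

open Finset
namespace SGF
theorem tutte_if {A : Type} [DecidableEq A] (Z : Finset A) (R : A → A → Prop)
    (hs : ∀ x y, R x y → R y x) (hi : ∀ x, ¬ R x x) (he : Even Z.card) :
    (∃ m : A → A, ∀ z ∈ Z, m z ∈ Z ∧ m (m z) = z ∧ R z (m z)) ∨
    ∃ (C : Type) (_ : DecidableEq C) (u : Finset A) (κ : A → C) (O : Finset C), u ⊆ Z ∧
      (∀ x ∈ Z, ∀ y ∈ Z, x ∉ u → y ∉ u → R x y → κ x = κ y) ∧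
      (∀ i ∈ O, Odd #{x ∈ Z | x ∉ u ∧ κ x = i}) ∧ u.card + 2 ≤ O.card := by
  classical
  let G : SimpleGraph {z // z ∈ Z} :=
    { Adj := fun x y => R x.1 y.1
      symm := ⟨fun x y h => hs _ _ h⟩
      loopless := ⟨fun x h => hi _ h⟩ }
  by_cases hM : ∃ M : G.Subgraph, M.IsPerfectMatching
  · left
    obtain ⟨M, hM⟩ := hM
    rw [SimpleGraph.Subgraph.isPerfectMatching_iff] at hM
    choose f hf hfu using hM
    refine ⟨fun z => if h : z ∈ Z then (f ⟨z, h⟩).1 else z, ?_⟩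
    intro z hz
    have h1 : f (f ⟨z, hz⟩) = ⟨z, hz⟩ := (hfu (f ⟨z, hz⟩) ⟨z, hz⟩ (hf ⟨z, hz⟩).symm).symm
    have h2 : R z (f ⟨z, hz⟩).1 := (hf ⟨z, hz⟩).adj_sub
    simp only [dif_pos hz, dif_pos (f ⟨z, hz⟩).2]
    refine ⟨(f ⟨z, hz⟩).2, ?_, h2⟩
    simp [h1]
  · right
    rw [SimpleGraph.tutte] at hM
    push Not at hM
    obtain ⟨u, hu⟩ := hM
    unfold SimpleGraph.IsTutteViolator at hu
    set H := ((⊤ : G.Subgraph).deleteVerts u) with hH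
    have hverts : ∀ x, x ∈ H.verts ↔ x ∉ u := by
      intro x; simp [hH]
    have hpar := SimpleGraph.odd_ncard_oddComponents (G := H.coe)
    have hcard : Nat.card H.verts + u.ncard = Z.card := by
      have h1 : H.verts = uᶜ := by ext x; simp [hverts]
      rw [h1, Nat.card_coe_set_eq, add_comm, Set.ncard_add_ncard_compl]
      simp
    let κ : A → Option H.coe.ConnectedComponent := fun x =>
      if h : ∃ hz : x ∈ Z, (⟨x, hz⟩ : {z // z ∈ Z}) ∈ H.verts then
        some (H.coe.connectedComponentMk ⟨⟨x, h.1⟩, h.2⟩) else none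
    have hκ : ∀ x (hz : x ∈ Z) (hv : (⟨x, hz⟩ : {z // z ∈ Z}) ∈ H.verts),
        κ x = some (H.coe.connectedComponentMk ⟨⟨x, hz⟩, hv⟩) := by
      intro x hz hv
      exact dif_pos ⟨hz, hv⟩
    let u' : Finset A := Z.filter (fun x => ∃ hz : x ∈ Z, (⟨x, hz⟩ : {z // z ∈ Z}) ∈ u)
    have hmu : ∀ x (hz : x ∈ Z), x ∉ u' ↔ (⟨x, hz⟩ : {z // z ∈ Z}) ∈ H.verts := by
      intro x hz
      simp [u', hverts, hz]
    have hcu : u'.card = u.ncard := by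
      have : (u' : Set A) = (fun z : {z // z ∈ Z} => z.1) '' u := by
        ext x
        simp [u']
      rw [← Set.ncard_coe_finset, this, Set.ncard_image_of_injective _ Subtype.val_injective]
    have hfin : (H.coe.oddComponents).Finite := Set.toFinite _
    refine ⟨Option H.coe.ConnectedComponent, inferInstance, u', κ, hfin.toFinset.image some,
      filter_subset _ _, ?_, ?_, ?_⟩
    · intro x hx y hy hxu hyu hR
      rw [hmu x hx] at hxu
      rw [hmu y hy] at hyu
      rw [hκ x hx hxu, hκ y hy hyu]
      congr 1
      apply SimpleGraph.ConnectedComponent.sound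
      apply SimpleGraph.Adj.reachable
      rw [hverts] at hxu hyu
      simp [hH, hxu, hyu]
      exact hR
    · intro i hi'
      rw [mem_image] at hi'
      obtain ⟨c, hc, rfl⟩ := hi'
      rw [Set.Finite.mem_toFinset] at hc
      have hc : Odd c.supp.ncard := hc
      have : (({x ∈ Z | x ∉ u' ∧ κ x = some c} : Finset A) : Set A) =
          (fun z : H.verts => z.1.1) '' c.supp := by
        ext x
        simp only [coe_filter, Set.mem_ofPred_eq, Set.mem_image, SimpleGraph.ConnectedComponent.mem_supp_iff]
        constructor
        · rintro ⟨hx, hxu, hk⟩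
          rw [hmu x hx] at hxu
          rw [hκ x hx hxu] at hk
          exact ⟨⟨⟨x, hx⟩, hxu⟩, Option.some.inj hk, rfl⟩
        · rintro ⟨z, hz, rfl⟩
          refine ⟨z.1.2, (hmu _ z.1.2).2 z.2, ?_⟩
          rw [hκ z.1.1 z.1.2 z.2, ← hz]
      rw [← Set.ncard_coe_finset, this, Set.ncard_image_of_injective _ ?_]
      · exact hc
      · intro a b hab
        exact Subtype.ext (Subtype.ext hab)
    · rw [card_image_of_injective _ (Option.some_injective _), hcu,
        ← Set.ncard_eq_toFinset_card _ hfin]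
      rw [Nat.odd_iff, Nat.odd_iff] at hpar
      rw [Nat.even_iff] at he
      omega
end SGF

open Finset
namespace SGF
variable {D V : Type} [DecidableEq D] [DecidableEq V]
set_option linter.unusedSectionVars false

def gcore (W : Finset V) (c : V → ℕ) : Finset (Σ _ : V, ℕ) := W.sigma fun w => range (c w)

theorem mem_gcore {W : Finset V} {c : V → ℕ} {w : V} {j : ℕ} :
    (⟨w, j⟩ : Σ _ : V, ℕ) ∈ gcore W c ↔ w ∈ W ∧ j < c w := by
  simp [gcore]

theorem card_gcore {W : Finset V} {c : V → ℕ} : (gcore W c).card = ∑ w ∈ W, c w := by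
  simp [gcore]

def gadj (K : Finset D) (σ : D → D) (π : D → V) :
    D ⊕ (Σ _ : V, ℕ) → D ⊕ (Σ _ : V, ℕ) → Prop
  | .inl p, .inl q => p ∈ K ∧ q ∈ K ∧ σ p = q
  | .inl p, .inr z => π p = z.1
  | .inr z, .inl p => π p = z.1
  | .inr _, .inr _ => False

set_option maxHeartbeats 1000000 in
theorem gadget_viol {K : Finset D} {σ : D → D} {π : D → V} (hK : Inv K σ) {c : V → ℕ}
    (hcut : Cut4 K σ π) {C : Type} [DecidableEq C]
    {u : Finset (D ⊕ (Σ _ : V, ℕ))} {κ : D ⊕ (Σ _ : V, ℕ) → C} {O : Finset C}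
    (_huZ : u ⊆ K.disjSum (gcore (K.image π) c))
    (hκ : ∀ x ∈ K.disjSum (gcore (K.image π) c), ∀ y ∈ K.disjSum (gcore (K.image π) c),
      x ∉ u → y ∉ u → gadj K σ π x y → κ x = κ y)
    (hO : ∀ i ∈ O, Odd #{x ∈ K.disjSum (gcore (K.image π) c) | x ∉ u ∧ κ x = i})
    (hcard : u.card + 2 ≤ O.card) :
    ∃ S T, VC K π S ∧ VC K π T ∧ Disjoint S T ∧
      8 + 4 * ∑ w ∈ T.image π, c w + 4 * S.card ≤
        4 * ∑ w ∈ S.image π, c w + 4 * #{x ∈ T | σ x ∈ S} +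
          #{x ∈ K \ (S ∪ T) | σ x ∈ S ∪ T} := by
  classical
  set uL := u.toLeft with huL
  set uR := u.toRight with huR
  have hcu : uL.card + uR.card = u.card := card_toLeft_add_card_toRight
  set S : Finset D := {p ∈ K | ∀ q ∈ K, π q = π p → q ∈ uL} with hS
  set T : Finset D := {p ∈ K | p ∉ S ∧ ∀ j < c (π p), (⟨π p, j⟩ : Σ _ : V, ℕ) ∈ uR} with hT
  set U := K \ (S ∪ T) with hU
  have hSv : VC K π S := by
    refine ⟨filter_subset _ _, ?_⟩
    intro x hx y hy hxy
    rw [hS, mem_filter] at hx ⊢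
    exact ⟨hy, fun q hq h => hx.2 q hq (h.trans hxy)⟩
  have hTv : VC K π T := by
    refine ⟨filter_subset _ _, ?_⟩
    intro x hx y hy hxy
    rw [hT, mem_filter] at hx ⊢
    refine ⟨hy, fun h => hx.2.1 (hSv.2 y h x hx.1 hxy.symm), ?_⟩
    rw [hxy]; exact hx.2.2
  have hdis : Disjoint S T := by
    rw [disjoint_left]; intro x h1 h2
    exact (mem_filter.1 h2).2.1 h1
  have hUv : VC K π U := (hSv.union hTv).compl
  have hUK : U ⊆ K := hUv.1
  have htri : ∀ x ∈ K, x ∈ S ∨ x ∈ T ∨ x ∈ U := by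
    intro x hx
    by_cases h1 : x ∈ S
    · exact Or.inl h1
    by_cases h2 : x ∈ T
    · exact Or.inr (Or.inl h2)
    exact Or.inr (Or.inr (by simp [hU, hx, h1, h2]))
  have hUS : ∀ x ∈ U, x ∉ S := fun x hx h => by simp [hU, h] at hx
  have hUT : ∀ x ∈ U, x ∉ T := fun x hx h => by simp [hU, h] at hx
  have hSu : ∀ x ∈ S, x ∈ uL := fun x hx => (mem_filter.1 hx).2 x (hSv.1 hx) rfl
  have hZl : ∀ x, Sum.inl x ∈ K.disjSum (gcore (K.image π) c) ↔ x ∈ K := by simp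
  have hZr : ∀ w j, Sum.inr ⟨w, j⟩ ∈ K.disjSum (gcore (K.image π) c) ↔
      w ∈ K.image π ∧ j < c w := by
    intro w j
    rw [inr_mem_disjSum, mem_gcore]
  -- labels
  have hlab : ∀ x, ∃ i, x ∈ U → (∀ y ∈ K, π y = π x → y ∉ uL → κ (.inl y) = i) ∧
      ∃ j, j < c (π x) ∧ ∀ j < c (π x), (⟨π x, j⟩ : Σ _ : V, ℕ) ∉ uR → κ (.inr ⟨π x, j⟩) = i := by
    intro x
    by_cases hx : x ∈ U
    swap
    · exact ⟨κ (.inl x), fun h => absurd h hx⟩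
    have hxK := hUK hx
    have h1 : ∃ y ∈ K, π y = π x ∧ y ∉ uL := by
      by_contra hcon
      push Not at hcon
      exact hUS x hx (mem_filter.2 ⟨hxK, hcon⟩)
    have h2 : ∃ j < c (π x), (⟨π x, j⟩ : Σ _ : V, ℕ) ∉ uR := by
      by_contra hcon
      push Not at hcon
      exact hUT x hx (mem_filter.2 ⟨hxK, hUS x hx, hcon⟩)
    obtain ⟨y, hy, hyx, hyu⟩ := h1
    obtain ⟨j, hj, hju⟩ := h2
    have key : ∀ y ∈ K, π y = π x → y ∉ uL → ∀ j < c (π x), (⟨π x, j⟩ : Σ _ : V, ℕ) ∉ uR →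
        κ (.inl y) = κ (.inr ⟨π x, j⟩) := by
      intro y hy hyx hyu j hj hju
      apply hκ
      · rw [hZl]; exact hy
      · rw [hZr]; exact ⟨mem_image_of_mem _ hxK, hj⟩
      · simpa [huL] using hyu
      · simpa [huR] using hju
      · exact hyx
    refine ⟨κ (.inl y), fun _ => ⟨?_, j, hj, ?_⟩⟩
    · intro z hz hzx hzu
      rw [key z hz hzx hzu j hj hju, key y hy hyx hyu j hj hju]
    · intro i hi hiu
      rw [key y hy hyx hyu i hi hiu]
  choose ℓ hℓ using hlab
  have hℓeq : ∀ x ∈ U, ∀ y ∈ U, π y = π x → ℓ y = ℓ x := by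
    intro x hx y hy hyx
    have h1 : ∃ z ∈ K, π z = π x ∧ z ∉ uL := by
      by_contra hcon
      push Not at hcon
      exact hUS x hx (mem_filter.2 ⟨hUK hx, hcon⟩)
    obtain ⟨z, hz, hzx, hzu⟩ := h1
    rw [← (hℓ x hx).1 z hz hzx hzu, ← (hℓ y hy).1 z hz (hzx.trans hyx.symm) hzu]
  set OU : Finset C := {i ∈ O | ∃ x ∈ U, ℓ x = i} with hOU
  set t1 := gcore (S.image π) c \ uR with ht1
  set t2 : Finset D := {p ∈ T | p ∉ uL ∧ σ p ∈ uL} with ht2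
  -- odd classes
  have hodd : O.card ≤ OU.card + (t1.card + t2.card) := by
    have h1 : O \ OU ⊆ (t2.disjSum t1).image κ := by
      intro i hi
      rw [mem_sdiff] at hi
      obtain ⟨hiO, hiU⟩ := hi
      have hiU : ∀ x ∈ U, ℓ x ≠ i := fun x hx h => hiU (mem_filter.2 ⟨hiO, x, hx, h⟩)
      by_contra hcon
      have hcon : ∀ z ∈ t2.disjSum t1, κ z ≠ i := fun z hz h => hcon (mem_image.2 ⟨z, hz, h⟩)
      have hev := hO i hiO
      rw [← Nat.not_even_iff_odd] at hev
      apply hev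
      apply even_card_inv (σ := Sum.map σ id)
      rintro (p | ⟨w, j⟩) hp
      · simp only [mem_filter, hZl] at hp ⊢
        obtain ⟨hpK, hpu, hpi⟩ := hp
        have hpu' : p ∉ uL := by simpa [huL] using hpu
        have hpT : p ∈ T := by
          rcases htri p hpK with h | h | h
          · exact absurd (hSu p h) hpu'
          · exact h
          · exact absurd (((hℓ p h).1 p hpK rfl hpu').symm.trans hpi) (hiU p h)
        have hσu : σ p ∉ uL := by
          intro h
          exact hcon (.inl p) (by rw [inl_mem_disjSum]; exact mem_filter.2 ⟨hpT, hpu', h⟩) hpi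
        have hσu' : Sum.inl (σ p) ∉ u := by simpa [huL] using hσu
        obtain ⟨k1, k2, k3⟩ := hK p hpK
        refine ⟨⟨(hZl _).2 k1, hσu', ?_⟩, ?_, ?_⟩
        · show κ (.inl (σ p)) = i
          rw [← hpi]
          exact (hκ _ ((hZl p).2 hpK) _ ((hZl _).2 k1) hpu hσu' ⟨hpK, k1, rfl⟩).symm
        · simp [k2]
        · simpa using k3
      · exfalso
        simp only [mem_filter, hZr] at hp
        obtain ⟨⟨hw, hj⟩, hpu, hpi⟩ := hp
        obtain ⟨x, hx, rfl⟩ := mem_image.1 hw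
        have hpu' : (⟨π x, j⟩ : Σ _ : V, ℕ) ∉ uR := by simpa [huR] using hpu
        rcases htri x hx with h | h | h
        · exact hcon (.inr ⟨π x, j⟩) (by
            rw [inr_mem_disjSum, ht1, mem_sdiff, mem_gcore]
            exact ⟨⟨mem_image_of_mem _ h, hj⟩, hpu'⟩) hpi
        · exact hpu' ((mem_filter.1 h).2.2 j hj)
        · obtain ⟨_, _, _, h3⟩ := hℓ x h
          exact hiU x h ((h3 j hj hpu').symm.trans hpi)
    have h2 := card_le_card h1
    have h3 := h2.trans card_image_le
    rw [card_disjSum] at h3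
    have h4 := card_sdiff_add_card_eq_card (filter_subset (fun i => ∃ x ∈ U, ℓ x = i) O)
    change #(O \ OU) + #OU = #O at h4
    omega
  -- counts
  have hcL : S.card + #{x ∈ T | x ∈ uL} + #{x ∈ U | x ∈ uL} ≤ uL.card := by
    rw [← card_union_of_disjoint, ← card_union_of_disjoint]
    · apply card_le_card
      intro x hx
      simp only [mem_union, mem_filter] at hx
      rcases hx with (hx | hx) | hx
      · exact hSu x hx
      · exact hx.2
      · exact hx.2
    · rw [disjoint_left]
      intro x hx hx'
      simp only [mem_union, mem_filter] at hx hx'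
      rcases hx with hx | hx
      · exact hUS x hx'.1 hx
      · exact hUT x hx'.1 hx.1
    · exact hdis.mono_right (filter_subset _ _)
  have hcR : (gcore (S.image π) c).card + (gcore (T.image π) c).card ≤ uR.card + t1.card := by
    have h1 : #(gcore (S.image π) c ∩ uR) + #t1 = #(gcore (S.image π) c) := by
      rw [ht1]; exact card_inter_add_card_sdiff _ _
    have h2 : #(gcore (S.image π) c ∩ uR) + #(gcore (T.image π) c) ≤ #uR := by
      rw [← card_union_of_disjoint]
      · apply card_le_card
        apply union_subset inter_subset_right
        rintro ⟨w, j⟩ h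
        rw [mem_gcore] at h
        obtain ⟨⟩ := h
        rename_i hw hj
        obtain ⟨x, hx, rfl⟩ := mem_image.1 hw
        exact (mem_filter.1 hx).2.2 j hj
      · rw [disjoint_left]
        rintro ⟨w, j⟩ h h'
        rw [mem_inter, mem_gcore] at h
        rw [mem_gcore] at h'
        obtain ⟨x, hx, hxw⟩ := mem_image.1 h.1.1
        obtain ⟨y, hy, hyw⟩ := mem_image.1 h'.1
        exact disjoint_left.1 hdis (hSv.2 x hx y (hTv.1 hy) (hyw.trans hxw.symm)) hy
    omega
  have ht1c : t1.card ≤ (gcore (S.image π) c).card := card_le_card sdiff_subset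
  have ht2c : t2.card ≤ #{x ∈ T | σ x ∈ S} + #{x ∈ T | x ∈ uL} +
      #{x ∈ U | x ∈ uL ∧ σ x ∈ T} := by
    have h1 : t2 ⊆ {x ∈ T | σ x ∈ S} ∪ ({x ∈ T | x ∈ uL} : Finset D).image σ ∪
        ({x ∈ U | x ∈ uL ∧ σ x ∈ T} : Finset D).image σ := by
      intro p hp
      rw [ht2, mem_filter] at hp
      obtain ⟨hpT, hpu, hpσ⟩ := hp
      obtain ⟨k1, k2, k3⟩ := hK p (hTv.1 hpT)
      simp only [mem_union, mem_filter, mem_image]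
      rcases htri _ k1 with h | h | h
      · exact Or.inl (Or.inl ⟨hpT, h⟩)
      · exact Or.inl (Or.inr ⟨σ p, ⟨h, hpσ⟩, k2⟩)
      · exact Or.inr ⟨σ p, ⟨h, hpσ, by rwa [k2]⟩, k2⟩
    refine (card_le_card h1).trans ((card_union_le _ _).trans ?_)
    refine Nat.add_le_add ((card_union_le _ _).trans ?_) card_image_le
    exact Nat.add_le_add le_rfl card_image_le
  have hUc : #{x ∈ U | x ∈ uL ∧ σ x ∈ T} + #{x ∈ U | x ∈ uL ∧ σ x ∈ U} ≤ #{x ∈ U | x ∈ uL} := by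
    rw [← card_union_of_disjoint]
    · apply card_le_card
      intro x hx
      simp only [mem_union, mem_filter] at hx ⊢
      tauto
    · rw [disjoint_left]
      intro x hx hx'
      rw [mem_filter] at hx hx'
      exact hUT _ hx'.2.2 hx.2.2
  have hmain : 2 + S.card + ∑ w ∈ T.image π, c w + #{x ∈ U | x ∈ uL ∧ σ x ∈ U} ≤
      OU.card + ∑ w ∈ S.image π, c w + #{x ∈ T | σ x ∈ S} := by
    rw [card_gcore, card_gcore] at hcR
    rw [card_gcore] at ht1c
    omega
  -- cuts
  have hWv : ∀ i, VC K π {x ∈ U | ℓ x = i} := by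
    intro i
    refine ⟨(filter_subset _ _).trans hUK, ?_⟩
    intro x hx y hy hyx
    rw [mem_filter] at hx ⊢
    have hyU := hUv.2 x hx.1 y hy hyx
    exact ⟨hyU, (hℓeq x hx.1 y hyU hyx).trans hx.2⟩
  by_cases hall : ∃ i ∈ OU, ({x ∈ U | ℓ x = i} : Finset D) = K
  · exfalso
    obtain ⟨i, hi, hiK⟩ := hall
    have hUi : ∀ x ∈ K, x ∈ U ∧ ℓ x = i := by
      intro x hx
      rw [← hiK, mem_filter] at hx
      exact hx
    have hS0 : S = ∅ := by
      rw [eq_empty_iff_forall_notMem]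
      intro x hx
      exact hUS x (hUi x (hSv.1 hx)).1 hx
    have hT0 : T = ∅ := by
      rw [eq_empty_iff_forall_notMem]
      intro x hx
      exact hUT x (hUi x (hTv.1 hx)).1 hx
    have hk : OU.card ≤ 1 := by
      rw [card_le_one]
      have : ∀ j ∈ OU, j = i := by
        intro j hj
        obtain ⟨x, hx, hxj⟩ := (mem_filter.1 hj).2
        rw [← hxj]; exact (hUi x (hUK hx)).2
      intro a ha b hb
      rw [this a ha, this b hb]
    rw [hS0, hT0] at hmain
    simp at hmain
    omega
  · push Not at hall
    have hb : ∀ i ∈ OU, 4 ≤ #{x ∈ ({x ∈ U | ℓ x = i} : Finset D) | σ x ∉ ({x ∈ U | ℓ x = i} : Finset D)} := by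
      intro i hi
      apply hcut _ (hWv i) _ (hall i hi)
      obtain ⟨x, hx, hxj⟩ := (mem_filter.1 hi).2
      exact ne_empty_of_mem (mem_filter.2 ⟨hx, hxj⟩)
    have hk : 4 * OU.card ≤ #{x ∈ U | σ x ∈ S ∪ T} + 2 * #{x ∈ U | x ∈ uL ∧ σ x ∈ U} := by
      calc 4 * OU.card = ∑ i ∈ OU, 4 := by simp [mul_comm]
        _ ≤ ∑ i ∈ OU, #{x ∈ ({x ∈ U | ℓ x = i} : Finset D) | σ x ∉ ({x ∈ U | ℓ x = i} : Finset D)} :=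
          sum_le_sum hb
        _ = #(OU.biUnion fun i => {x ∈ ({x ∈ U | ℓ x = i} : Finset D) | σ x ∉ ({x ∈ U | ℓ x = i} : Finset D)}) := by
          rw [card_biUnion]
          intro i _ j _ hij
          rw [Function.onFun, disjoint_left]
          intro x hx hx'
          simp only [mem_filter] at hx hx'
          exact hij (hx.1.2.symm.trans hx'.1.2)
        _ ≤ #({x ∈ U | σ x ∈ S ∪ T} ∪ ({x ∈ U | x ∈ uL ∧ σ x ∈ U} ∪
            ({x ∈ U | x ∈ uL ∧ σ x ∈ U} : Finset D).image σ)) := by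
          apply card_le_card
          intro x hx
          rw [mem_biUnion] at hx
          obtain ⟨i, hi, hx⟩ := hx
          simp only [mem_filter] at hx
          obtain ⟨⟨hxU, hxi⟩, hσ⟩ := hx
          obtain ⟨k1, k2, k3⟩ := hK x (hUK hxU)
          simp only [mem_union, mem_filter, mem_image]
          rcases htri _ k1 with h | h | h
          · exact Or.inl ⟨hxU, Or.inl h⟩
          · exact Or.inl ⟨hxU, Or.inr h⟩
          · right
            by_cases hxu : x ∈ uL
            · exact Or.inl ⟨hxU, hxu, h⟩
            · right
              refine ⟨σ x, ⟨h, ?_, by rwa [k2]⟩, k2⟩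
              by_contra hσu
              apply hσ
              refine ⟨h, ?_⟩
              rw [← hxi, ← (hℓ x hxU).1 x (hUK hxU) rfl hxu, ← (hℓ _ h).1 (σ x) k1 rfl hσu]
              refine (hκ _ ((hZl x).2 (hUK hxU)) _ ((hZl _).2 k1) ?_ ?_ ⟨hUK hxU, k1, rfl⟩).symm
              · simpa [huL] using hxu
              · simpa [huL] using hσu
        _ ≤ _ := by
          refine (card_union_le _ _).trans (Nat.add_le_add le_rfl ((card_union_le _ _).trans ?_))
          have := card_image_le (s := ({x ∈ U | x ∈ uL ∧ σ x ∈ U} : Finset D)) (f := σ)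
          omega
    refine ⟨S, T, hSv, hTv, hdis, ?_⟩
    have e : #{x ∈ K \ (S ∪ T) | σ x ∈ S ∪ T} = #{x ∈ U | σ x ∈ S ∪ T} := by
      rw [hU]
    rw [e]
    omega
end SGF

open Finset
namespace SGF
variable {D V : Type} [DecidableEq D] [DecidableEq V]
set_option linter.unusedSectionVars false

theorem gadget {K : Finset D} {σ : D → D} {π : D → V} (hK : Inv K σ) {c : V → ℕ}
    (hcut : Cut4 K σ π) (he : Even (K.card + ∑ w ∈ K.image π, c w)) :
    (∃ y : D → ℤ, PM K y ∧ SInv K σ y ∧ ∀ w ∈ K.image π, #{p ∈ K | π p = w ∧ y p = -1} = c w) ∨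
    ∃ S T, VC K π S ∧ VC K π T ∧ Disjoint S T ∧
      8 + 4 * ∑ w ∈ T.image π, c w + 4 * S.card ≤
        4 * ∑ w ∈ S.image π, c w + 4 * #{x ∈ T | σ x ∈ S} +
          #{x ∈ K \ (S ∪ T) | σ x ∈ S ∪ T} := by
  classical
  have hs : ∀ x y, gadj K σ π x y → gadj K σ π y x := by
    rintro (x | x) (y | y) h
    · obtain ⟨h1, h2, h3⟩ := h
      refine ⟨h2, h1, ?_⟩
      rw [← h3]; exact (hK x h1).2.1
    · exact h
    · exact h
    · exact h
  have hi : ∀ x, ¬ gadj K σ π x x := by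
    rintro (x | x) h
    · exact (hK x h.1).2.2 h.2.2
    · exact h
  have hcard : Even (K.disjSum (gcore (K.image π) c)).card := by
    rw [card_disjSum, card_gcore]; exact he
  rcases tutte_if _ _ hs hi hcard with ⟨m, hm⟩ | ⟨C, _, u, κ, O, h1, h2, h3, h4⟩
  swap
  · exact Or.inr (gadget_viol hK hcut h1 h2 h3 h4)
  left
  have hZl : ∀ x, Sum.inl x ∈ K.disjSum (gcore (K.image π) c) ↔ x ∈ K := by simp
  have hZr : ∀ w j, Sum.inr ⟨w, j⟩ ∈ K.disjSum (gcore (K.image π) c) ↔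
      w ∈ K.image π ∧ j < c w := by
    intro w j
    rw [inr_mem_disjSum, mem_gcore]
  have hin : ∀ p ∈ K, ∀ q, m (.inl p) = .inl q → q = σ p ∧ m (.inl (σ p)) = .inl p := by
    intro p hp q hq
    obtain ⟨k1, k2, k3⟩ := hm _ ((hZl p).2 hp)
    rw [hq] at k1 k2 k3
    obtain ⟨_, _, k4⟩ := k3
    rw [k4]; exact ⟨rfl, k2⟩
  refine ⟨fun p => if m (.inl p) = .inl (σ p) then 1 else -1, ?_, ?_, ?_⟩
  · intro p _
    dsimp only
    by_cases hh : m (.inl p) = .inl (σ p)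
    · exact Or.inl (if_pos hh)
    · exact Or.inr (if_neg hh)
  · intro p hp
    have hσ := hK p hp
    have : m (.inl (σ p)) = .inl (σ (σ p)) ↔ m (.inl p) = .inl (σ p) := by
      constructor
      · intro h
        have := (hin _ hσ.1 _ h).2
        rwa [hσ.2.1] at this
      · intro h
        rw [hσ.2.1]
        exact (hin _ hp _ h).2
    simp only [this]
  · intro w hw
    have e : (({p ∈ K | π p = w ∧ (if m (.inl p) = .inl (σ p) then (1 : ℤ) else -1) = -1} : Finset D)).map
        Function.Embedding.inl = ((gcore {w} c).image fun z => m (.inr z)) := by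
      ext x
      simp only [mem_map, mem_filter, mem_image]
      constructor
      · rintro ⟨p, ⟨hp, hpw, hpm⟩, rfl⟩
        have hne : m (.inl p) ≠ .inl (σ p) := by
          intro h; simp [h] at hpm
        obtain ⟨k1, k2, k3⟩ := hm _ ((hZl p).2 hp)
        rcases hmp : m (.inl p) with q | ⟨w', j⟩
        · exact absurd (by rw [hmp, (hin p hp q hmp).1]) hne
        · rw [hmp] at k1 k2 k3
          have k3 : π p = w' := k3
          rw [hZr] at k1
          have : w' = w := k3.symm.trans hpw
          subst this
          exact ⟨⟨w', j⟩, by rw [mem_gcore]; exact ⟨by simp, k1.2⟩, k2⟩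
      · rintro ⟨⟨w', j⟩, hz, rfl⟩
        rw [mem_gcore, mem_singleton] at hz
        obtain ⟨rfl, hj⟩ := hz
        obtain ⟨k1, k2, k3⟩ := hm (.inr ⟨w', j⟩) ((hZr _ _).2 ⟨hw, hj⟩)
        rcases hmp : m (.inr ⟨w', j⟩) with q | z
        · rw [hmp] at k1 k2 k3
          refine ⟨q, ⟨(hZl q).1 k1, k3, ?_⟩, rfl⟩
          rw [k2]; simp
        · rw [hmp] at k3
          exact absurd k3 (by intro h; exact h)
    have := congrArg card e
    rw [card_map, card_image_of_injOn, card_gcore] at this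
    · simpa using this
    · rintro ⟨w1, j⟩ hz ⟨w2, j'⟩ hz' hmm
      rw [mem_coe, mem_gcore, mem_singleton] at hz hz'
      obtain ⟨rfl, hj⟩ := hz
      obtain ⟨rfl, hj'⟩ := hz'
      have k2 := (hm (.inr ⟨w2, j⟩) ((hZr _ _).2 ⟨hw, hj⟩)).2.1
      have k2' := (hm (.inr ⟨w2, j'⟩) ((hZr _ _).2 ⟨hw, hj'⟩)).2.1
      have hmm : m (.inr ⟨w2, j⟩) = m (.inr ⟨w2, j'⟩) := hmm
      rw [hmm, k2'] at k2
      exact (Sum.inr.inj k2).symm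

theorem card_swap {K X Y : Finset D} {σ : D → D} (hK : Inv K σ) (hX : X ⊆ K) (hY : Y ⊆ K) :
    #{x ∈ X | σ x ∈ Y} = #{x ∈ Y | σ x ∈ X} := by
  apply card_bij (fun x _ => σ x)
  · intro x hx
    rw [mem_filter] at hx ⊢
    refine ⟨hx.2, ?_⟩
    rw [(hK x (hX hx.1)).2.1]; exact hx.1
  · intro x hx y hy hxy
    rw [mem_filter] at hx hy
    rw [← (hK x (hX hx.1)).2.1, hxy, (hK y (hX hy.1)).2.1]
  · intro y hy
    rw [mem_filter] at hy
    refine ⟨σ y, ?_, (hK y (hY hy.1)).2.1⟩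
    rw [mem_filter, (hK y (hY hy.1)).2.1]
    exact ⟨hy.2, hy.1⟩

theorem tutteStep {n : ℕ} {K : Finset D} {σ : D → D} {π : D → V} {h : D → ℤ}
    (hN : Nrm K σ π h) (hn : K.card = n) (ih : IHyp D V n) (hc : Conn K σ π)
    (hodd : ¬ (4 : ℤ) ∣ ∑ x ∈ K, h x) (hcut : Cut4 K σ π) : Concl K σ π h := by
  classical
  have hne : K.Nonempty := by
    rw [nonempty_iff_ne_empty]; rintro rfl; simp at hodd
  obtain ⟨p0, hp0⟩ := hne
  have hKv : VC K π K := ⟨Subset.rfl, fun _ _ y hy _ => hy⟩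
  set v := π p0 with hv
  set c : V → ℕ := fun w => #{x ∈ K | π x = w} / 2 + if w = v then 3 else 0 with hcdef
  have hcs : ∀ X, VC K π X → 2 * ∑ w ∈ X.image π, c w = X.card + if p0 ∈ X then 6 else 0 := by
    intro X hX
    have h1 : X.card = ∑ w ∈ X.image π, 2 * (#{x ∈ K | π x = w} / 2) := by
      rw [card_fiber X π (W := X.image π) (fun x hx => mem_image_of_mem _ hx)]
      apply sum_congr rfl
      intro w hw
      obtain ⟨x, hx, rfl⟩ := mem_image.1 hw
      rcases hX.filter_eq (π x) with h1 | h1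
      · rw [h1]
        obtain ⟨k, hk⟩ := hN.even (π x)
        omega
      · exact absurd rfl (h1 x hx)
    have h2 : (∑ w ∈ X.image π, if w = v then 3 else 0) = if p0 ∈ X then 3 else 0 := by
      rw [sum_ite_eq']
      have : v ∈ X.image π ↔ p0 ∈ X := by
        constructor
        · intro hh
          obtain ⟨x, hx, hxv⟩ := mem_image.1 hh
          exact hX.2 x hx p0 hp0 hxv.symm
        · exact fun hh => mem_image_of_mem _ hh
      simp only [this]
    rw [h1, hcdef, sum_add_distrib, h2, mul_add, mul_sum]
    split_ifs <;> simp
  have hK3 := hKv.sum hN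
  obtain ⟨k2, hk2⟩ := hKv.sum_even hN
  have hKmod : K.card % 4 = 2 := by omega
  have hcK := hcs K hKv
  rw [if_pos hp0] at hcK
  have he : Even (K.card + ∑ w ∈ K.image π, c w) := by
    rw [Nat.even_iff]; omega
  rcases gadget hN.inv hcut he with ⟨y, y1, y2, y3⟩ | ⟨S, T, hS, hT, hdis, hineq⟩
  · refine ⟨v, fun x => - (y x * h x), ?_, ?_, ?_⟩
    · intro x hx
      rcases y1 x hx with h1 | h1 <;> rcases hN.pm x hx with h2 | h2 <;> simp [h1, h2]
    · intro x hx
      simp only [y2 x hx, hN.hs x hx]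
    · intro w
      have e1 : net K π (fun x => -(y x * h x) * h x) w = ∑ x ∈ K with π x = w, - y x := by
        unfold net
        apply sum_congr rfl
        intro x hx
        have := (mem_filter.1 hx).1
        rcases hN.pm x this with h2 | h2 <;> simp [h2]
      rw [e1]
      by_cases hw : w ∈ K.image π
      · have e2 : ∑ x ∈ K with π x = w, - y x =
            ∑ x ∈ K with π x = w, ((if y x = -1 then 2 else 0) - 1) := by
          apply sum_congr rfl
          intro x hx
          have := (mem_filter.1 hx).1
          rcases y1 x this with h2 | h2 <;> simp [h2]
        rw [e2, sum_sub_distrib, ← sum_filter, filter_filter]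
        simp only [sum_const, y3 w hw, nsmul_eq_mul, mul_one, hcdef]
        obtain ⟨k, hk⟩ := hN.even w
        rw [hk]
        split_ifs <;> push_cast <;> omega
      · have : w ≠ v := by
          rintro rfl; exact hw (mem_image_of_mem _ hp0)
        rw [if_neg this]
        apply sum_eq_zero
        intro x hx
        rw [mem_filter] at hx
        exact absurd (mem_image.2 ⟨x, hx.1, hx.2⟩) hw
  · set U := K \ (S ∪ T) with hU
    have hUv : VC K π U := (hS.union hT).compl
    have part : ∀ X ⊆ K, X.card = #{x ∈ X | σ x ∈ S} + #{x ∈ X | σ x ∈ T} + #{x ∈ X | σ x ∈ U} := by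
      intro X hX
      rw [← card_union_of_disjoint, ← card_union_of_disjoint, ← filter_or, ← filter_or,
        filter_true_of_mem]
      · intro x hx
        have := (hN.inv x (hX hx)).1
        simp only [hU, mem_sdiff, mem_union]
        tauto
      · rw [disjoint_left]
        intro x hx hx'
        simp only [hU, mem_union, mem_filter, mem_sdiff] at hx hx'
        tauto
      · rw [disjoint_left]
        intro x hx hx'
        rw [mem_filter] at hx hx'
        exact disjoint_left.1 hdis hx.2 hx'.2
    have hdSU : ∀ x, x ∈ S → x ∉ U := fun x hx h => by simp [hU, hx] at h
    have pS := part S hS.1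
    have pT := part T hT.1
    have sw1 := card_swap hN.inv hS.1 hT.1
    have sw2 := card_swap hN.inv hS.1 hUv.1
    have sw3 := card_swap hN.inv hT.1 hUv.1
    have hNU : #{x ∈ U | σ x ∈ S ∪ T} = #{x ∈ U | σ x ∈ S} + #{x ∈ U | σ x ∈ T} := by
      rw [← card_union_of_disjoint, ← filter_or]
      · simp only [mem_union]
      · rw [disjoint_left]
        intro x hx hx'
        rw [mem_filter] at hx hx'
        exact disjoint_left.1 hdis hx.2 hx'.2
    have hNU2 : ({x ∈ U | σ x ∉ U} : Finset D) = {x ∈ U | σ x ∈ S ∪ T} := by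
      apply filter_congr
      intro x hx
      have := (hN.inv x (hUv.1 hx)).1
      simp only [hU, mem_sdiff]
      tauto
    have cS := hcs S hS
    have cT := hcs T hT
    have hp0S : p0 ∈ S := by
      by_contra hcon
      rw [if_neg hcon] at cS
      omega
    rw [if_pos hp0S] at cS
    by_cases hU0 : U = ∅
    · exfalso
      have e1 : #{x ∈ S | σ x ∈ U} = 0 := by rw [hU0]; simp
      have e2 : #{x ∈ T | σ x ∈ U} = 0 := by rw [hU0]; simp
      have hev : ∀ X ⊆ K, Even #{x ∈ X | σ x ∈ X} := by
        intro X hX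
        apply even_card_inv (σ := σ)
        intro x hx
        rw [mem_filter] at hx ⊢
        have := hN.inv x (hX hx.1)
        exact ⟨⟨hx.2, by rw [this.2.1]; exact hx.1⟩, this.2⟩
      obtain ⟨i, hi⟩ := hev S hS.1
      obtain ⟨j, hj⟩ := hev T hT.1
      have s1 := hS.sum hN
      have s2 := hT.sum hN
      obtain ⟨l, hl⟩ := hS.card_even hN.even
      have hKST : K.card = S.card + T.card := by
        rw [← card_union_of_disjoint hdis]
        congr 1
        apply Subset.antisymm _ (union_subset hS.1 hT.1)
        rw [← sdiff_eq_empty_iff_subset]; exact hU0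
      omega
    · have hU1 : U ≠ K := fun h => hdSU p0 hp0S (h ▸ hp0)
      have h4 := hcut U hUv hU0 hU1
      rw [hNU2] at h4
      have z1 : #{x ∈ S | σ x ∈ S} = 0 := by omega
      have z2 : #{x ∈ T | σ x ∈ T} = 0 := by omega
      rw [card_eq_zero, filter_eq_empty_iff] at z1 z2
      refine R2 hN hn ih hc hodd hcut (S := S) (T := T) ⟨hS, hT, hdis, fun x hx => z1 hx,
        fun x hx => z2 hx, ?_⟩
      have e1 : ({x ∈ S ∪ T | σ x ∉ S ∪ T} : Finset D) = {x ∈ S ∪ T | σ x ∈ U} := by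
        apply filter_congr
        intro x hx
        have := (hN.inv x ((hS.union hT).1 hx)).1
        simp only [hU, mem_sdiff]
        tauto
      rw [e1, card_swap hN.inv (hS.union hT).1 hUv.1]
      omega

theorem thmP (n : ℕ) : ∀ (K : Finset D) (σ : D → D) (π : D → V) (a φ : D → ℤ), K.card = n →
    Hyp0 K σ π a φ → Conn K σ π → ¬ (4 : ℤ) ∣ ∑ x ∈ K, a x → Concl K σ π a := by
  induction n using Nat.strong_induction_on with
  | _ n IH =>
    intro K σ π a φ hn h hc hodd
    have ih : IHyp D V n := fun K' σ' π' a' φ' hlt => IH _ hlt K' σ' π' a' φ' rfl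
    by_cases hno : ∀ p ∈ K, ∀ q ∈ K, π p = π q → φ p = φ q → a p = a q
    · obtain ⟨b, c, hc1, hab, hN, hob⟩ := normalize h hodd hno
      apply Concl.switch hc1 hab
      rcases cut4_or hN hn ih hc hob with h1 | h1
      · exact h1
      · exact tutteStep hN hn ih hc hob h1
    · push Not at hno
      obtain ⟨p, hp, q, hq, hπ, hφ, ha⟩ := hno
      have hpq : p ≠ q := fun h => ha (by rw [h])
      refine R3 h hn ih hc hodd hp hq hpq hπ hφ ?_
      rcases h.pm p hp with h1 | h1 <;> rcases h.pm q hq with h2 | h2 <;> simp_all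
end SGF

open Finset
namespace SGF
variable {D V : Type} [DecidableEq D] [DecidableEq V]
set_option linter.unusedSectionVars false

structure Col (K : Finset D) (σ : D → D) (π : D → V) (a : D → ℤ) (v : V) (c : D → Fin 4) :
    Prop where
  sinv : ∀ x ∈ K, c (σ x) = c x
  conn : ∀ i, i ≠ 3 → Conn {x ∈ K | c x = i} σ π
  even : ∀ i, EvenDeg {x ∈ K | c x = i} π
  vtx : ∀ i, i ≠ 3 → ∃ x ∈ K, c x = i ∧ π x = v
  sum : ∀ i, i ≠ 3 → ∑ x ∈ K with c x = i, a x = 2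
  net3 : ∀ w, net {x ∈ K | c x = 3} π a w = 0

theorem evenDeg_add {K : Finset D} {p q : D} (hp : p ∈ K) (hq : q ∈ K) (h : p ≠ q)
    {π : D → V} (hpq : π p = π q) (hK : EvenDeg (K \ {p, q}) π) : EvenDeg K π := by
  intro w
  have h1 := hK w
  have h2 := net_pair_split hp hq h π (fun _ => 1) (π p) rfl hpq.symm w
  simp only [net, sum_const, nsmul_eq_mul, mul_one] at h2
  split_ifs at h2
  · rw [Nat.even_iff] at h1 ⊢; omega
  · rw [Nat.even_iff] at h1 ⊢; omega

theorem unsplit_conn {K : Finset D} {σ : D → D} {π : D → V}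
    {p q : D} (hi : Inv K σ) (hp : p ∈ K) (hq : q ∈ K) (hpq : p ≠ q) (hs : σ p ≠ q)
    (hπ : π p = π q) (hc : Conn (K \ {p, q}) (swp σ (σ p) (σ q)) π) : Conn K σ π := by
  obtain ⟨h1, h2, h3, h4, h5⟩ := split_facts hi hp hq hpq hs
  intro C hC
  have hpC : p ∈ C → q ∈ C := fun h => hC.2.2 p h q hq hπ.symm
  have hqC : q ∈ C → p ∈ C := fun h => hC.2.2 q h p hp hπ
  have hrp : σ p ∈ C → p ∈ C := fun h => by
    have := hC.2.1 _ h; rwa [(hi p hp).2.1] at this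
  have hsq : σ q ∈ C → q ∈ C := fun h => by
    have := hC.2.1 _ h; rwa [(hi q hq).2.1] at this
  have hcl : Closed (K \ {p, q}) (swp σ (σ p) (σ q)) π (C \ {p, q}) := by
    refine ⟨sdiff_subset_sdiff hC.1 Subset.rfl, ?_, ?_⟩
    · intro x hx
      have hxC := (mem_sdiff.1 hx).1
      by_cases e1 : x = σ p
      · subst e1
        have : swp σ (σ p) (σ q) (σ p) = σ q := by simp [swp]
        rw [this, mem_sdiff]
        exact ⟨hC.2.1 _ (hpC (hrp hxC)), (mem_sdiff.1 h2).2⟩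
      by_cases e2 : x = σ q
      · subst e2
        have : swp σ (σ p) (σ q) (σ q) = σ p := by simp [swp, h3.symm]
        rw [this, mem_sdiff]
        exact ⟨hC.2.1 _ (hqC (hsq hxC)), (mem_sdiff.1 h1).2⟩
      have hx' : x ∈ K \ {p, q} := mem_sdiff.2 ⟨hC.1 hxC, (mem_sdiff.1 hx).2⟩
      obtain ⟨k1, k2⟩ := h5 x hx' e1 e2
      rw [k2, mem_sdiff]
      exact ⟨hC.2.1 _ hxC, (mem_sdiff.1 k1).2⟩
    · intro x hx y hy hxy
      rw [mem_sdiff] at hx hy ⊢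
      exact ⟨hC.2.2 x hx.1 y hy.1 hxy, hy.2⟩
  rcases hc _ hcl with h | h
  · left
    have hsub : C ⊆ {p, q} := sdiff_eq_empty_iff_subset.1 h
    have hpn : p ∉ C := fun hpC' => (mem_sdiff.1 h1).2 (hsub (hC.2.1 _ hpC'))
    rw [eq_empty_iff_forall_notMem]
    intro x hx
    have := hsub hx
    rw [mem_insert, mem_singleton] at this
    rcases this with rfl | rfl
    · exact hpn hx
    · exact hpn (hqC hx)
  · right
    apply Subset.antisymm hC.1
    intro x hx
    have hrC : σ p ∈ C := by
      rw [← h] at h1; exact (mem_sdiff.1 h1).1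
    by_cases e : x ∈ ({p, q} : Finset D)
    · rw [mem_insert, mem_singleton] at e
      rcases e with rfl | rfl
      · exact hrp hrC
      · exact hpC (hrp hrC)
    · have : x ∈ K \ {p, q} := mem_sdiff.2 ⟨hx, e⟩
      rw [← h] at this
      exact (mem_sdiff.1 this).1

theorem conn_congr {K : Finset D} {σ σ' : D → D} {π : D → V} (h : ∀ x ∈ K, σ x = σ' x)
    (hc : Conn K σ π) : Conn K σ' π := by
  intro C hC
  exact hc C ⟨hC.1, fun x hx => by rw [h x (hC.1 hx)]; exact hC.2.1 x hx, hC.2.2⟩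

theorem lemZ_base {K : Finset D} {σ : D → D} {π : D → V} {a : D → ℤ} {v : V} (hi : Inv K σ)
    (hv : ∀ x ∈ K, π x = v) (ha : ∀ x ∈ K, a x = 1) (h6 : K.card = 6) :
    ∃ c, Col K σ π a v c := by
  obtain ⟨x, hx⟩ : K.Nonempty := card_pos.1 (by omega)
  obtain ⟨x1, x2, x3⟩ := hi x hx
  have hK1 : #(K \ {x, σ x}) = 4 := by
    rw [card_sdiff_of_subset (by simp [insert_subset_iff, hx, x1]), card_pair x3.symm, h6]
  obtain ⟨y, hy⟩ : (K \ {x, σ x}).Nonempty := card_pos.1 (by omega)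
  simp only [mem_sdiff, mem_insert, mem_singleton, not_or] at hy
  obtain ⟨hyK, hyx, hyx'⟩ := hy
  obtain ⟨y1, y2, y3⟩ := hi y hyK
  have d1 : σ y ≠ x := fun h => hyx' (by rw [← h, y2])
  have d2 : σ y ≠ σ x := fun h => hyx (by rw [← y2, h, x2])
  have hK2 : #((K \ {x, σ x}) \ {y, σ y}) = 2 := by
    rw [card_sdiff_of_subset (by simp [insert_subset_iff, hyK, hyx, hyx', y1, d1, d2]),
      card_pair y3.symm, hK1]
  set c : D → Fin 4 := fun z => if z = x ∨ z = σ x then 0 else if z = y ∨ z = σ y then 1 else 2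
    with hc
  have c0 : ({z ∈ K | c z = 0} : Finset D) = {x, σ x} := by
    ext z
    simp only [mem_filter, mem_insert, mem_singleton, hc]
    constructor
    · rintro ⟨h1, h2⟩
      by_contra hcon
      rw [if_neg hcon] at h2
      split_ifs at h2 <;> exact absurd h2 (by decide)
    · intro h
      refine ⟨?_, if_pos h⟩
      rcases h with rfl | rfl <;> assumption
  have c1 : ({z ∈ K | c z = 1} : Finset D) = {y, σ y} := by
    ext z
    simp only [mem_filter, mem_insert, mem_singleton, hc]
    constructor
    · rintro ⟨h1, h2⟩
      by_contra hcon
      rw [if_neg hcon] at h2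
      split_ifs at h2 <;> exact absurd h2 (by decide)
    · intro h
      have hn : ¬ (z = x ∨ z = σ x) := by
        rcases h with rfl | rfl
        · tauto
        · tauto
      rw [if_neg hn, if_pos h]
      refine ⟨?_, rfl⟩
      rcases h with rfl | rfl <;> assumption
  have c2 : ({z ∈ K | c z = 2} : Finset D) = (K \ {x, σ x}) \ {y, σ y} := by
    ext z
    simp only [mem_filter, mem_sdiff, mem_insert, mem_singleton, hc]
    split_ifs <;> simp_all
  have c3 : ({z ∈ K | c z = 3} : Finset D) = ∅ := by
    rw [filter_eq_empty_iff]
    intro z _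
    simp only [hc]
    split_ifs <;> decide
  have hcard : ∀ i, i ≠ 3 → #{z ∈ K | c z = i} = 2 := by
    intro i h3
    have : i = 0 ∨ i = 1 ∨ i = 2 := by revert i; decide
    rcases this with rfl | rfl | rfl
    · rw [c0, card_pair x3.symm]
    · rw [c1, card_pair y3.symm]
    · rw [c2, hK2]
  refine ⟨c, ?_, ?_, ?_, ?_, ?_, ?_⟩
  · intro z hz
    obtain ⟨z1, z2, z3⟩ := hi z hz
    have e1 : (σ z = x ∨ σ z = σ x) ↔ (z = x ∨ z = σ x) := by
      constructor
      · rintro (h | h)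
        · right; rw [← h, z2]
        · left; rw [← z2, h, x2]
      · rintro (rfl | rfl)
        · right; rfl
        · left; exact x2
    have e2 : (σ z = y ∨ σ z = σ y) ↔ (z = y ∨ z = σ y) := by
      constructor
      · rintro (h | h)
        · right; rw [← h, z2]
        · left; rw [← z2, h, y2]
      · rintro (rfl | rfl)
        · right; rfl
        · left; exact y2
    simp only [hc, e1, e2]
  · intro i _ C hC
    by_cases h : C = ∅
    · exact Or.inl h
    right
    obtain ⟨z, hz⟩ := nonempty_iff_ne_empty.2 h
    apply Subset.antisymm hC.1
    intro t ht
    apply hC.2.2 z hz t ht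
    rw [hv t (mem_filter.1 ht).1, hv z (mem_filter.1 (hC.1 hz)).1]
  · intro i w
    by_cases hi3 : i = 3
    · rw [hi3, c3]; simp
    by_cases hw : w = v
    · rw [filter_true_of_mem, hcard i hi3]
      · decide
      · intro z hz; rw [hw]; exact hv z (mem_filter.1 hz).1
    · rw [filter_false_of_mem]
      · simp
      · intro z hz h; exact hw (h.symm.trans (hv z (mem_filter.1 hz).1))
  · intro i hi3
    obtain ⟨z, hz⟩ : ({z ∈ K | c z = i} : Finset D).Nonempty := card_pos.1 (by rw [hcard i hi3]; omega)
    rw [mem_filter] at hz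
    exact ⟨z, hz.1, hz.2, hv z hz.1⟩
  · intro i hi3
    rw [sum_congr rfl (g := fun _ => 1) (fun z hz => ha z (mem_filter.1 hz).1)]
    rw [sum_const, hcard i hi3]; rfl
  · intro w
    rw [c3, net_empty]

theorem lemZ (n : ℕ) : ∀ (K : Finset D) (σ : D → D) (π : D → V) (a : D → ℤ) (v : V),
    K.card = n → Inv K σ → PM K a → (∀ w, net K π a w = if w = v then 6 else 0) →
    ∃ c, Col K σ π a v c := by
  induction n using Nat.strong_induction_on with
  | _ n IH =>
    intro K σ π a v hn hi ha hnet
    by_cases hno : ∀ p ∈ K, ∀ q ∈ K, π p = π q → a p = a q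
    · have hfib : ∀ x ∈ K, net K π a (π x) = #{y ∈ K | π y = π x} * a x := by
        intro x hx
        unfold net
        rw [sum_congr rfl (g := fun _ => a x)]
        · simp
        · intro y hy
          rw [mem_filter] at hy
          exact hno y hy.1 x hx hy.2
      have hpos : ∀ x ∈ K, 0 < #{y ∈ K | π y = π x} := fun x hx =>
        card_pos.2 ⟨x, mem_filter.2 ⟨hx, rfl⟩⟩
      have hv : ∀ x ∈ K, π x = v := by
        intro x hx
        by_contra hne
        have h1 := hfib x hx
        rw [hnet, if_neg hne] at h1
        have h2 := hpos x hx
        rcases ha x hx with h3 | h3 <;> rw [h3] at h1 <;> omega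
      have ha1 : ∀ x ∈ K, a x = 1 := by
        intro x hx
        have h1 := hfib x hx
        rw [hnet, if_pos (hv x hx)] at h1
        rcases ha x hx with h3 | h3
        · exact h3
        · rw [h3] at h1; omega
      apply lemZ_base hi hv ha1
      have h1 := hnet v
      rw [if_pos rfl] at h1
      unfold net at h1
      rw [filter_true_of_mem hv, sum_congr rfl ha1] at h1
      simp at h1
      omega
    · push Not at hno
      obtain ⟨p, hp, q, hq, hπ, hne⟩ := hno
      have hpq : p ≠ q := fun h => hne (by rw [h])
      have ha0 : a p + a q = 0 := by
        rcases ha p hp with h1 | h1 <;> rcases ha q hq with h2 | h2 <;> simp_all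
      have hlt : #(K \ {p, q}) < n := by
        rw [← hn]
        apply card_lt_card
        rw [ssubset_iff_of_subset sdiff_subset]
        exact ⟨p, hp, by simp⟩
      have hpm : PM (K \ {p, q}) a := fun x hx => ha x (mem_sdiff.1 hx).1
      have hnet' : ∀ w, net (K \ {p, q}) π a w = if w = v then 6 else 0 := by
        intro w
        have := net_pair_split hp hq hpq π a (π p) rfl hπ.symm w
        rw [ha0, ite_self, add_zero] at this
        rw [← this]; exact hnet w
      -- classes
      have e1 : ∀ (c : D → Fin 4) (i0 i : Fin 4), i ≠ i0 →
          ({x ∈ K | (if x = p ∨ x = q then i0 else c x) = i} : Finset D) =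
            {x ∈ K \ {p, q} | c x = i} := by
        intro c i0 i hne
        ext x
        simp only [mem_filter, mem_sdiff, mem_insert, mem_singleton]
        by_cases h : x = p ∨ x = q
        · rw [if_pos h]
          constructor
          · rintro ⟨_, h2⟩; exact absurd h2.symm hne
          · rintro ⟨⟨_, h2⟩, _⟩; exact absurd h h2
        · rw [if_neg h]; tauto
      have e2 : ∀ (c : D → Fin 4) (i0 : Fin 4),
          ({x ∈ K | (if x = p ∨ x = q then i0 else c x) = i0} : Finset D) \ {p, q} =
            {x ∈ K \ {p, q} | c x = i0} := by
        intro c i0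
        ext x
        simp only [mem_filter, mem_sdiff, mem_insert, mem_singleton]
        by_cases h : x = p ∨ x = q
        · simp [h]
        · simp [h]
      have ep : ∀ (c : D → Fin 4) (i0 : Fin 4),
          p ∈ ({x ∈ K | (if x = p ∨ x = q then i0 else c x) = i0} : Finset D) := by
        intro c i0; simp [hp]
      have eq : ∀ (c : D → Fin 4) (i0 : Fin 4),
          q ∈ ({x ∈ K | (if x = p ∨ x = q then i0 else c x) = i0} : Finset D) := by
        intro c i0; simp [hq]
      -- generic parts
      have main : ∀ (σ' : D → D) (c : D → Fin 4) (i0 : Fin 4), Col (K \ {p, q}) σ' π a v c →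
          (∀ x ∈ K, (if σ x = p ∨ σ x = q then i0 else c (σ x)) =
            if x = p ∨ x = q then i0 else c x) →
          (∀ i, i ≠ 3 → Conn {x ∈ K | (if x = p ∨ x = q then i0 else c x) = i} σ π) →
          ∃ c, Col K σ π a v c := by
        intro σ' c i0 hcol hinv hconn
        refine ⟨fun x => if x = p ∨ x = q then i0 else c x, hinv, hconn, ?_, ?_, ?_, ?_⟩
        · intro i
          by_cases h : i = i0
          · subst h
            apply evenDeg_add (ep c i) (eq c i) hpq hπ
            rw [e2]; exact hcol.even i
          · rw [e1 c i0 i h]; exact hcol.even i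
        · intro i h3
          obtain ⟨x, hx, hxi, hxv⟩ := hcol.vtx i h3
          rw [mem_sdiff, mem_insert, mem_singleton] at hx
          refine ⟨x, hx.1, ?_, hxv⟩
          simp only [if_neg hx.2]; exact hxi
        · intro i h3
          by_cases h : i = i0
          · subst h
            rw [sum_pair_split (ep c i) (eq c i) hpq, e2, ha0, add_zero]
            exact hcol.sum i h3
          · rw [e1 c i0 i h]; exact hcol.sum i h3
        · intro w
          by_cases h : 3 = i0
          · subst h
            rw [net_pair_split (ep c 3) (eq c 3) hpq π a (π p) rfl hπ.symm w, e2, ha0, ite_self,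
              add_zero]
            exact hcol.net3 w
          · rw [e1 c i0 3 h]; exact hcol.net3 w
      obtain ⟨p1, p2, p3⟩ := hi p hp
      obtain ⟨q1, q2, q3⟩ := hi q hq
      by_cases hs : σ p = q
      · have hs' : σ q = p := by rw [← hs, p2]
        have hcl : ∀ x, x ∈ K → ((σ x = p ∨ σ x = q) ↔ (x = p ∨ x = q)) := by
          intro x hx
          obtain ⟨x1, x2, x3⟩ := hi x hx
          constructor
          · rintro (h | h)
            · right; rw [← x2, h, hs]
            · left; rw [← x2, h, hs']
          · rintro (rfl | rfl)
            · right; exact hs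
            · left; exact hs'
        have hi' : Inv (K \ {p, q}) σ := by
          intro x hx
          rw [mem_sdiff, mem_insert, mem_singleton] at hx
          obtain ⟨x1, x2, x3⟩ := hi x hx.1
          refine ⟨?_, x2, x3⟩
          rw [mem_sdiff, mem_insert, mem_singleton, hcl x hx.1]
          exact ⟨x1, hx.2⟩
        obtain ⟨c, hc⟩ := IH _ hlt (K \ {p, q}) σ π a v rfl hi' hpm hnet'
        apply main σ c 3 hc
        · intro x hx
          by_cases h : x = p ∨ x = q
          · rw [if_pos h, if_pos ((hcl x hx).2 h)]
          · rw [if_neg h, if_neg (fun h' => h ((hcl x hx).1 h'))]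
            exact hc.sinv x (by rw [mem_sdiff, mem_insert, mem_singleton]; exact ⟨hx, h⟩)
        · intro i h3
          rw [e1 c 3 i h3]
          exact hc.conn i h3
      · obtain ⟨h1, h2, h3, h4, h5⟩ := split_facts hi hp hq hpq hs
        obtain ⟨c, hc⟩ := IH _ hlt (K \ {p, q}) _ π a v rfl h4 hpm hnet'
        have hrs : c (σ q) = c (σ p) := by
          have := hc.sinv _ h1
          simpa [swp] using this
        have h1' := (mem_sdiff.1 h1).2
        have h2' := (mem_sdiff.1 h2).2
        simp only [mem_insert, mem_singleton] at h1' h2'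
        have hinv : ∀ x ∈ K, (if σ x = p ∨ σ x = q then c (σ p) else c (σ x)) =
            if x = p ∨ x = q then c (σ p) else c x := by
          intro x hx
          by_cases hxp : x = p
          · subst hxp; rw [if_neg h1']; simp
          by_cases hxq : x = q
          · subst hxq; rw [if_neg h2', hrs]; simp
          have hnx : ¬ (x = p ∨ x = q) := by tauto
          rw [if_neg hnx]
          by_cases hxr : x = σ p
          · subst hxr; rw [p2]; simp
          by_cases hxs : x = σ q
          · subst hxs; rw [q2]; simp [hrs]
          have hx' : x ∈ K \ {p, q} := by
            rw [mem_sdiff, mem_insert, mem_singleton]; exact ⟨hx, hnx⟩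
          obtain ⟨k1, k2⟩ := h5 x hx' hxr hxs
          have k3 := (mem_sdiff.1 k1).2
          simp only [mem_insert, mem_singleton] at k3
          rw [if_neg k3, ← k2]
          exact hc.sinv x hx'
        apply main _ c (c (σ p)) hc hinv
        intro i hi3
        have hinvi : Inv {x ∈ K | (if x = p ∨ x = q then c (σ p) else c x) = i} σ := by
          intro x hx
          rw [mem_filter] at hx ⊢
          obtain ⟨x1, x2, x3⟩ := hi x hx.1
          exact ⟨⟨x1, by rw [hinv x hx.1]; exact hx.2⟩, x2, x3⟩
        by_cases h : i = c (σ p)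
        · subst h
          apply unsplit_conn hinvi (ep c _) (eq c _) hpq hs hπ
          rw [e2]
          exact hc.conn _ hi3
        · rw [e1 c _ i h]
          apply conn_congr _ (hc.conn i hi3)
          intro x hx
          rw [mem_filter] at hx
          apply (h5 x hx.1 _ _).2
          · rintro rfl; exact h hx.2.symm
          · rintro rfl; exact h (hx.2.symm.trans hrs)
end SGF

open Finset
namespace SGF
variable {D V : Type} [DecidableEq D] [DecidableEq V]
set_option linter.unusedSectionVars false

theorem comp_exists {R : Finset D} {σ : D → D} (π : D → V) (hi : Inv R σ) {q : D} (hq : q ∈ R) :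
    ∃ M, Closed R σ π M ∧ q ∈ M ∧ Conn M σ π := by
  classical
  set M : Finset D := {x ∈ R | ∀ C, Closed R σ π C → q ∈ C → x ∈ C} with hM
  have hMc : Closed R σ π M := by
    refine ⟨filter_subset _ _, ?_, ?_⟩
    · intro x hx
      rw [hM, mem_filter] at hx ⊢
      exact ⟨(hi x hx.1).1, fun C hC hqC => hC.2.1 x (hx.2 C hC hqC)⟩
    · intro x hx y hy hxy
      rw [hM, mem_filter] at hx ⊢
      exact ⟨hy, fun C hC hqC => hC.2.2 x (hx.2 C hC hqC) y hy hxy⟩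
  refine ⟨M, hMc, ?_, ?_⟩
  · rw [hM, mem_filter]; exact ⟨hq, fun C _ h => h⟩
  · have key : ∀ C, Closed M σ π C → q ∈ C → C = M := by
      intro C hC hqC
      apply Subset.antisymm hC.1
      intro x hx
      exact (mem_filter.1 hx).2 C (hMc.trans hC) hqC
    have hqM : q ∈ M := by rw [hM, mem_filter]; exact ⟨hq, fun C _ h => h⟩
    intro C hC
    by_cases h : q ∈ C
    · exact Or.inr (key C hC h)
    · left
      have := key (M \ C) (hC.compl (hMc.inv hi)) (mem_sdiff.2 ⟨hqM, h⟩)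
      rw [eq_empty_iff_forall_notMem]
      intro x hx
      have h2 := hC.1 hx
      rw [← this] at h2
      exact (mem_sdiff.1 h2).2 hx

theorem conn_union {A B : Finset D} {σ : D → D} {π : D → V} (hA : Conn A σ π) (hB : Conn B σ π)
    (iA : Inv A σ) (iB : Inv B σ) {p q : D} (hp : p ∈ A) (hq : q ∈ B) (hpq : π q = π p) :
    Conn (A ∪ B) σ π := by
  intro C hC
  have h1 : Closed A σ π (C ∩ A) := by
    refine ⟨inter_subset_right, ?_, ?_⟩
    · intro x hx
      rw [mem_inter] at hx ⊢
      exact ⟨hC.2.1 x hx.1, (iA x hx.2).1⟩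
    · intro x hx y hy hxy
      rw [mem_inter] at hx ⊢
      exact ⟨hC.2.2 x hx.1 y (mem_union_left _ hy) hxy, hy⟩
  have h2 : Closed B σ π (C ∩ B) := by
    refine ⟨inter_subset_right, ?_, ?_⟩
    · intro x hx
      rw [mem_inter] at hx ⊢
      exact ⟨hC.2.1 x hx.1, (iB x hx.2).1⟩
    · intro x hx y hy hxy
      rw [mem_inter] at hx ⊢
      exact ⟨hC.2.2 x hx.1 y (mem_union_right _ hy) hxy, hy⟩
  have hpC : p ∈ C → q ∈ C := fun h => hC.2.2 p h q (mem_union_right _ hq) hpq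
  have hqC : q ∈ C → p ∈ C := fun h => hC.2.2 q h p (mem_union_left _ hp) hpq.symm
  have memA : C ∩ A = A → ∀ x ∈ A, x ∈ C := fun h x hx => by
    rw [← h] at hx; exact (mem_inter.1 hx).1
  have memB : C ∩ B = B → ∀ x ∈ B, x ∈ C := fun h x hx => by
    rw [← h] at hx; exact (mem_inter.1 hx).1
  have nA : C ∩ A = ∅ → ∀ x ∈ A, x ∉ C := fun h x hx hxC => by
    have : x ∈ C ∩ A := mem_inter.2 ⟨hxC, hx⟩
    rw [h] at this; simp at this
  have nB : C ∩ B = ∅ → ∀ x ∈ B, x ∉ C := fun h x hx hxC => by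
    have : x ∈ C ∩ B := mem_inter.2 ⟨hxC, hx⟩
    rw [h] at this; simp at this
  rcases hA _ h1 with e1 | e1 <;> rcases hB _ h2 with e2 | e2
  · left
    rw [eq_empty_iff_forall_notMem]
    intro x hx
    rcases mem_union.1 (hC.1 hx) with h | h
    · exact nA e1 x h hx
    · exact nB e2 x h hx
  · exact absurd (hqC (memB e2 q hq)) (nA e1 p hp)
  · exact absurd (hpC (memA e1 p hp)) (nB e2 q hq)
  · right
    apply Subset.antisymm hC.1
    exact union_subset (memA e1) (memB e2)

theorem absorb {K : Finset D} {σ : D → D} {π : D → V} {a : D → ℤ} {v : V} (hi : Inv K σ)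
    (hc : Conn K σ π) (n : ℕ) : ∀ c, Col K σ π a v c → #{x ∈ K | c x = 3} = n →
    ∃ c, Col K σ π a v c ∧ ∀ x ∈ K, c x ≠ 3 := by
  classical
  induction n using Nat.strong_induction_on with
  | _ n IH =>
    intro c hcol hn
    have hinv : ∀ i, Inv {x ∈ K | c x = i} σ := by
      intro i x hx
      rw [mem_filter] at hx ⊢
      obtain ⟨x1, x2, x3⟩ := hi x hx.1
      exact ⟨⟨x1, by rw [hcol.sinv x hx.1]; exact hx.2⟩, x2, x3⟩
    by_cases hno : ∀ x ∈ K, c x ≠ 3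
    · exact ⟨c, hcol, hno⟩
    push Not at hno
    obtain ⟨z, hz, hz3⟩ := hno
    have htouch : ∃ p ∈ K, c p ≠ 3 ∧ ∃ q ∈ K, c q = 3 ∧ π q = π p := by
      by_contra hcon
      push Not at hcon
      have hcl : Closed K σ π {x ∈ K | c x ≠ 3} := by
        refine ⟨filter_subset _ _, ?_, ?_⟩
        · intro x hx
          rw [mem_filter] at hx ⊢
          exact ⟨(hi x hx.1).1, by rw [hcol.sinv x hx.1]; exact hx.2⟩
        · intro x hx y hy hxy
          rw [mem_filter] at hx ⊢
          exact ⟨hy, fun h => hcon x hx.1 hx.2 y hy h hxy⟩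
      rcases hc _ hcl with h | h
      · obtain ⟨x, hx, hx0, _⟩ := hcol.vtx 0 (by decide)
        have : x ∈ ({x ∈ K | c x ≠ 3} : Finset D) := mem_filter.2 ⟨hx, by rw [hx0]; decide⟩
        rw [h] at this; simp at this
      · rw [← h, mem_filter] at hz
        exact hz.2 hz3
    obtain ⟨p, hp, hp3, q, hq, hq3, hqp⟩ := htouch
    obtain ⟨M, hM, hqM, hMc⟩ := comp_exists π (hinv 3) (mem_filter.2 ⟨hq, hq3⟩)
    have hM3 : ∀ x ∈ M, x ∈ K ∧ c x = 3 := fun x hx => mem_filter.1 (hM.1 hx)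
    have hMi := hM.inv (hinv 3)
    set i0 := c p with hi0
    have e0 : ({x ∈ K | (if x ∈ M then i0 else c x) = i0} : Finset D) = {x ∈ K | c x = i0} ∪ M := by
      ext x
      simp only [mem_filter, mem_union]
      by_cases h : x ∈ M
      · simp [h, (hM3 x h).1]
      · simp [h]
    have hdis : Disjoint ({x ∈ K | c x = i0} : Finset D) M := by
      rw [disjoint_left]
      intro x hx hx'
      exact hp3 ((mem_filter.1 hx).2.symm.trans (hM3 x hx').2)
    have e3 : ({x ∈ K | (if x ∈ M then i0 else c x) = 3} : Finset D) = {x ∈ K | c x = 3} \ M := by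
      ext x
      simp only [mem_filter, mem_sdiff]
      by_cases h : x ∈ M
      · simp [h, hp3]
      · simp [h]
    have e1 : ∀ i, i ≠ i0 → i ≠ 3 → ({x ∈ K | (if x ∈ M then i0 else c x) = i} : Finset D) =
        {x ∈ K | c x = i} := by
      intro i h1 h2
      ext x
      simp only [mem_filter]
      by_cases h : x ∈ M
      · simp [h, (hM3 x h).2, h1.symm, h2.symm]
      · simp [h]
    have hcomp := hM.compl (hinv 3)
    have hnetM : ∀ w, net M π a w = 0 := fun w => hM.net_zero (hcol.net3 w)
    refine IH #{x ∈ K | (if x ∈ M then i0 else c x) = 3} ?_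
      (fun x => if x ∈ M then i0 else c x) ?_ rfl
    · rw [e3, ← hn]
      apply card_lt_card
      rw [ssubset_iff_of_subset sdiff_subset]
      exact ⟨q, mem_filter.2 ⟨hq, hq3⟩, fun h => (mem_sdiff.1 h).2 hqM⟩
    · refine ⟨?_, ?_, ?_, ?_, ?_, ?_⟩
      · intro x hx
        have : σ x ∈ M ↔ x ∈ M := by
          constructor
          · intro h
            have := (hMi _ h).1
            rwa [(hi x hx).2.1] at this
          · exact fun h => (hMi x h).1
        simp only [this, hcol.sinv x hx]
      · intro i h3
        by_cases h : i = i0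
        · rw [h, e0]
          exact conn_union (hcol.conn i0 hp3) hMc (hinv i0) hMi
            (mem_filter.2 ⟨hp, rfl⟩) hqM hqp
        · rw [e1 i h h3]; exact hcol.conn i h3
      · intro i
        by_cases h3 : i = 3
        · rw [h3, e3]; exact hcomp.evenDeg (hcol.even 3)
        by_cases h : i = i0
        · rw [h, e0]
          intro w
          rw [filter_union, card_union_of_disjoint (disjoint_filter_filter hdis)]
          exact (hcol.even i0 w).add (hM.evenDeg (hcol.even 3) w)
        · rw [e1 i h h3]; exact hcol.even i
      · intro i h3
        obtain ⟨x, hx, hxi, hxv⟩ := hcol.vtx i h3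
        refine ⟨x, hx, ?_, hxv⟩
        have : x ∉ M := fun h => h3 (hxi.symm.trans (hM3 x h).2)
        simp only [if_neg this]; exact hxi
      · intro i h3
        by_cases h : i = i0
        · rw [h, e0, sum_union hdis, hcol.sum i0 hp3, ← sum_net M π a,
            sum_eq_zero (fun w _ => hnetM w)]
          rfl
        · rw [e1 i h h3]; exact hcol.sum i h3
      · intro w
        rw [e3]
        exact hcomp.net_zero (hcol.net3 w)

theorem lemZ_final {K : Finset D} {σ : D → D} {π : D → V} {a : D → ℤ} {v : V} (hi : Inv K σ)
    (hc : Conn K σ π) (ha : PM K a) (hnet : ∀ w, net K π a w = if w = v then 6 else 0) :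
    ∃ c, Col K σ π a v c ∧ ∀ x ∈ K, c x ≠ 3 := by
  obtain ⟨c, h⟩ := lemZ _ K σ π a v rfl hi ha hnet
  exact absorb hi hc _ c h rfl
end SGF

open Finset
namespace SGF
set_option linter.unusedSectionVars false

section Bridge
variable {V E : Type} [Fintype V] [Fintype E] [DecidableEq V] [DecidableEq E]

/-- The other half-edge of the same edge. -/
def fl (p : E × Bool) : E × Bool := (p.1, !p.2)

/-- The end-vertex of a half-edge. -/
def pr (G : SignedGraph V E) (p : E × Bool) : V := G.ends p.1 p.2

/-- The half-edges of the edges in `S`. -/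
def dS (S : Finset E) : Finset (E × Bool) := univ.filter fun p => p.1 ∈ S

theorem mem_dS {S : Finset E} {p : E × Bool} : p ∈ dS S ↔ p.1 ∈ S := by simp [dS]

theorem inv_dS (S : Finset E) : Inv (dS S) (fl (E := E)) := by
  rintro ⟨e, i⟩ hp
  rw [mem_dS] at hp
  refine ⟨mem_dS.2 hp, by simp [fl], by simp [fl]⟩

theorem evenDeg_dS (G : SignedGraph V E) (S : Finset E) :
    EvenDeg (dS S) (pr G) ↔ ∀ v, Even (G.valencyOn S v) := by
  unfold EvenDeg SignedGraph.valencyOn dS pr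
  simp only [Finset.filter_filter]

theorem conn_of_connOn {G : SignedGraph V E} {S : Finset E} (h : G.ConnOn S) :
    Conn (dS S) fl (pr G) := by
  intro C hC
  obtain ⟨h1, h2, h3⟩ := hC
  rcases C.eq_empty_or_nonempty with h0 | ⟨p, hp⟩
  · exact Or.inl h0
  right
  apply Finset.Subset.antisymm h1
  intro q hq
  have hpS : pr G p ∈ G.suppV S := by
    simp only [SignedGraph.suppV, mem_filter, mem_univ, true_and]
    exact ⟨p.1, mem_dS.1 (h1 hp), p.2, rfl⟩
  have hqS : pr G q ∈ G.suppV S := by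
    simp only [SignedGraph.suppV, mem_filter, mem_univ, true_and]
    exact ⟨q.1, mem_dS.1 hq, q.2, rfl⟩
  have hr := h _ hpS _ hqS
  have key : ∀ w, Relation.ReflTransGen (G.AdjOn S) (pr G p) w →
      ∀ r ∈ dS S, pr G r = w → r ∈ C := by
    intro w hw
    induction hw with
    | refl => intro r hr' he; exact h3 p hp r hr' he
    | tail hab hbc ih =>
      intro r hr' he
      obtain ⟨e, he1, i, he2, he3⟩ := hbc
      have m1 : ((e, i) : E × Bool) ∈ C := ih (e, i) (mem_dS.2 he1) he2
      have m2 := h2 _ m1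
      exact h3 _ m2 r hr' (by rw [he, ← he3]; rfl)
  exact key _ hr q hq rfl

theorem connOn_of_conn {G : SignedGraph V E} {S : Finset E} (h : Conn (dS S) fl (pr G)) :
    G.ConnOn S := by
  classical
  intro u hu v hv
  simp only [SignedGraph.suppV, mem_filter, mem_univ, true_and] at hu hv
  obtain ⟨e, he, i, hei⟩ := hu
  obtain ⟨f, hf, j, hfj⟩ := hv
  let C : Finset (E × Bool) := (dS S).filter fun p => Relation.ReflTransGen (G.AdjOn S) u (pr G p)
  have hC : Closed (dS S) fl (pr G) C := by
    refine ⟨Finset.filter_subset _ _, ?_, ?_⟩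
    · intro p hp
      simp only [C, mem_filter] at hp ⊢
      refine ⟨(inv_dS S p hp.1).1, hp.2.tail ?_⟩
      exact ⟨p.1, mem_dS.1 hp.1, p.2, rfl, rfl⟩
    · intro p hp q hq hqp
      simp only [C, mem_filter] at hp ⊢
      exact ⟨hq, by rw [hqp]; exact hp.2⟩
  have hmem : ((e, i) : E × Bool) ∈ C := by
    simp only [C, mem_filter]
    refine ⟨mem_dS.2 he, ?_⟩
    have : pr G (e, i) = u := hei
    rw [this]
  rcases h C hC with h0 | h0
  · rw [h0] at hmem; simp at hmem
  · have : ((f, j) : E × Bool) ∈ C := by rw [h0]; exact mem_dS.2 hf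
    simp only [C, mem_filter] at this
    have h2 := this.2
    have h3 : pr G (f, j) = v := hfj
    rwa [h3] at h2

/-- The sign of a half-edge in an orientation. -/
def aO {G : SignedGraph V E} (O : G.Orientation) (p : E × Bool) : ℤ :=
  if O.dir p.1 p.2 then 1 else -1

theorem pm_aO {G : SignedGraph V E} (O : G.Orientation) (K : Finset (E × Bool)) : PM K (aO O) := by
  intro p _
  unfold aO
  split_ifs <;> simp

theorem sum_dS (S : Finset E) (f : E × Bool → ℤ) :
    ∑ p ∈ dS S, f p = ∑ e ∈ S, (f (e, false) + f (e, true)) := by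
  have : dS S = S ×ˢ (univ : Finset Bool) := by
    ext p; simp [mem_dS]
  rw [this, Finset.sum_product]
  apply Finset.sum_congr rfl
  intro e _
  rw [Fintype.sum_bool]; ring

theorem sum_aO {G : SignedGraph V E} (O : G.Orientation) (S : Finset E) :
    (4 : ℤ) ∣ ∑ p ∈ dS S, aO O p - 2 * ((G.negEdges S).card : ℤ) := by
  rw [sum_dS, SignedGraph.negEdges, Finset.card_filter]
  push_cast
  rw [Finset.mul_sum, ← Finset.sum_sub_distrib]
  apply Finset.dvd_sum
  intro e _
  have hc := O.compat e
  rcases Int.units_eq_one_or (G.sign e) with h | h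
  · have h1 := hc.1 h
    have h2 : ¬ ((1 : ℤˣ) = -1) := by decide
    simp only [h, h2, aO]
    cases h3 : O.dir e false <;> cases h4 : O.dir e true <;> simp_all
  · have h2 : ¬ ((-1 : ℤˣ) = 1) := by decide
    have h1 : O.dir e false = O.dir e true := by
      by_contra hne
      exact h2 (h ▸ hc.2 hne)
    simp only [h, aO, h1]
    cases h4 : O.dir e true <;> simp

theorem odd_iff {G : SignedGraph V E} (O : G.Orientation) (S : Finset E) :
    Odd (G.negEdges S).card ↔ ¬ (4 : ℤ) ∣ ∑ p ∈ dS S, aO O p := by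
  have h := sum_aO O S
  rw [Nat.odd_iff]
  omega

theorem dS_univ : dS (univ : Finset E) = univ := by
  ext p; simp [mem_dS]

theorem isFlow_iff {G : SignedGraph V E} (O : G.Orientation) (φ : E → ℤ) :
    G.IsFlow O φ ↔ ∀ w, net (dS univ) (pr G) (fun p => φ p.1 * aO O p) w = 0 := by
  unfold SignedGraph.IsFlow net
  rw [dS_univ]
  apply forall_congr'
  intro w
  have : ∀ p : E × Bool, (if O.dir p.1 p.2 then φ p.1 else -φ p.1) = φ p.1 * aO O p := by
    intro p; unfold aO; split_ifs <;> simp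
  simp only [this]
  rfl

theorem conn_univ {G : SignedGraph V E} (h : G.Eulerian) : Conn (dS univ) fl (pr G) :=
  conn_of_connOn fun u _ v _ => h.1.2 u v

theorem sinv_false {K : Finset (E × Bool)} {τ : E × Bool → ℤ} (h : SInv K fl τ) {p : E × Bool}
    (hp : p ∈ K) : τ (p.1, false) = τ p := by
  obtain ⟨e, i⟩ := p
  cases i
  · rfl
  · exact h (e, true) hp

theorem two_of_dvd {G : SignedGraph V E} (hG : G.Eulerian) (O : G.Orientation) (s : E → ℤ)
    (hs : ∀ e, s e = 1 ∨ s e = -1) (h4 : (4 : ℤ) ∣ ∑ p ∈ dS univ, s p.1 * aO O p) :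
    G.HasNZkFlow 2 := by
  have hpm : PM (dS univ) (fun p : E × Bool => s p.1 * aO O p) :=
    fun p hp => pm_mul (hs _) (pm_aO O _ p hp)
  obtain ⟨τ, t1, t2, t3⟩ := lemQ0 (inv_dS univ) (conn_univ hG) hpm
    ((evenDeg_dS G univ).2 hG.2) h4
  refine ⟨O, fun e => τ (e, false) * s e, (isFlow_iff O _).2 fun w => ?_, fun e => ?_⟩
  · rw [← t3 w]
    apply net_congr
    intro p hp
    simp only [sinv_false t2 hp]
    ring
  · have := pm_mul (t1 (e, false) (mem_dS.2 (mem_univ _))) (hs e)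
    rcases this with h | h <;> simp only [h] <;> norm_num

theorem forward {G : SignedGraph V E} (hG : G.Eulerian)
    (h : IsLeast {k : ℕ | G.HasNZkFlow k} 3) : G.TriplyOdd := by
  obtain ⟨⟨O, φ, hf, hφ⟩, hmin⟩ := h
  rw [isFlow_iff] at hf
  let s : E → ℤ := fun e => if 0 < φ e then 1 else -1
  have hs : ∀ e, s e = 1 ∨ s e = -1 := by
    intro e; simp only [s]; split_ifs <;> simp
  have hsa : ∀ e, |φ e| * s e = φ e := by
    intro e
    simp only [s]
    split_ifs with h
    · rw [abs_of_pos h]; ring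
    · rw [abs_of_nonpos (not_lt.1 h)]; ring
  let a : E × Bool → ℤ := fun p => s p.1 * aO O p
  have hpm : PM (dS univ) a := fun p hp => pm_mul (hs _) (pm_aO O _ p hp)
  by_cases h4 : (4 : ℤ) ∣ ∑ p ∈ dS univ, a p
  · have := hmin (two_of_dvd hG O s hs h4)
    omega
  have hyp : Hyp0 (dS univ) fl (pr G) a (fun p => |φ p.1|) := by
    refine ⟨inv_dS _, hpm, ?_, ?_, ?_, (evenDeg_dS G univ).2 hG.2⟩
    · intro p _
      have := hφ p.1
      have h1 := abs_pos.2 this.1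
      have h2 := this.2
      push_cast at h2
      show |φ p.1| = 1 ∨ |φ p.1| = 2
      omega
    · intro p _; rfl
    · intro w
      rw [← hf w]
      apply net_congr
      intro p _
      simp only [a]
      rw [← mul_assoc, hsa]
  obtain ⟨v, τ, t1, t2, t3⟩ := thmP _ _ _ _ _ _ rfl hyp (conn_univ hG) h4
  have hpm2 : PM (dS univ) (fun x => τ x * a x) := fun p hp => pm_mul (t1 p hp) (hpm p hp)
  obtain ⟨c, hc, hc3⟩ := lemZ_final (inv_dS univ) (conn_univ hG) hpm2 t3
  let S : Fin 4 → Finset E := fun i => univ.filter fun e => c (e, false) = i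
  have hU : ∀ p : E × Bool, p ∈ dS (univ : Finset E) := fun p => mem_dS.2 (mem_univ _)
  have hcf : ∀ p : E × Bool, c (p.1, false) = c p := by
    rintro ⟨e, i⟩
    cases i
    · rfl
    · exact hc.sinv (e, true) (hU _)
  have hdS : ∀ i, dS (S i) = {x ∈ dS (univ : Finset E) | c x = i} := by
    intro i; ext p
    simp only [mem_dS, S, mem_filter, mem_univ, true_and, hcf]
  have hdis : ∀ i j, i ≠ j → Disjoint (S i) (S j) := by
    intro i j hij
    rw [Finset.disjoint_left]
    intro e h1 h2
    simp only [S, mem_filter, mem_univ, true_and] at h1 h2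
    exact hij (h1.symm.trans h2)
  have hv : ∀ i, i ≠ 3 → v ∈ G.suppV (S i) := by
    intro i hi
    obtain ⟨x, _, hx2, hx3⟩ := hc.vtx i hi
    simp only [SignedGraph.suppV, mem_filter, mem_univ, true_and]
    refine ⟨x.1, ?_, x.2, hx3⟩
    simp only [S, mem_filter, mem_univ, true_and, hcf, hx2]
  have heul : ∀ i, i ≠ 3 → G.EulerianOn (S i) := by
    intro i hi
    refine ⟨?_, ?_, ?_⟩
    · have := hv i hi
      simp only [SignedGraph.suppV, mem_filter, mem_univ, true_and] at this
      obtain ⟨e, he, _⟩ := this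
      exact ⟨e, he⟩
    · apply connOn_of_conn
      rw [hdS]
      exact hc.conn i hi
    · rw [← evenDeg_dS, hdS]
      exact hc.even i
  have hodd : ∀ i, i ≠ 3 → Odd (G.negEdges (S i)).card := by
    intro i hi
    rw [odd_iff O]
    have h1 := hc.sum i hi
    rw [← hdS] at h1
    have h2 := sum_tau (inv_dS (S i)) (pm_aO O _) (τ := fun p => τ p * s p.1)
      (fun p _ => pm_mul (t1 p (hU p)) (hs p.1))
      (fun p _ => by
        show τ (fl p) * s (fl p).1 = τ p * s p.1
        rw [t2 p (hU p)]; rfl)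
    have h3 : ∑ p ∈ dS (S i), τ p * s p.1 * aO O p = 2 := by
      rw [← h1]
      apply Finset.sum_congr rfl
      intro p _
      simp only [a]; ring
    rw [h3] at h2
    omega
  refine ⟨S 0, S 1, S 2, hdis _ _ (by decide), hdis _ _ (by decide), hdis _ _ (by decide), ?_,
    heul _ (by decide), heul _ (by decide), heul _ (by decide),
    hodd _ (by decide), hodd _ (by decide), hodd _ (by decide),
    v, hv _ (by decide), hv _ (by decide), hv _ (by decide)⟩
  ext e
  simp only [S, mem_union, mem_filter, mem_univ, true_and, iff_true]
  have h3 := hc3 (e, false) (hU _)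
  generalize c (e, false) = x at h3
  fin_cases x <;> simp_all

/-- A reference orientation. -/
def refO (G : SignedGraph V E) : G.Orientation where
  dir e i := if i then decide (G.sign e = -1) else true
  compat e := by
    rcases Int.units_eq_one_or (G.sign e) with h | h
    · have h2 : ¬ ((1 : ℤˣ) = -1) := by decide
      simp [h, h2]
    · have h2 : ¬ ((-1 : ℤˣ) = 1) := by decide
      simp [h, h2]

theorem piece {G : SignedGraph V E} (O : G.Orientation) {S : Finset E} {v : V}
    (h1 : G.EulerianOn S) (h2 : Odd (G.negEdges S).card) (hv : v ∈ G.suppV S) :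
    ∃ t : E → ℤ, (∀ e ∈ S, t e = 1 ∨ t e = -1) ∧
      ∀ w, net (dS S) (pr G) (fun p => t p.1 * aO O p) w = if w = v then 2 else 0 := by
  simp only [SignedGraph.suppV, mem_filter, mem_univ, true_and] at hv
  obtain ⟨e, he, i, hei⟩ := hv
  obtain ⟨τ, t1, t2, t3, t4⟩ := lemQ2 (w := v) (inv_dS S) (conn_of_connOn h1.2.1) (pm_aO O _)
    ((evenDeg_dS G S).2 h1.2.2) ⟨(e, i), mem_dS.2 he, hei⟩ ((odd_iff O S).1 h2)
  refine ⟨fun e => τ (e, false), fun e he => t1 _ (mem_dS.2 he), fun w => ?_⟩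
  have hcg : net (dS S) (pr G) (fun p => τ (p.1, false) * aO O p) w
      = net (dS S) (pr G) (fun p => τ p * aO O p) w :=
    net_congr (fun p hp => by simp only [sinv_false t2 hp]) w
  rw [hcg]
  split_ifs with h
  · rw [h, t4]
  · exact t3 w h

theorem dS_union (S T : Finset E) : dS (S ∪ T) = dS S ∪ dS T := by
  ext p; simp [mem_dS]

theorem dS_disjoint {S T : Finset E} (h : Disjoint S T) : Disjoint (dS S) (dS T) := by
  rw [Finset.disjoint_left] at h ⊢
  intro p h1 h2
  exact h (mem_dS.1 h1) (mem_dS.1 h2)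

theorem backward {G : SignedGraph V E} (h : G.TriplyOdd) :
    IsLeast {k : ℕ | G.HasNZkFlow k} 3 := by
  obtain ⟨S₁, S₂, S₃, d12, d13, d23, hu, e1, e2, e3, o1, o2, o3, v, v1, v2, v3⟩ := h
  have d123 : Disjoint (S₁ ∪ S₂) S₃ := Finset.disjoint_union_left.2 ⟨d13, d23⟩
  constructor
  · let O := refO G
    obtain ⟨t1, p1, n1⟩ := piece O e1 o1 v1
    obtain ⟨t2, p2, n2⟩ := piece O e2 o2 v2
    obtain ⟨t3, p3, n3⟩ := piece O e3 o3 v3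
    refine ⟨O, fun e => if e ∈ S₁ then t1 e else if e ∈ S₂ then t2 e else -2 * t3 e,
      (isFlow_iff O _).2 fun w => ?_, fun e => ?_⟩
    · rw [← hu, dS_union, net_union (dS_disjoint d123), dS_union,
        net_union (dS_disjoint d12)]
      have q1 := n1 w
      have q2 := n2 w
      have q3 := n3 w
      rw [net_congr (g := fun p => t1 p.1 * aO O p), net_congr (K := dS S₂)
        (g := fun p => t2 p.1 * aO O p), net_congr (K := dS S₃)
        (g := fun p => -2 * (t3 p.1 * aO O p)), q1, q2]
      · have : net (dS S₃) (pr G) (fun p => -2 * (t3 p.1 * aO O p)) w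
            = -2 * net (dS S₃) (pr G) (fun p => t3 p.1 * aO O p) w := by
          unfold net; rw [Finset.mul_sum]
        rw [this, q3]
        split_ifs <;> norm_num
      · intro p hp
        have hp := mem_dS.1 hp
        have a1 : p.1 ∉ S₁ := fun h => Finset.disjoint_left.1 d13 h hp
        have a2 : p.1 ∉ S₂ := fun h => Finset.disjoint_left.1 d23 h hp
        simp only [a1, a2, if_false]; ring
      · intro p hp
        have hp := mem_dS.1 hp
        have a1 : p.1 ∉ S₁ := fun h => Finset.disjoint_left.1 d12 h hp
        simp only [a1, hp, if_false, if_true]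
      · intro p hp
        have hp := mem_dS.1 hp
        simp only [hp, if_true]
    · have he : e ∈ S₁ ∪ S₂ ∪ S₃ := by rw [hu]; exact mem_univ _
      simp only [mem_union] at he
      beta_reduce
      split_ifs with h1 h2
      · rcases p1 e h1 with h | h <;> rw [h] <;> norm_num
      · rcases p2 e h2 with h | h <;> rw [h] <;> norm_num
      · have h3 : e ∈ S₃ := by tauto
        rcases p3 e h3 with h | h <;> rw [h] <;> norm_num
  · rintro k ⟨O, φ, hf, hφ⟩
    by_contra hk
    rw [isFlow_iff] at hf
    have hpm : ∀ e, φ e = 1 ∨ φ e = -1 := by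
      intro e
      obtain ⟨h1, h2⟩ := hφ e
      rw [abs_lt] at h2
      omega
    have h1 := sum_net (dS univ) (pr G) (fun p => φ p.1 * aO O p)
    rw [Finset.sum_eq_zero (fun w _ => hf w)] at h1
    have h2 := sum_tau (inv_dS univ) (pm_aO O _) (τ := fun p => φ p.1)
      (fun p _ => hpm p.1) (fun p _ => rfl)
    rw [← h1] at h2
    have h3 : ∑ p ∈ dS univ, aO O p
        = ∑ p ∈ dS S₁, aO O p + ∑ p ∈ dS S₂, aO O p + ∑ p ∈ dS S₃, aO O p := by
      rw [← hu, dS_union, Finset.sum_union (dS_disjoint d123), dS_union,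
        Finset.sum_union (dS_disjoint d12)]
    have m1 := sum_aO O S₁
    have m2 := sum_aO O S₂
    have m3 := sum_aO O S₃
    rw [Nat.odd_iff] at o1 o2 o3
    omega

end Bridge
end SGF

open SignedGraph Finset in
/-- For a connected signed eulerian graph `G`, the flow number
`Φ(G)` equals `3` (i.e. `3` is the least `k` such that `G` has a nowhere-zero
`k`-flow) if and only if `G` is triply odd. -/
theorem stmt2 {V E : Type} [Fintype V] [Fintype E] [DecidableEq V]
    [DecidableEq E] (G : SignedGraph V E) (hG : G.Eulerian) :
    IsLeast {k : ℕ | G.HasNZkFlow k} 3 ↔ G.TriplyOdd := by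
  exact ⟨SGF.forward hG, SGF.backward⟩
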